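/- arXiv:math/0311449 — 2 statements merged into one kernel-verified Lean document; each statement's English description precedes it below -/
import Mathlib

section
/- For every integer k ≥ 3 and every ε > 0 there exists n₀ such that every graph G on n ≥ n₀ vertices with minimum degree at least n·(1 - 1/(9k¹⁰) + ε) has an F_k-decomposition, where F_k = {K_k, K_{2k-1}, K_{2k-1}⁻}. -/
/-- `c` is a copy of `H` in `G`, i.e. a subgraph of `G` isomorphic to `H`. -/
def SimpleGraph.Subgraph.IsCopy {α β : Type*} {G : SimpleGraph α} (c : G.Subgraph)
    (H : SimpleGraph β) : Prop :=
  Nonempty (c.coe ≃g H)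

/-!
Iterating transversal designs formed by the lines of `ZMod p × ZMod p` packs the complete graph with
copies of `K_{2k-1}` so that few pairs at each vertex stay uncovered. Under a random relabelling of
the vertices, the blocks through a vertex break, i.e. fail to be cliques of `G`, nearly
independently, so some relabelling breaks few blocks at every vertex. The unbroken blocks leave a
subgraph of `G` of small maximum degree, whose edges are then treated one by one: each is extended
greedily to a `K_k` whose other edges lie in pairwise different blocks that have not lost an edge
yet. Hence every block loses at most one edge. Vertices that already lie on many damaged blocks are
avoided, which keeps the greedy choice possible until the end.
-/

universe u

open Finset

/-! ### Packings with small leaves -/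

section Packing

variable {V W : Type*}

/-- The graph formed by the pairs of points that are covered by a block of `B`. The leave of `B`
inside a graph `G` is then `G \ blockGraph B`, and its leave in the complete graph is
`(blockGraph B)ᶜ`. -/
def blockGraph (B : Finset (Finset V)) : SimpleGraph V where
  Adj u v := u ≠ v ∧ ∃ b ∈ B, u ∈ b ∧ v ∈ b
  symm := ⟨fun _ _ ⟨h, b, hb, hu, hv⟩ ↦ ⟨h.symm, b, hb, hv, hu⟩⟩
  loopless := ⟨fun _ h ↦ h.1 rfl⟩

lemma blockGraph_adj {B : Finset (Finset V)} {u v : V} :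
    (blockGraph B).Adj u v ↔ u ≠ v ∧ ∃ b ∈ B, u ∈ b ∧ v ∈ b :=
  Iff.rfl

instance blockGraph.decidableRel [DecidableEq V] (B : Finset (Finset V)) :
    DecidableRel (blockGraph B).Adj :=
  fun _ _ ↦ decidable_of_iff' _ blockGraph_adj

/-- A packing of `m`-sets, also called a partial linear space or a partial Steiner system
`S(2, m, |V|)`: any two points lie in at most one block. -/
structure IsPacking (m : ℕ) (B : Finset (Finset V)) : Prop where
  card_eq : ∀ b ∈ B, #b = m
  eq_of_mem : ∀ b ∈ B, ∀ b' ∈ B, ∀ x y, x ≠ y → x ∈ b → y ∈ b → x ∈ b' → y ∈ b' → b = b'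

lemma IsPacking.mono {m : ℕ} {B B' : Finset (Finset V)} (hB : IsPacking m B) (h : B' ⊆ B) :
    IsPacking m B' where
  card_eq b hb := hB.card_eq b (h hb)
  eq_of_mem b hb b' hb' := hB.eq_of_mem b (h hb) b' (h hb')

lemma IsPacking.card_le_of_forall_mem_block {m : ℕ} {B : Finset (Finset V)}
    (hB : IsPacking m B) {x z : V} (hxz : x ≠ z) {T : Finset V}
    (hT : ∀ w ∈ T, ∃ b ∈ B, x ∈ b ∧ z ∈ b ∧ w ∈ b) : #T ≤ m := by
  obtain rfl | ⟨w, hw⟩ := T.eq_empty_or_nonempty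
  · simp
  obtain ⟨b, hb, hx, hz, -⟩ := hT w hw
  rw [← hB.card_eq b hb]
  refine card_le_card fun w' hw' ↦ ?_
  obtain ⟨b', hb', hx', hz', hw''⟩ := hT w' hw'
  rwa [hB.eq_of_mem b hb b' hb' x z hxz hx hz hx' hz']

lemma IsPacking.card_le_mul_of_forall_mem_block {m : ℕ} {B : Finset (Finset V)}
    (hB : IsPacking m B) {x : V} {S T : Finset V}
    (hT : ∀ w ∈ T, ∃ b ∈ B, x ∈ b ∧ w ∈ b ∧ ∃ z ∈ S, z ≠ x ∧ z ∈ b) : #T ≤ #S * m := by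
  classical
  have hsub : T ⊆ (S.erase x).biUnion fun z ↦ {w ∈ T | ∃ b ∈ B, x ∈ b ∧ z ∈ b ∧ w ∈ b} := by
    intro w hw
    obtain ⟨b, hb, hx, hwb, z, hz, hzx, hzb⟩ := hT w hw
    simp only [mem_biUnion, mem_erase, mem_filter]
    exact ⟨z, ⟨hzx, hz⟩, hw, b, hb, hx, hzb, hwb⟩
  calc #T ≤ #(S.erase x) * m := (card_le_card hsub).trans <| card_biUnion_le_card_mul _ _ _
        fun z hz ↦ hB.card_le_of_forall_mem_block (ne_of_mem_erase hz).symm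
          fun w hw ↦ (mem_filter.1 hw).2
    _ ≤ #S * m := Nat.mul_le_mul_right m (card_le_card (erase_subset x S))

lemma IsPacking.card_filter_mem_mul_le [Fintype V] [DecidableEq V] {m : ℕ}
    {B : Finset (Finset V)} (hB : IsPacking m B) (x : V) :
    #{b ∈ B | x ∈ b} * (m - 1) ≤ Fintype.card V := by
  have hdisj : (({b ∈ B | x ∈ b} : Finset (Finset V)) : Set (Finset V)).PairwiseDisjoint
      fun b ↦ b.erase x := by
    intro b hb b' hb' hne
    obtain ⟨hbB, hxb⟩ := mem_filter.1 hb
    obtain ⟨hbB', hxb'⟩ := mem_filter.1 hb'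
    refine disjoint_left.2 fun y hy hy' ↦ hne ?_
    exact hB.eq_of_mem b hbB b' hbB' y x (ne_of_mem_erase hy) (mem_of_mem_erase hy) hxb
      (mem_of_mem_erase hy') hxb'
  calc #{b ∈ B | x ∈ b} * (m - 1) = ∑ b ∈ B with x ∈ b, #(b.erase x) :=
        (sum_const_nat fun b hb ↦ by
          rw [card_erase_of_mem (mem_filter.1 hb).2, hB.card_eq b (mem_filter.1 hb).1]).symm
    _ = #(({b ∈ B | x ∈ b}).biUnion fun b ↦ b.erase x) := (card_biUnion hdisj).symm
    _ ≤ Fintype.card V := card_le_univ _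

/-- The preimages under `f` of those blocks of `B` that lie in the range of `f`. -/
def comapBlocks [Fintype V] [DecidableEq W] (f : V ↪ W) (B : Finset (Finset W)) :
    Finset (Finset V) :=
  {b | b.map f ∈ B}

lemma mem_comapBlocks [Fintype V] [DecidableEq W] {f : V ↪ W} {B : Finset (Finset W)}
    {b : Finset V} : b ∈ comapBlocks f B ↔ b.map f ∈ B :=
  mem_filter_univ b

lemma IsPacking.comap [Fintype V] [DecidableEq W] {m : ℕ} {B : Finset (Finset W)}
    (hB : IsPacking m B) (f : V ↪ W) : IsPacking m (comapBlocks f B) where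
  card_eq b hb := by rw [← card_map f, hB.card_eq _ (mem_comapBlocks.1 hb)]
  eq_of_mem b hb b' hb' x y hxy hx hy hx' hy' := map_injective f <|
    hB.eq_of_mem _ (mem_comapBlocks.1 hb) _ (mem_comapBlocks.1 hb') (f x) (f y)
      (f.injective.ne hxy) (mem_map_of_mem f hx) (mem_map_of_mem f hy)
      (mem_map_of_mem f hx') (mem_map_of_mem f hy')

lemma IsPacking.degree_compl_blockGraph_comapBlocks_le [Fintype V] [DecidableEq V] [Fintype W]
    [DecidableEq W] {m : ℕ} {B : Finset (Finset W)} (hB : IsPacking m B) (f : V ↪ W) (v : V) :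
    (blockGraph (comapBlocks f B))ᶜ.degree v ≤
      (blockGraph B)ᶜ.degree (f v) + (Fintype.card W - Fintype.card V) * m := by
  set N := ((blockGraph (comapBlocks f B))ᶜ.neighborFinset v).map f
  have hmeet : ∀ w ∈ N \ (blockGraph B)ᶜ.neighborFinset (f v),
      ∃ b ∈ B, f v ∈ b ∧ w ∈ b ∧ ∃ z ∈ (univ.map f)ᶜ, z ≠ f v ∧ z ∈ b := by
    intro w hw
    obtain ⟨hwN, hw⟩ := mem_sdiff.1 hw
    obtain ⟨u, hu, rfl⟩ := mem_map.1 hwN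
    simp only [SimpleGraph.mem_neighborFinset, SimpleGraph.compl_adj, blockGraph_adj] at hu hw
    obtain ⟨hvu, hcov⟩ := hu
    obtain ⟨-, b, hb, hvb, hub⟩ := not_not.1 fun h ↦ hw ⟨f.injective.ne hvu, h⟩
    refine ⟨b, hb, hvb, hub, ?_⟩
    by_contra! hz
    have hrange : b ⊆ univ.map f := fun z hzb ↦ by
      by_contra hzf
      refine hz z (mem_compl.2 hzf) ?_ hzb
      rintro rfl
      exact hzf (mem_map_of_mem f (mem_univ v))
    obtain ⟨b', -, rfl⟩ := subset_map_iff.1 hrange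
    exact hcov ⟨hvu, b', mem_comapBlocks.2 hb, (mem_map' f).1 hvb, (mem_map' f).1 hub⟩
  calc (blockGraph (comapBlocks f B))ᶜ.degree v = #N := (card_map f).symm
    _ ≤ #(N \ (blockGraph B)ᶜ.neighborFinset (f v)) + (blockGraph B)ᶜ.degree (f v) :=
        card_le_card_sdiff_add_card
    _ ≤ #(univ.map f)ᶜ * m + (blockGraph B)ᶜ.degree (f v) :=
        Nat.add_le_add_right (hB.card_le_mul_of_forall_mem_block hmeet) _
    _ = _ := by rw [card_compl, card_map, card_univ, add_comm]

end Packing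

section LineDesign

variable {m p : ℕ}

lemma isUnit_natCast_sub_natCast_of_coprime_factorial (hp : p.Coprime (m - 1).factorial)
    {i j : ℕ} (hi : i < m) (hj : j < m) (hij : i ≠ j) : IsUnit ((i : ZMod p) - j) := by
  wlog hlt : j < i generalizing i j
  · rw [← neg_sub, IsUnit.neg_iff]
    exact this hj hi hij.symm (hij.lt_or_gt.resolve_right hlt)
  rw [← Nat.cast_sub hlt.le, ZMod.isUnit_iff_coprime]
  exact (hp.coprime_dvd_right (Nat.dvd_factorial (by omega) (by omega))).symm

/-- The line of slope `q.2` and intercept `q.1`, a transversal of the `m` groups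
`{i} × ZMod p`. -/
def line (q : ZMod p × ZMod p) : Finset (Fin m × ZMod p) :=
  univ.image fun i ↦ (i, q.1 + (i : ℕ) * q.2)

lemma mem_line {q : ZMod p × ZMod p} {x : Fin m × ZMod p} :
    x ∈ line q ↔ x.2 = q.1 + (x.1 : ℕ) * q.2 := by
  obtain ⟨i, a⟩ := x
  simp [line, Prod.ext_iff, eq_comm]

lemma card_line (q : ZMod p × ZMod p) : #(line q : Finset (Fin m × ZMod p)) = m := by
  rw [line, card_image_of_injective _ fun _ _ h ↦ congrArg Prod.fst h, card_fin]

lemma fst_ne_of_mem_line {q : ZMod p × ZMod p} {x y : Fin m × ZMod p} (hxy : x ≠ y)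
    (hx : x ∈ line q) (hy : y ∈ line q) : x.1 ≠ y.1 := fun h ↦
  hxy (Prod.ext h (by rw [mem_line.1 hx, mem_line.1 hy, h]))

lemma existsUnique_line (hp : p.Coprime (m - 1).factorial) {x y : Fin m × ZMod p}
    (hxy : x.1 ≠ y.1) : ∃! q, x ∈ line q ∧ y ∈ line q := by
  simp only [mem_line]
  obtain ⟨s, hs⟩ := isUnit_natCast_sub_natCast_of_coprime_factorial hp x.1.2 y.1.2
    (Fin.val_injective.ne hxy)
  have hinv : ((x.1 : ℕ) - (y.1 : ℕ) : ZMod p) * ↑s⁻¹ = 1 := by rw [← hs, s.mul_inv]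
  refine ⟨(x.2 - (x.1 : ℕ) * (↑s⁻¹ * (x.2 - y.2)), ↑s⁻¹ * (x.2 - y.2)), ⟨by ring, ?_⟩, ?_⟩
  · linear_combination (x.2 - y.2) * hinv
  · rintro ⟨a, c⟩ ⟨hx, hy⟩
    have hc : c = ↑s⁻¹ * (x.2 - y.2) := by linear_combination -c * hinv - ↑s⁻¹ * (hx - hy)
    exact Prod.ext (by linear_combination -hx - (x.1 : ZMod p) * hc) hc

variable [NeZero p]

/-- All lines of the transversal design on the groups `{i} × ZMod p`, together with a copy of the
block system `B` inside each group. -/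
def lineDesign (m : ℕ) (B : Finset (Finset (ZMod p))) : Finset (Finset (Fin m × ZMod p)) :=
  univ.image line ∪ univ.biUnion fun i ↦ B.image (map (Function.Embedding.sectR i _))

lemma mem_lineDesign {B : Finset (Finset (ZMod p))} {b : Finset (Fin m × ZMod p)} :
    b ∈ lineDesign m B ↔
      (∃ q, line q = b) ∨ ∃ i, ∃ c ∈ B, c.map (Function.Embedding.sectR i _) = b := by
  simp [lineDesign]

lemma IsPacking.lineDesign {B : Finset (Finset (ZMod p))} (hB : IsPacking m B)
    (hp : p.Coprime (m - 1).factorial) : IsPacking m (lineDesign m B) where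
  card_eq b hb := by
    obtain ⟨q, rfl⟩ | ⟨i, c, hc, rfl⟩ := mem_lineDesign.1 hb
    · exact card_line q
    · rw [card_map, hB.card_eq c hc]
  eq_of_mem b hb b' hb' x y hxy hx hy hx' hy' := by
    have fst_eq {i : Fin m} {c : Finset (ZMod p)} {z : Fin m × ZMod p}
        (hz : z ∈ c.map (Function.Embedding.sectR i _)) : z.1 = i := by
      obtain ⟨a, -, rfl⟩ := mem_map.1 hz
      rfl
    obtain ⟨q, rfl⟩ | ⟨i, c, hc, rfl⟩ := mem_lineDesign.1 hb <;>
      obtain ⟨q', rfl⟩ | ⟨j, c', hc', rfl⟩ := mem_lineDesign.1 hb'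
    · rw [(existsUnique_line hp (fst_ne_of_mem_line hxy hx hy)).unique ⟨hx, hy⟩ ⟨hx', hy'⟩]
    · exact absurd ((fst_eq hx').trans (fst_eq hy').symm) (fst_ne_of_mem_line hxy hx hy)
    · exact absurd ((fst_eq hx).trans (fst_eq hy).symm) (fst_ne_of_mem_line hxy hx' hy')
    · obtain rfl : i = j := (fst_eq hx).symm.trans (fst_eq hx')
      obtain ⟨a, ha, rfl⟩ := mem_map.1 hx
      obtain ⟨d, hd, rfl⟩ := mem_map.1 hy
      rw [mem_map'] at hx' hy'
      rw [hB.eq_of_mem c hc c' hc' a d (fun h ↦ hxy (by rw [h])) ha hd hx' hy']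

lemma degree_compl_blockGraph_lineDesign_le (hp : p.Coprime (m - 1).factorial)
    (B : Finset (Finset (ZMod p))) (x : Fin m × ZMod p) :
    (blockGraph (lineDesign m B))ᶜ.degree x ≤ (blockGraph B)ᶜ.degree x.2 := by
  rw [← SimpleGraph.card_neighborFinset_eq_degree, ← SimpleGraph.card_neighborFinset_eq_degree,
    ← card_map (Function.Embedding.sectR x.1 (ZMod p))]
  refine card_le_card fun y hy ↦ ?_
  simp only [SimpleGraph.mem_neighborFinset, SimpleGraph.compl_adj, blockGraph_adj,
    mem_lineDesign] at hy
  obtain ⟨hxy, hcov⟩ := hy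
  have hfst : x.1 = y.1 := by
    by_contra h
    obtain ⟨q, hq, -⟩ := existsUnique_line hp h
    exact hcov ⟨hxy, _, .inl ⟨q, rfl⟩, hq⟩
  obtain ⟨i, a⟩ := x
  obtain ⟨j, c⟩ := y
  obtain rfl : i = j := hfst
  refine mem_map_of_mem _ ?_
  rw [SimpleGraph.mem_neighborFinset, SimpleGraph.compl_adj, blockGraph_adj]
  refine ⟨fun h ↦ hxy (Prod.ext rfl h), fun ⟨_, b, hb, hab, hcb⟩ ↦ hcov ⟨hxy, _,
    .inr ⟨i, b, hb, rfl⟩, mem_map_of_mem _ hab, mem_map_of_mem _ hcb⟩⟩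

end LineDesign

section ExistsPacking

lemma exists_coprime_of_pos {m F : ℕ} (hm : 0 < m) (hF : 0 < F) (n : ℕ) :
    ∃ p, 0 < p ∧ p.Coprime F ∧ n ≤ m * p ∧ m * p ≤ n + m * (F + 1) := by
  have hlt : n < m * F * (n / (m * F) + 1) := Nat.lt_mul_div_succ n (by positivity)
  have hle : m * F * (n / (m * F)) ≤ n := Nat.mul_div_le n (m * F)
  refine ⟨F * (n / (m * F) + 1) + 1, by omega, by simp, ?_, ?_⟩ <;> linarith

/-- Each step of the induction on `t` divides the leave by `m`: the points are distributed over `m`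
groups, pairs in different groups are covered by lines, and each group is packed recursively. -/
lemma exists_isPacking_type_zero {m : ℕ} (hm : 0 < m) (t : ℕ) :
    ∃ C, ∀ (V : Type) [Fintype V] [DecidableEq V], ∃ B : Finset (Finset V), IsPacking m B ∧
      ∀ v, m ^ t * (blockGraph B)ᶜ.degree v ≤ Fintype.card V + C := by
  induction t with
  | zero => exact ⟨0, fun V _ _ ↦ ⟨∅, ⟨by simp, by simp⟩, fun v ↦ by
      simpa using ((blockGraph ∅)ᶜ.degree_lt_card_verts v).le⟩⟩
  | succ t ih =>
    obtain ⟨C, hC⟩ := ih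
    set c := m * ((m - 1).factorial + 1) with hc
    refine ⟨c + m * C + m ^ (t + 1) * (c * m), fun V _ _ ↦ ?_⟩
    obtain ⟨p, hp0, hp, hVp, hpV⟩ :=
      exists_coprime_of_pos hm (m - 1).factorial_pos (Fintype.card V)
    rw [← hc] at hpV
    have : NeZero p := ⟨hp0.ne'⟩
    obtain ⟨B, hB, hBdeg⟩ := hC (ZMod p)
    rw [ZMod.card] at hBdeg
    have hcard : Fintype.card (Fin m × ZMod p) = m * p := by simp [ZMod.card]
    obtain ⟨f⟩ : Nonempty (V ↪ Fin m × ZMod p) :=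
      Function.Embedding.nonempty_of_card_le (hVp.trans_eq hcard.symm)
    refine ⟨comapBlocks f (lineDesign m B), (hB.lineDesign hp).comap f, fun v ↦ ?_⟩
    have hdeg : (blockGraph (comapBlocks f (lineDesign m B)))ᶜ.degree v ≤
        (blockGraph B)ᶜ.degree (f v).2 + c * m := by
      refine ((hB.lineDesign hp).degree_compl_blockGraph_comapBlocks_le f v).trans
        (Nat.add_le_add (degree_compl_blockGraph_lineDesign_le hp B (f v))
          (Nat.mul_le_mul_right m ?_))
      rw [hcard]
      omega
    calc m ^ (t + 1) * (blockGraph (comapBlocks f (lineDesign m B)))ᶜ.degree v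
        ≤ m ^ (t + 1) * ((blockGraph B)ᶜ.degree (f v).2 + c * m) := Nat.mul_le_mul_left _ hdeg
      _ = m * (m ^ t * (blockGraph B)ᶜ.degree (f v).2) + m ^ (t + 1) * (c * m) := by ring
      _ ≤ m * (p + C) + m ^ (t + 1) * (c * m) := by gcongr; exact hBdeg _
      _ ≤ _ := by linarith [m.mul_add p C]

theorem exists_isPacking {m : ℕ} (hm : 0 < m) (t : ℕ) :
    ∃ C, ∀ (V : Type u) [Fintype V] [DecidableEq V], ∃ B : Finset (Finset V), IsPacking m B ∧
      ∀ v, m ^ t * (blockGraph B)ᶜ.degree v ≤ Fintype.card V + C := by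
  obtain ⟨C, hC⟩ := exists_isPacking_type_zero hm t
  refine ⟨C, fun V _ _ ↦ ?_⟩
  obtain ⟨B, hB, hdeg⟩ := hC (Fin (Fintype.card V))
  let f := (Fintype.equivFin V).toEmbedding
  refine ⟨comapBlocks f B, hB.comap f, fun v ↦ ?_⟩
  refine (Nat.mul_le_mul_left _ (hB.degree_compl_blockGraph_comapBlocks_le f v)).trans ?_
  simpa using hdeg (f v)

end ExistsPacking

/-! ### Random relabellings -/

section RandomPermutation

open Equiv

variable {V : Type*} [Fintype V] [DecidableEq V]

/-- Composing with `swap z z'` shows that, given `σ ∈ A`, the value `σ z` is at most as likely to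
land in `N σ` as `σ z'` is, for every `z' ∉ T`. -/
lemma card_sub_mul_card_filter_apply_mem_le {A : Finset (Perm V)} {N : Perm V → Finset V}
    {T : Finset V} {z : V} {d : ℕ} (hA : ∀ σ ∈ A, ∀ z' ∉ T, σ * swap z z' ∈ A)
    (hN : ∀ σ, ∀ z' ∉ T, N (σ * swap z z') = N σ) (hd : ∀ σ, #(N σ) ≤ d) :
    (Fintype.card V - #T) * #{σ ∈ A | σ z ∈ N σ} ≤ d * #A := by
  have hswap : ∀ z' ∈ Tᶜ, #{σ ∈ A | σ z ∈ N σ} ≤ #{σ ∈ A | σ z' ∈ N σ} := by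
    intro z' hz'
    rw [mem_compl] at hz'
    refine card_le_card_of_injOn (· * swap z z') (fun σ hσ ↦ ?_) (mul_left_injective _).injOn
    obtain ⟨hσA, hσN⟩ := mem_filter.1 hσ
    refine mem_filter.2 ⟨hA σ hσA z' hz', ?_⟩
    rwa [hN σ z' hz', Perm.mul_apply, swap_apply_right]
  calc (Fintype.card V - #T) * #{σ ∈ A | σ z ∈ N σ}
      = #Tᶜ • #{σ ∈ A | σ z ∈ N σ} := by rw [card_compl, smul_eq_mul]
    _ ≤ ∑ z' ∈ Tᶜ, #{σ ∈ A | σ z' ∈ N σ} := card_nsmul_le_sum _ _ _ hswap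
    _ = ∑ σ ∈ A, #{z' ∈ Tᶜ | σ z' ∈ N σ} :=
        (sum_card_bipartiteAbove_eq_sum_card_bipartiteBelow fun z' σ ↦ σ z' ∈ N σ)
    _ ≤ #A • d := sum_le_card_nsmul _ _ _ fun σ _ ↦
        (card_le_card_of_injOn σ (fun z' hz' ↦ (mem_filter.1 hz').2) σ.injective.injOn).trans
          (hd σ)
    _ = d * #A := by rw [smul_eq_mul, mul_comm]

/-- The block `b` is broken by the relabelling `σ` of the points if `σ` does not map it onto a
clique of `G`. -/
def IsBroken (G : SimpleGraph V) (σ : Perm V) (b : Finset V) : Prop :=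
  ∃ y ∈ b, ∃ z ∈ b, y ≠ z ∧ ¬ G.Adj (σ y) (σ z)

instance IsBroken.decidablePred (G : SimpleGraph V) [DecidableRel G.Adj] (σ : Perm V) :
    DecidablePred (IsBroken G σ) := fun b ↦
  inferInstanceAs (Decidable (∃ y ∈ b, ∃ z ∈ b, y ≠ z ∧ ¬ G.Adj (σ y) (σ z)))

omit [Fintype V] in
lemma IsBroken.mul_swap {G : SimpleGraph V} {σ : Perm V} {b : Finset V} (h : IsBroken G σ b)
    {z z' : V} (hz : z ∉ b) (hz' : z' ∉ b) : IsBroken G (σ * swap z z') b := by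
  obtain ⟨u, hu, v, hv, huv, hadj⟩ := h
  have hfix : ∀ u ∈ b, swap z z' u = u := fun u hu ↦
    swap_apply_of_ne_of_ne (fun h ↦ hz (h ▸ hu)) (fun h ↦ hz' (h ▸ hu))
  exact ⟨u, hu, v, hv, huv, by rwa [Perm.mul_apply, Perm.mul_apply, hfix u hu, hfix v hv]⟩

variable {G : SimpleGraph V} [DecidableRel G.Adj] {m d : ℕ}

lemma card_sub_mul_card_filter_isBroken_le (hd : ∀ v, #(G.neighborFinset v)ᶜ ≤ d)
    {A : Finset (Perm V)} {T b : Finset V} {x : V} (hb : #b = m) (hx : x ∈ b)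
    (hbT : ∀ z ∈ b, z ∈ T → z = x) (hA : ∀ σ ∈ A, ∀ z ∉ T, ∀ z' ∉ T, σ * swap z z' ∈ A) :
    (Fintype.card V - (#T + 1)) * #{σ ∈ A | IsBroken G σ b} ≤
      (m - 1) ^ 2 * d * #A := by
  set w := Fintype.card V - (#T + 1)
  let bad (z y : V) : Finset (Perm V) := {σ ∈ A | σ z ∈ (G.neighborFinset (σ y))ᶜ}
  have hbad : ∀ z ∈ b.erase x, ∀ y ∈ b.erase z, w * #(bad z y) ≤ d * #A := by
    intro z hz y hy
    obtain ⟨hzx, hzb⟩ := mem_erase.1 hz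
    have hzT : z ∉ T := fun h ↦ hzx (hbT z hzb h)
    refine (Nat.mul_le_mul_right _ (Nat.sub_le_sub_left (card_insert_le y T) _)).trans
      (card_sub_mul_card_filter_apply_mem_le (fun σ hσ z' hz' ↦ ?_) (fun σ z' hz' ↦ ?_)
        fun σ ↦ hd _)
    · exact hA σ hσ z hzT z' fun h ↦ hz' (mem_insert_of_mem h)
    · have hyz' : y ≠ z' := fun h ↦ hz' (h ▸ mem_insert_self y T)
      rw [Perm.mul_apply, swap_apply_of_ne_of_ne (ne_of_mem_erase hy) hyz']
  have hcover : {σ ∈ A | IsBroken G σ b} ⊆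
      (b.erase x).biUnion fun z ↦ (b.erase z).biUnion (bad z) := by
    intro σ hσ
    obtain ⟨hσA, y, hy, z, hz, hyz, hadj⟩ := mem_filter.1 hσ
    simp only [mem_biUnion, mem_erase, bad, mem_filter, mem_compl, SimpleGraph.mem_neighborFinset]
    obtain rfl | hzx := eq_or_ne z x
    · exact ⟨y, ⟨hyz, hy⟩, z, ⟨hyz.symm, hz⟩, hσA, fun h ↦ hadj h.symm⟩
    · exact ⟨z, ⟨hzx, hz⟩, y, ⟨hyz, hy⟩, hσA, hadj⟩
  have herase : ∀ z ∈ b, #(b.erase z) = m - 1 := fun z hz ↦ by rw [card_erase_of_mem hz, hb]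
  calc w * #{σ ∈ A | IsBroken G σ b}
      ≤ w * ∑ z ∈ b.erase x, ∑ y ∈ b.erase z, #(bad z y) := by
        gcongr
        exact (card_le_card hcover).trans <| card_biUnion_le.trans <|
          sum_le_sum fun z _ ↦ card_biUnion_le
    _ = ∑ z ∈ b.erase x, ∑ y ∈ b.erase z, w * #(bad z y) := by simp only [mul_sum]
    _ ≤ ∑ z ∈ b.erase x, (m - 1) * (d * #A) := sum_le_sum fun z hz ↦ by
        rw [← herase z (mem_of_mem_erase hz), ← smul_eq_mul]
        exact sum_le_card_nsmul _ _ _ (hbad z hz)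
    _ = (m - 1) ^ 2 * d * #A := by rw [sum_const, herase x hx, smul_eq_mul]; ring

/-- The blocks of `S` are disjoint outside `x`, so they fail to be mapped to cliques nearly
independently of each other. -/
lemma IsPacking.pow_card_mul_card_filter_forall_isBroken_le
    (hd : ∀ v, #(G.neighborFinset v)ᶜ ≤ d) {S : Finset (Finset V)} (hS : IsPacking m S) {x : V}
    (hx : ∀ b ∈ S, x ∈ b) {r : ℕ} (hr : #S ≤ r) :
    (Fintype.card V - m * r) ^ #S * #{σ : Perm V | ∀ b ∈ S, IsBroken G σ b} ≤
      ((m - 1) ^ 2 * d) ^ #S * Fintype.card (Perm V) := by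
  induction S using Finset.induction_on with
  | empty => simp
  | insert b S hbS ih =>
    have hsub : S ⊆ insert b S := subset_insert b S
    have hb : b ∈ insert b S := mem_insert_self b S
    rw [card_insert_of_notMem hbS] at hr ⊢
    set A : Finset (Perm V) := {σ | ∀ b ∈ S, IsBroken G σ b} with hAdef
    set T := S.biUnion id
    have hfilter : ({σ | ∀ b' ∈ insert b S, IsBroken G σ b'} : Finset (Perm V)) =
        {σ ∈ A | IsBroken G σ b} := by
      ext σ
      simp [hAdef, and_comm]
    have hA : ∀ σ ∈ A, ∀ z ∉ T, ∀ z' ∉ T, σ * swap z z' ∈ A := by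
      intro σ hσ z hz z' hz'
      simp only [hAdef, mem_filter_univ] at hσ ⊢
      exact fun b' hb' ↦ (hσ b' hb').mul_swap (fun h ↦ hz (mem_biUnion.2 ⟨b', hb', h⟩))
        (fun h ↦ hz' (mem_biUnion.2 ⟨b', hb', h⟩))
    have hbT : ∀ z ∈ b, z ∈ T → z = x := by
      intro z hz hzT
      obtain ⟨b', hb', hzb'⟩ := mem_biUnion.1 hzT
      by_contra hzx
      rw [hS.eq_of_mem b hb b' (hsub hb') z x hzx hz (hx b hb) hzb' (hx b' (hsub hb'))] at hbS
      exact hbS hb'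
    have hT : #T + 1 ≤ m * r := by
      have hm : 0 < m := hS.card_eq b hb ▸ card_pos.2 ⟨x, hx b hb⟩
      have : #T ≤ #S * m := card_biUnion_le_card_mul _ _ _ fun b' hb' ↦
        (hS.card_eq b' (hsub hb')).le
      nlinarith
    rw [hfilter]
    calc (Fintype.card V - m * r) ^ (#S + 1) * #{σ ∈ A | IsBroken G σ b}
        = (Fintype.card V - m * r) ^ #S *
            ((Fintype.card V - m * r) * #{σ ∈ A | IsBroken G σ b}) := by ring
      _ ≤ (Fintype.card V - m * r) ^ #S * ((m - 1) ^ 2 * d * #A) :=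
          Nat.mul_le_mul_left _ <| (Nat.mul_le_mul_right _ (Nat.sub_le_sub_left hT _)).trans
            (card_sub_mul_card_filter_isBroken_le hd (hS.card_eq b hb) (hx b hb) hbT hA)
      _ = (m - 1) ^ 2 * d * ((Fintype.card V - m * r) ^ #S * #A) := by ring
      _ ≤ (m - 1) ^ 2 * d * (((m - 1) ^ 2 * d) ^ #S * Fintype.card (Perm V)) :=
          Nat.mul_le_mul_left _
            (ih (hS.mono hsub) (fun b' hb' ↦ hx b' (hsub hb')) (by omega))
      _ = ((m - 1) ^ 2 * d) ^ (#S + 1) * Fintype.card (Perm V) := by ring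

/-- Counts pairs consisting of a relabelling that breaks `s` blocks through `x` and `r` such
blocks. -/
lemma IsPacking.pow_mul_choose_mul_card_filter_le (hd : ∀ v, #(G.neighborFinset v)ᶜ ≤ d)
    {B : Finset (Finset V)} (hB : IsPacking m B) (x : V) {r : ℕ} (s : ℕ)
    (hr : m * r < Fintype.card V) :
    (Fintype.card V - m * r) ^ r *
        (s.choose r * #{σ : Perm V | s ≤ #{b ∈ B | x ∈ b ∧ IsBroken G σ b}}) ≤
      (#{b ∈ B | x ∈ b}).choose r * (((m - 1) ^ 2 * d) ^ r * Fintype.card (Perm V)) := by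
  set w := (Fintype.card V - m * r) ^ r
  set K := ((m - 1) ^ 2 * d) ^ r * Fintype.card (Perm V)
  set E : Finset (Perm V) := {σ | s ≤ #{b ∈ B | x ∈ b ∧ IsBroken G σ b}} with hE
  have hw : 0 < w := Nat.pow_pos (by omega)
  have hmany : ∀ σ ∈ E, s.choose r ≤ #(bipartiteAbove
      (fun (σ : Perm V) S ↦ ∀ b ∈ S, IsBroken G σ b) (powersetCard r {b ∈ B | x ∈ b}) σ) := by
    intro σ hσ
    rw [hE, mem_filter_univ] at hσ
    refine (Nat.choose_le_choose r hσ).trans ?_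
    rw [← card_powersetCard]
    refine card_le_card fun S hS ↦ ?_
    obtain ⟨hSB, hSr⟩ := mem_powersetCard.1 hS
    simp only [mem_bipartiteAbove, mem_powersetCard]
    refine ⟨⟨fun b hb ↦ ?_, hSr⟩, fun b hb ↦ (mem_filter.1 (hSB hb)).2.2⟩
    exact mem_filter.2 ⟨(mem_filter.1 (hSB hb)).1, (mem_filter.1 (hSB hb)).2.1⟩
  have hfew : ∀ S ∈ powersetCard r {b ∈ B | x ∈ b}, #(bipartiteBelow
      (fun (σ : Perm V) S ↦ ∀ b ∈ S, IsBroken G σ b) E S) ≤ K / w := by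
    intro S hS
    obtain ⟨hSB, hSr⟩ := mem_powersetCard.1 hS
    have hbroken := (hB.mono fun b hb ↦ (mem_filter.1 (hSB hb)).1
      ).pow_card_mul_card_filter_forall_isBroken_le hd
        (fun b hb ↦ (mem_filter.1 (hSB hb)).2) hSr.le
    rw [hSr] at hbroken
    rw [Nat.le_div_iff_mul_le hw, mul_comm]
    exact (Nat.mul_le_mul_left w
      (card_le_card (filter_subset_filter _ (subset_univ E)))).trans hbroken
  calc w * (s.choose r * #E) = #E * s.choose r * w := by ring
    _ ≤ (#{b ∈ B | x ∈ b}).choose r * (K / w) * w := by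
        refine Nat.mul_le_mul_right w ?_
        simpa only [card_powersetCard] using card_mul_le_card_mul _ hmany hfew
    _ ≤ (#{b ∈ B | x ∈ b}).choose r * K := by
        rw [mul_assoc]
        exact Nat.mul_le_mul_left _ (Nat.div_mul_le_self K w)

lemma IsPacking.pow_mul_card_filter_le_card_isBroken_le
    (hd : ∀ v, #(G.neighborFinset v)ᶜ ≤ d) {B : Finset (Finset V)} (hB : IsPacking m B) (x : V)
    {r : ℕ} (s : ℕ) (hr : m * r < Fintype.card V) :
    ((s + 1 - r) * (Fintype.card V - m * r)) ^ r *
        #{σ : Perm V | s ≤ #{b ∈ B | x ∈ b ∧ IsBroken G σ b}} ≤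
      ((m - 1) * Fintype.card V * d) ^ r * Fintype.card (Perm V) := by
  set n := Fintype.card V
  set w := (n - m * r) ^ r
  set K := ((m - 1) ^ 2 * d) ^ r * Fintype.card (Perm V)
  set M := #{b ∈ B | x ∈ b}
  set E : Finset (Perm V) := {σ | s ≤ #{b ∈ B | x ∈ b ∧ IsBroken G σ b}}
  calc ((s + 1 - r) * (n - m * r)) ^ r * #E = (s + 1 - r) ^ r * (w * #E) := by
        rw [mul_pow, mul_assoc]
    _ ≤ s.descFactorial r * (w * #E) := by gcongr; exact Nat.pow_sub_le_descFactorial s r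
    _ = r.factorial * (w * (s.choose r * #E)) := by
        rw [Nat.descFactorial_eq_factorial_mul_choose]; ring
    _ ≤ r.factorial * (M.choose r * K) :=
        Nat.mul_le_mul_left _ (hB.pow_mul_choose_mul_card_filter_le hd x s hr)
    _ = M.descFactorial r * K := by rw [Nat.descFactorial_eq_factorial_mul_choose]; ring
    _ ≤ M ^ r * K := by gcongr; exact Nat.descFactorial_le_pow M r
    _ = (M * (m - 1) * ((m - 1) * d)) ^ r * Fintype.card (Perm V) := by
        simp only [K, mul_pow]; ring
    _ ≤ (n * ((m - 1) * d)) ^ r * Fintype.card (Perm V) := by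
        gcongr; exact hB.card_filter_mem_mul_le x
    _ = ((m - 1) * n * d) ^ r * Fintype.card (Perm V) := by ring

theorem IsPacking.exists_perm_card_isBroken_lt (hd : ∀ v, #(G.neighborFinset v)ᶜ ≤ d)
    {B : Finset (Finset V)} (hB : IsPacking m B) {r s : ℕ} (hr : Fintype.card V < 2 ^ r)
    (hrs : r ≤ s) (hmr : m * r < Fintype.card V)
    (hs : 2 * ((m - 1) * Fintype.card V * d) ≤ (s + 1 - r) * (Fintype.card V - m * r)) :
    ∃ σ : Perm V, ∀ x, #{b ∈ B | x ∈ b ∧ IsBroken G σ b} < s := by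
  by_contra! hall
  set a := (s + 1 - r) * (Fintype.card V - m * r)
  have ha : 0 < a := Nat.mul_pos (by omega) (by omega)
  have hcover : Fintype.card (Perm V) ≤
      ∑ x, #{σ : Perm V | s ≤ #{b ∈ B | x ∈ b ∧ IsBroken G σ b}} := by
    refine (card_le_card fun σ _ ↦ ?_).trans card_biUnion_le
    obtain ⟨x, hx⟩ := hall σ
    exact mem_biUnion.2 ⟨x, mem_univ x, (mem_filter_univ σ).2 hx⟩
  have hbound : 2 ^ r * (a ^ r * Fintype.card (Perm V)) ≤
      Fintype.card V * (a ^ r * Fintype.card (Perm V)) := by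
    calc 2 ^ r * (a ^ r * Fintype.card (Perm V))
        ≤ 2 ^ r * (a ^ r *
            ∑ x, #{σ : Perm V | s ≤ #{b ∈ B | x ∈ b ∧ IsBroken G σ b}}) := by gcongr
      _ ≤ 2 ^ r * ∑ _x : V, ((m - 1) * Fintype.card V * d) ^ r * Fintype.card (Perm V) := by
          rw [mul_sum]
          refine Nat.mul_le_mul_left _ (sum_le_sum fun x _ ↦ ?_)
          exact hB.pow_mul_card_filter_le_card_isBroken_le hd x s hmr
      _ = Fintype.card V *
            ((2 * ((m - 1) * Fintype.card V * d)) ^ r * Fintype.card (Perm V)) := by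
          rw [sum_const, card_univ, smul_eq_mul, mul_pow]; ring
      _ ≤ _ := by gcongr
  have : 0 < a ^ r * Fintype.card (Perm V) := Nat.mul_pos (Nat.pow_pos ha) Fintype.card_pos
  exact (Nat.le_of_mul_le_mul_right hbound this).not_gt hr

end RandomPermutation

/-! ### Packings by cliques -/

section CliqueBlocks

variable {V : Type*} [Fintype V] [DecidableEq V] {G : SimpleGraph V} [DecidableRel G.Adj]

omit [Fintype V] in
lemma blockGraph_filter_isClique_le (B : Finset (Finset V)) :
    blockGraph {b ∈ B | G.IsClique b} ≤ G := fun u v huv ↦ by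
  obtain ⟨hne, b, hb, hu, hv⟩ := huv
  exact (mem_filter.1 hb).2 hu hv hne

lemma IsPacking.degree_sdiff_blockGraph_filter_isClique_le {m : ℕ} {B : Finset (Finset V)}
    (hB : IsPacking m B) (v : V) :
    (G \ blockGraph {b ∈ B | G.IsClique b}).degree v ≤
      (blockGraph B)ᶜ.degree v +
        #(B.filter fun b : Finset V ↦ ¬ G.IsClique b ∧ v ∈ b) * (m - 1) := by
  have hsub : (G \ blockGraph {b ∈ B | G.IsClique b}).neighborFinset v ⊆
      (blockGraph B)ᶜ.neighborFinset v ∪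
        (B.filter fun b : Finset V ↦ ¬ G.IsClique b ∧ v ∈ b).biUnion fun b ↦ b.erase v := by
    intro u hu
    simp only [SimpleGraph.mem_neighborFinset, SimpleGraph.sdiff_adj, blockGraph_adj,
      mem_filter] at hu
    simp only [mem_union, or_iff_not_imp_left, SimpleGraph.mem_neighborFinset,
      SimpleGraph.compl_adj, blockGraph_adj, mem_biUnion, mem_filter, mem_erase]
    intro h
    obtain ⟨-, b, hb, hvb, hub⟩ := not_not.1 fun h' ↦ h ⟨hu.1.ne, h'⟩
    exact ⟨b, ⟨hb, fun hc ↦ hu.2 ⟨hu.1.ne, b, ⟨hb, hc⟩, hvb, hub⟩, hvb⟩, hu.1.ne', hub⟩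
  refine (card_le_card hsub).trans ((card_union_le _ _).trans (Nat.add_le_add_left ?_ _))
  refine card_biUnion_le_card_mul _ _ _ fun b hb ↦ ?_
  obtain ⟨hbB, -, hvb⟩ := mem_filter.1 hb
  rw [card_erase_of_mem hvb, hB.card_eq b hbB]

omit [Fintype V] [DecidableEq V] [DecidableRel G.Adj] in
lemma isBroken_map_symm_iff {σ : Equiv.Perm V} {b : Finset V} :
    IsBroken G σ (b.map σ.symm.toEmbedding) ↔ ¬ G.IsClique b := by
  simp only [IsBroken, SimpleGraph.isClique_iff, Set.Pairwise, mem_coe, mem_map_equiv,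
    Equiv.symm_symm]
  push Not
  constructor
  · rintro ⟨y, hy, z, hz, hyz, hadj⟩
    exact ⟨σ y, hy, σ z, hz, σ.injective.ne hyz, hadj⟩
  · rintro ⟨y, hy, z, hz, hyz, hadj⟩
    exact ⟨σ.symm y, by simpa, σ.symm z, by simpa, σ.symm.injective.ne hyz, by simpa⟩

lemma card_filter_comapBlocks_symm_not_isClique_eq (B : Finset (Finset V)) (σ : Equiv.Perm V)
    (v : V) :
    #((comapBlocks σ.symm.toEmbedding B).filter fun b : Finset V ↦ ¬ G.IsClique b ∧ v ∈ b) =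
      #{b ∈ B | σ.symm v ∈ b ∧ IsBroken G σ b} := by
  refine card_bij (fun b _ ↦ b.map σ.symm.toEmbedding) (fun b hb ↦ ?_)
    (fun _ _ _ _ h ↦ map_injective _ h) fun b hb ↦ ?_
  · obtain ⟨hbB, hb, hvb⟩ := mem_filter.1 hb
    exact mem_filter.2 ⟨mem_comapBlocks.1 hbB, mem_map_of_mem _ hvb, isBroken_map_symm_iff.2 hb⟩
  · obtain ⟨hbB, hvb, hb⟩ := mem_filter.1 hb
    have hmap : (b.map σ.toEmbedding).map σ.symm.toEmbedding = b := by
      ext; simp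
    refine ⟨b.map σ.toEmbedding, mem_filter.2 ⟨?_, ?_, ?_⟩, hmap⟩
    · rwa [mem_comapBlocks, hmap]
    · rwa [← isBroken_map_symm_iff (σ := σ), hmap]
    · simpa using hvb

theorem IsPacking.exists_isPacking_blockGraph_le {m d a r s : ℕ}
    (hd : ∀ v, #(G.neighborFinset v)ᶜ ≤ d) {B : Finset (Finset V)} (hB : IsPacking m B)
    (ha : ∀ v, (blockGraph B)ᶜ.degree v ≤ a) (hr : Fintype.card V < 2 ^ r) (hrs : r ≤ s)
    (hmr : m * r < Fintype.card V)
    (hs : 2 * ((m - 1) * Fintype.card V * d) ≤ (s + 1 - r) * (Fintype.card V - m * r)) :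
    ∃ R, IsPacking m R ∧ blockGraph R ≤ G ∧
      ∀ v, (G \ blockGraph R).degree v ≤ a + s * (m - 1) := by
  obtain ⟨σ, hσ⟩ := hB.exists_perm_card_isBroken_lt hd hr hrs hmr hs
  have hB' := hB.comap σ.symm.toEmbedding
  refine ⟨_, hB'.mono (filter_subset _ _), blockGraph_filter_isClique_le _, fun v ↦ ?_⟩
  refine (hB'.degree_sdiff_blockGraph_filter_isClique_le v).trans ?_
  rw [card_filter_comapBlocks_symm_not_isClique_eq]
  refine Nat.add_le_add ?_ (Nat.mul_le_mul_right _ (hσ _).le)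
  simpa using (hB.degree_compl_blockGraph_comapBlocks_le σ.symm.toEmbedding v).trans
    (Nat.add_le_add_right (ha _) _)

end CliqueBlocks

section ExistsCliqueBlocks

lemma exists_lt_two_pow_and_mul_add_le (A C : ℕ) :
    ∃ n₀, ∀ n ≥ n₀, ∃ r, n < 2 ^ r ∧ A * r + C ≤ n := by
  refine ⟨(4 * A + C + 1) ^ 2, fun n hn ↦ ⟨2 * (n.sqrt + 1), ?_, ?_⟩⟩
  · calc n < (n.sqrt + 1) ^ 2 := n.lt_succ_sqrt'
      _ ≤ (2 ^ (n.sqrt + 1)) ^ 2 := Nat.pow_le_pow_left Nat.lt_two_pow_self.le 2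
      _ = 2 ^ (2 * (n.sqrt + 1)) := by rw [← pow_mul, mul_comm]
  · have hsqrt : 4 * A + C + 1 ≤ n.sqrt := Nat.le_sqrt'.2 hn
    have hsq : n.sqrt * n.sqrt ≤ n := n.sqrt_le
    nlinarith

lemma pow_mul_add_mul_le {k m n a q r d C : ℕ} (hk : 2 ≤ k) (hm : m + 1 = 2 * k)
    (hd : 9 * k ^ 10 * d ≤ n) (hq : q * (n - m * r) ≤ 2 * ((m - 1) * n * d))
    (ha : m ^ 10 * a ≤ n + C) (hr : 200 * k ^ 9 * r + C < n) :
    k ^ 8 * (a + (r + q) * (m - 1)) ≤ n := by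
  have hka : 25 * (k ^ 8 * a) ≤ n + C := by
    have hkm : 2 ^ 10 * (25 * k ^ 8) ≤ 2 ^ 10 * m ^ 10 := by
      calc 2 ^ 10 * (25 * k ^ 8) = 25600 * k ^ 8 := by ring
        _ ≤ 3 ^ 10 * k ^ 10 := by gcongr <;> lia
        _ = (3 * k) ^ 10 := by ring
        _ ≤ (2 * m) ^ 10 := Nat.pow_le_pow_left (by omega) 10
        _ = 2 ^ 10 * m ^ 10 := by ring
    calc 25 * (k ^ 8 * a) = 25 * k ^ 8 * a := by ring
      _ ≤ m ^ 10 * a := Nat.mul_le_mul_right _ (Nat.le_of_mul_le_mul_left hkm (by norm_num))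
      _ ≤ n + C := ha
  have hkr : 100 * (k ^ 8 * (r * (m - 1))) + C ≤ n := by
    have : k ^ 8 * (r * (m - 1)) ≤ 2 * k ^ 9 * r := by
      calc k ^ 8 * (r * (m - 1)) ≤ k ^ 8 * (r * (2 * k)) := by gcongr; omega
        _ = 2 * k ^ 9 * r := by ring
    linarith
  have hmr : 100 * (m * r) ≤ n := by
    calc 100 * (m * r) ≤ 100 * (2 * k ^ 9 * r) := by
          gcongr
          calc m ≤ 2 * k := by omega
            _ ≤ 2 * k ^ 9 := Nat.mul_le_mul_left _ (Nat.le_self_pow (by norm_num) k)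
      _ ≤ n := by linarith
  have hqd : 99 * q ≤ 200 * ((m - 1) * d) := by
    refine Nat.le_of_mul_le_mul_right ?_ (show 0 < n by omega)
    calc 99 * q * n = q * (99 * n) := by ring
      _ ≤ q * (100 * (n - m * r)) := Nat.mul_le_mul_left _ (by omega)
      _ = 100 * (q * (n - m * r)) := by ring
      _ ≤ 100 * (2 * ((m - 1) * n * d)) := Nat.mul_le_mul_left _ hq
      _ = 200 * ((m - 1) * d) * n := by ring
  have hkq : 891 * (k ^ 8 * (q * (m - 1))) ≤ 800 * n := by
    calc 891 * (k ^ 8 * (q * (m - 1))) = 9 * k ^ 8 * (m - 1) * (99 * q) := by ring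
      _ ≤ 9 * k ^ 8 * (m - 1) * (200 * ((m - 1) * d)) := Nat.mul_le_mul_left _ hqd
      _ ≤ 9 * k ^ 8 * (2 * k) * (200 * (2 * k * d)) := by gcongr <;> omega
      _ = 800 * (9 * k ^ 10 * d) := by ring
      _ ≤ 800 * n := Nat.mul_le_mul_left _ hd
  calc k ^ 8 * (a + (r + q) * (m - 1))
      = k ^ 8 * a + k ^ 8 * (r * (m - 1)) + k ^ 8 * (q * (m - 1)) := by ring
    _ ≤ n := by omega

theorem exists_isPacking_blockGraph_le {k : ℕ} (hk : 2 ≤ k) :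
    ∃ n₀, ∀ (V : Type u) [Fintype V] [DecidableEq V], n₀ ≤ Fintype.card V →
      ∀ (G : SimpleGraph V) [DecidableRel G.Adj],
      (∀ v, 9 * k ^ 10 * #(G.neighborFinset v)ᶜ ≤ Fintype.card V) →
      ∃ R, IsPacking (2 * k - 1) R ∧ blockGraph R ≤ G ∧
        ∀ v, k ^ 8 * (G \ blockGraph R).degree v ≤ Fintype.card V := by
  obtain ⟨m, hm⟩ : ∃ m, m + 1 = 2 * k := ⟨2 * k - 1, by omega⟩
  rw [← hm, Nat.add_sub_cancel]
  have hmpos : 0 < m := by omega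
  obtain ⟨C, hC⟩ := exists_isPacking.{u} hmpos 10
  obtain ⟨n₀, hn₀⟩ := exists_lt_two_pow_and_mul_add_le (200 * k ^ 9) (C + 1)
  refine ⟨n₀, fun V _ _ hV G _ hG ↦ ?_⟩
  obtain ⟨B, hB, hBC⟩ := hC V
  obtain ⟨r, hr, hrn⟩ := hn₀ _ hV
  set n := Fintype.card V
  set d := n / (9 * k ^ 10)
  set a := (n + C) / m ^ 10
  have hmr : m * r < n := by
    have : m * r ≤ 200 * k ^ 9 * r := by
      refine Nat.mul_le_mul_right _ ?_
      calc m ≤ 200 * k := by omega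
        _ ≤ 200 * k ^ 9 := Nat.mul_le_mul_left _ (Nat.le_self_pow (by norm_num) k)
    omega
  set q := 2 * ((m - 1) * n * d) / (n - m * r)
  obtain ⟨R, hR, hRG, hdeg⟩ := hB.exists_isPacking_blockGraph_le (G := G) (d := d) (a := a)
    (r := r) (s := r + q)
    (fun v ↦ (Nat.le_div_iff_mul_le (by positivity)).2 (by rw [mul_comm]; exact hG v))
    (fun v ↦ (Nat.le_div_iff_mul_le (Nat.pow_pos hmpos)).2 (by rw [mul_comm]; exact hBC v)) hr
    (Nat.le_add_right r q) hmr (by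
      rw [add_assoc, Nat.add_sub_cancel_left, mul_comm (q + 1)]
      exact (Nat.lt_mul_div_succ _ (Nat.sub_pos_of_lt hmr)).le)
  refine ⟨R, hR, hRG, fun v ↦ (Nat.mul_le_mul_left _ (hdeg v)).trans ?_⟩
  exact pow_mul_add_mul_le hk hm (Nat.mul_div_le _ _) (Nat.div_mul_le_self _ _)
    (Nat.mul_div_le _ _) (by omega)

end ExistsCliqueBlocks

/-! ### Covering the remaining edges by cliques -/

section CoveringCliques

variable {V : Type*} [DecidableEq V] {R L : Finset (Finset V)} {W : Finset V} {e : Sym2 V}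
  {k m : ℕ}

/-- The blocks of `R` that contain an edge of the complete graph on `W`. -/
def edgeBlocks (R : Finset (Finset V)) (W : Finset V) : Finset (Finset V) :=
  {b ∈ R | 1 < #(b ∩ W)}

lemma edgeBlocks_subset : edgeBlocks R W ⊆ R := filter_subset _ _

lemma mem_edgeBlocks {b : Finset V} :
    b ∈ edgeBlocks R W ↔ b ∈ R ∧ ∃ x y, x ≠ y ∧ (x ∈ b ∧ x ∈ W) ∧ y ∈ b ∧ y ∈ W := by
  simp only [edgeBlocks, mem_filter, one_lt_card, mem_inter]
  grind

lemma IsPacking.card_edgeBlocks_le (hR : IsPacking m R) (W : Finset V) :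
    #(edgeBlocks R W) ≤ (#W).choose 2 := by
  rw [← card_powersetCard]
  refine card_le_card_of_forall_subsingleton (fun b p ↦ p ⊆ b) (fun b hb ↦ ?_) fun p hp ↦ ?_
  · obtain ⟨p, hpb, hp⟩ := exists_subset_card_eq (mem_filter.1 hb).2
    exact ⟨p, mem_powersetCard.2 ⟨hpb.trans inter_subset_right, hp⟩, hpb.trans inter_subset_left⟩
  · obtain ⟨x, y, hxy, rfl⟩ := card_eq_two.1 (mem_powersetCard.1 hp).2
    rintro b ⟨hb, hpb⟩ b' ⟨hb', hpb'⟩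
    simp only [insert_subset_iff, singleton_subset_iff] at hpb hpb'
    exact hR.eq_of_mem b (edgeBlocks_subset hb) b' (edgeBlocks_subset hb') x y hxy
      hpb.1 hpb.2 hpb'.1 hpb'.2

/-- `W` spans a `k`-clique through the edge `e` whose other edges lie in pairwise different blocks
of `R`. -/
structure IsCoveringClique (k : ℕ) (R : Finset (Finset V)) (e : Sym2 V) (W : Finset V) :
    Prop where
  card_eq : #W = k
  mem : ∀ v ∈ e, v ∈ W
  eq_or_adj : ∀ x ∈ W, ∀ y ∈ W, x ≠ y → s(x, y) = e ∨ (blockGraph R).Adj x y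
  card_inter_le : ∀ b ∈ R, #(b ∩ W) ≤ 2

lemma isCoveringClique_toFinset (he : ¬ e.IsDiag) : IsCoveringClique 2 R e e.toFinset where
  card_eq := Sym2.card_toFinset_of_not_isDiag e he
  mem _ hv := Sym2.mem_toFinset.2 hv
  eq_or_adj _ hx _ hy hxy := Or.inl
    ((Sym2.mem_and_mem_iff hxy).1 ⟨Sym2.mem_toFinset.1 hx, Sym2.mem_toFinset.1 hy⟩).symm
  card_inter_le _ _ :=
    (card_le_card inter_subset_right).trans_eq (Sym2.card_toFinset_of_not_isDiag e he)

protected lemma IsCoveringClique.insert (hW : IsCoveringClique k R e W) {w : V}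
    (hadj : ∀ x ∈ W, (blockGraph R).Adj x w) (hw : ∀ b ∈ edgeBlocks R W, w ∉ b) :
    IsCoveringClique (k + 1) R e (insert w W) where
  card_eq := by
    rw [card_insert_of_notMem fun h ↦ (hadj w h).ne rfl, hW.card_eq]
  mem v hv := mem_insert_of_mem (hW.mem v hv)
  eq_or_adj x hx y hy hxy := by
    rw [mem_insert] at hx hy
    obtain rfl | hx := hx <;> obtain rfl | hy := hy
    · exact absurd rfl hxy
    · exact Or.inr (hadj y hy).symm
    · exact Or.inr (hadj x hx)
    · exact hW.eq_or_adj x hx y hy hxy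
  card_inter_le b hb := by
    by_cases hwb : w ∈ b
    · have hbW : ¬ 1 < #(b ∩ W) := fun h ↦ hw b (mem_filter.2 ⟨hb, h⟩) hwb
      rw [inter_insert_of_mem hwb]
      exact (card_insert_le _ _).trans (by omega)
    · rw [inter_insert_of_notMem hwb]
      exact hW.card_inter_le b hb

lemma IsCoveringClique.mem_or_exists_mem (hW : IsCoveringClique k R e W) (hk : 2 ≤ k) {x : V}
    (hx : x ∈ W) : x ∈ e ∨ ∃ b ∈ R, x ∈ b := by
  obtain ⟨y, hy, hyx⟩ := exists_mem_ne (by rw [hW.card_eq]; omega) x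
  obtain rfl | ⟨-, b, hb, hxb, -⟩ := hW.eq_or_adj x hx y hy hyx.symm
  · exact Or.inl (Sym2.mem_mk_left x y)
  · exact Or.inr ⟨b, hb, hxb⟩

theorem IsPacking.exists_isCoveringClique [Fintype V] (hL : IsPacking m L) (he : ¬ e.IsDiag)
    {D : ℕ} (hD : ∀ x, (x ∈ e ∨ ∃ b ∈ L, x ∈ b) → #((blockGraph L).neighborFinset x)ᶜ ≤ D)
    (hk : 2 ≤ k) (hcard : (k - 1) * D + k.choose 2 * m < Fintype.card V) :
    ∃ W, IsCoveringClique k L e W := by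
  suffices ∀ j ≥ 2, j ≤ k → ∃ W, IsCoveringClique j L e W from this k hk le_rfl
  intro j hj
  induction j, hj using Nat.le_induction with
  | base => exact fun _ ↦ ⟨_, isCoveringClique_toFinset he⟩
  | succ j hj ih =>
    intro hjk
    obtain ⟨W, hW⟩ := ih (by omega)
    set F := (W.biUnion fun x ↦ ((blockGraph L).neighborFinset x)ᶜ) ∪
      (edgeBlocks L W).biUnion id with hF
    have hFcard : #F < #(univ : Finset V) := by
      rw [card_univ]
      refine (card_union_le _ _).trans_lt (lt_of_le_of_lt (Nat.add_le_add ?_ ?_) hcard)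
      · refine (card_biUnion_le_card_mul _ _ D fun x hx ↦ ?_).trans ?_
        · exact hD x (hW.mem_or_exists_mem hj hx)
        · exact Nat.mul_le_mul_right _ (by rw [hW.card_eq]; omega)
      · refine (card_biUnion_le_card_mul _ _ m fun b hb ↦ ?_).trans ?_
        · exact (hL.card_eq b (edgeBlocks_subset hb)).le
        · refine Nat.mul_le_mul_right _ ((hL.card_edgeBlocks_le W).trans ?_)
          exact Nat.choose_le_choose 2 (by rw [hW.card_eq]; omega)
    obtain ⟨w, -, hw⟩ := exists_mem_notMem_of_card_lt_card hFcard
    simp only [hF, mem_union, mem_biUnion, mem_compl, SimpleGraph.mem_neighborFinset, id, not_or,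
      not_exists, not_and, not_not] at hw
    exact ⟨_, hW.insert hw.1 hw.2⟩

lemma IsCoveringClique.edgeBlocks_subset (hW : IsCoveringClique k L e W) (hR : IsPacking m R)
    (hLR : L ⊆ R) (he : e ∉ (blockGraph R).edgeSet) : edgeBlocks R W ⊆ L := by
  intro b hb
  obtain ⟨hbR, x, y, hxy, ⟨hxb, hxW⟩, hyb, hyW⟩ := mem_edgeBlocks.1 hb
  obtain rfl | ⟨-, b', hb', hxb', hyb'⟩ := hW.eq_or_adj x hxW y hyW hxy
  · exact absurd (show (blockGraph R).Adj x y from ⟨hxy, b, hbR, hxb, hyb⟩) he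
  · rwa [hR.eq_of_mem b hbR b' (hLR hb') x y hxy hxb hyb hxb' hyb']

lemma IsCoveringClique.mono (hW : IsCoveringClique k L e W) (hR : IsPacking m R) (hLR : L ⊆ R)
    (he : e ∉ (blockGraph R).edgeSet) : IsCoveringClique k R e W where
  card_eq := hW.card_eq
  mem := hW.mem
  eq_or_adj x hx y hy hxy := (hW.eq_or_adj x hx y hy hxy).imp_right
    fun ⟨hne, b, hb, hxy⟩ ↦ ⟨hne, b, hLR hb, hxy⟩
  card_inter_le b hb := by
    by_contra! h
    exact h.not_ge (hW.card_inter_le b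
      (hW.edgeBlocks_subset hR hLR he (mem_filter.2 ⟨hb, by omega⟩)))

end CoveringCliques

section CliqueSystems

variable {V : Type*} [DecidableEq V] {R : Finset (Finset V)} {K : Sym2 V → Finset V}
  {E : Finset (Sym2 V)} {e : Sym2 V} {W : Finset V} {k m : ℕ}

/-- The blocks of `R` from which the cliques `K e`, `e ∈ E`, take an edge. -/
def usedBlocks (R : Finset (Finset V)) (K : Sym2 V → Finset V) (E : Finset (Sym2 V)) :
    Finset (Finset V) :=
  E.biUnion fun e ↦ edgeBlocks R (K e)

lemma usedBlocks_subset : usedBlocks R K E ⊆ R := biUnion_subset.2 fun _ _ ↦ edgeBlocks_subset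

/-- Every `e ∈ E` lies in the covering clique `K e`, and no block of `R` loses edges to two of these
cliques. -/
structure IsCliqueSystem (k : ℕ) (R : Finset (Finset V)) (K : Sym2 V → Finset V)
    (E : Finset (Sym2 V)) : Prop where
  isCoveringClique : ∀ e ∈ E, IsCoveringClique k R e (K e)
  pairwiseDisjoint : (E : Set (Sym2 V)).PairwiseDisjoint fun e ↦ edgeBlocks R (K e)

lemma usedBlocks_insert_update (he : e ∉ E) :
    usedBlocks R (Function.update K e W) (insert e E) = edgeBlocks R W ∪ usedBlocks R K E := by
  rw [usedBlocks, biUnion_insert, Function.update_self]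
  congr 1
  refine biUnion_congr rfl fun e' he' ↦ ?_
  rw [Function.update_of_ne (ne_of_mem_of_not_mem he' he)]

lemma IsCliqueSystem.insert_update (hK : IsCliqueSystem k R K E) (he : e ∉ E)
    (hW : IsCoveringClique k R e W) (hdisj : Disjoint (edgeBlocks R W) (usedBlocks R K E)) :
    IsCliqueSystem k R (Function.update K e W) (insert e E) := by
  have hupdate : ∀ e' ∈ E, Function.update K e W e' = K e' := fun e' he' ↦
    Function.update_of_ne (ne_of_mem_of_not_mem he' he) _ _
  refine ⟨fun e' he' ↦ ?_, ?_⟩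
  · obtain rfl | he' := mem_insert.1 he'
    · rwa [Function.update_self]
    · rw [hupdate e' he']
      exact hK.isCoveringClique e' he'
  · rw [coe_insert, Set.pairwiseDisjoint_insert_of_notMem (mt mem_coe.1 he)]
    refine ⟨fun e₁ he₁ e₂ he₂ hne ↦ ?_, fun e' he' ↦ ?_⟩
    · simp only [Function.onFun, hupdate e₁ he₁, hupdate e₂ he₂]
      exact hK.pairwiseDisjoint he₁ he₂ hne
    · simp only [Function.update_self, hupdate e' he']
      exact hdisj.mono_right (subset_biUnion_of_mem (fun e ↦ edgeBlocks R (K e)) he')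

lemma IsCliqueSystem.card_usedBlocks_le (hK : IsCliqueSystem k R K E) (hR : IsPacking m R) :
    #(usedBlocks R K E) ≤ #E * k.choose 2 :=
  card_biUnion_le_card_mul _ _ _ fun e he ↦ by
    rw [← (hK.isCoveringClique e he).card_eq]
    exact hR.card_edgeBlocks_le _

end CliqueSystems

section GreedyCover

variable {V : Type*} [Fintype V] [DecidableEq V] {R U : Finset (Finset V)} {O W : Finset V}
  {K : Sym2 V → Finset V} {E : Finset (Sym2 V)} {e : Sym2 V} {k m τ : ℕ}

/-- The vertices that lie on at least `τ` blocks of `U`. -/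
def overloaded (U : Finset (Finset V)) (τ : ℕ) : Finset V := {z | τ ≤ #{b ∈ U | z ∈ b}}

/-- The blocks that may be used for the edge `e` when the blocks in `U` are already in use and the
vertices in `O` are to be avoided. -/
def freeBlocks (R U : Finset (Finset V)) (O : Finset V) (e : Sym2 V) : Finset (Finset V) :=
  {b ∈ R | b ∉ U ∧ ∀ z ∈ b, z ∈ O → z ∈ e}

lemma IsPacking.card_overloaded_mul_le (hU : IsPacking m U) (τ : ℕ) :
    #(overloaded U τ) * τ ≤ m * #U := by
  rw [mul_comm m]
  refine card_mul_le_card_mul (fun z b ↦ z ∈ b) (fun z hz ↦ (mem_filter.1 hz).2) fun b hb ↦ ?_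
  rw [← hU.card_eq b hb]
  exact card_le_card fun z hz ↦ (mem_filter.1 hz).2

lemma IsPacking.card_compl_neighborFinset_freeBlocks_le (hR : IsPacking m R) (hU : U ⊆ R)
    (G : SimpleGraph V) [DecidableRel G.Adj] {x : V} (hx : x ∈ O → x ∈ e) :
    #((blockGraph (freeBlocks R U O e)).neighborFinset x)ᶜ ≤
      #(G.neighborFinset x)ᶜ + (G \ blockGraph R).degree x + #{b ∈ U | x ∈ b} * m + #O * m := by
  set F := (G.neighborFinset x)ᶜ ∪ (G \ blockGraph R).neighborFinset x ∪
    ({b ∈ U | x ∈ b}).biUnion id with hF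
  have hcover : ∀ w ∈ ((blockGraph (freeBlocks R U O e)).neighborFinset x)ᶜ \ F,
      ∃ b ∈ R, x ∈ b ∧ w ∈ b ∧ ∃ z ∈ O, z ≠ x ∧ z ∈ b := by
    intro w hw
    simp only [hF, mem_sdiff, mem_compl, mem_union, SimpleGraph.mem_neighborFinset, mem_biUnion,
      mem_filter, id, not_or, not_not, SimpleGraph.sdiff_adj, not_and, not_exists] at hw
    obtain ⟨hfree, ⟨hG, hGR⟩, hU'⟩ := hw
    obtain ⟨hxw, b, hb, hxb, hwb⟩ := hGR hG
    have hbfree : b ∉ freeBlocks R U O e := fun h ↦ hfree ⟨hxw, b, h, hxb, hwb⟩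
    have hbU : b ∉ U := fun h ↦ hU' b ⟨h, hxb⟩ hwb
    obtain ⟨z, hzb, hzO, hze⟩ : ∃ z ∈ b, z ∈ O ∧ z ∉ e := by
      simpa [freeBlocks, hb, hbU] using hbfree
    exact ⟨b, hb, hxb, hwb, z, hzO, fun h ↦ hze (h ▸ hx (h ▸ hzO)), hzb⟩
  have hFcard : #F ≤
      #(G.neighborFinset x)ᶜ + (G \ blockGraph R).degree x + #{b ∈ U | x ∈ b} * m := by
    refine (card_union_le _ _).trans (Nat.add_le_add (card_union_le _ _) ?_)
    exact card_biUnion_le_card_mul _ _ m fun b hb ↦ (hR.card_eq b (hU (mem_filter.1 hb).1)).le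
  refine (card_le_card_sdiff_add_card (t := F)).trans ?_
  rw [add_comm]
  exact Nat.add_le_add hFcard (hR.card_le_mul_of_forall_mem_block hcover)

variable {G : SimpleGraph V} [DecidableRel G.Adj] {d h : ℕ}

omit [DecidableEq V] in
lemma two_mul_card_le_of_forall_degree_le (hE : (E : Set (Sym2 V)) ⊆ G.edgeSet)
    (hh : ∀ v, G.degree v ≤ h) : 2 * #E ≤ Fintype.card V * h := by
  calc 2 * #E ≤ 2 * #G.edgeFinset :=
        Nat.mul_le_mul_left _ (card_le_card fun e he ↦ G.mem_edgeFinset.2 (hE he))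
    _ = ∑ v, G.degree v := G.sum_degrees_eq_twice_card_edges.symm
    _ ≤ Fintype.card V * h := sum_le_card_nsmul _ _ _ fun v _ ↦ hh v

lemma card_filter_mem_le_degree (hE : (E : Set (Sym2 V)) ⊆ G.edgeSet) (v : V) :
    #{e ∈ E | v ∈ e} ≤ G.degree v := by
  rw [← G.card_incidenceFinset_eq_degree, G.incidenceFinset_eq_filter]
  exact card_le_card (filter_subset_filter _ fun e he ↦ G.mem_edgeFinset.2 (hE he))

lemma IsCliqueSystem.exists_isCoveringClique_freeBlocks (hk : 2 ≤ k) (hR : IsPacking m R)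
    (hd : ∀ v, #(G.neighborFinset v)ᶜ ≤ d) (hh : ∀ v, (G \ blockGraph R).degree v ≤ h)
    (hcard : ∀ o, 2 * (o * τ) ≤ m * k.choose 2 * (Fintype.card V * h) →
      (k - 1) * (d + h + (τ + k.choose 2 * (h + 1)) * m + o * m) + k.choose 2 * m <
        Fintype.card V)
    (hE : (E : Set (Sym2 V)) ⊆ (G \ blockGraph R).edgeSet) (hK : IsCliqueSystem k R K E)
    (hload : ∀ w, #{b ∈ usedBlocks R K E | w ∈ b} ≤ τ + k.choose 2 * (#{e ∈ E | w ∈ e} + 1))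
    (he : ¬ e.IsDiag) :
    ∃ W, IsCoveringClique k
      (freeBlocks R (usedBlocks R K E) (overloaded (usedBlocks R K E) τ) e) e W := by
  set U := usedBlocks R K E
  set O := overloaded U τ
  have hU : U ⊆ R := usedBlocks_subset
  have hfree : freeBlocks R U O e ⊆ R := filter_subset _ _
  have hO : 2 * (#O * τ) ≤ m * k.choose 2 * (Fintype.card V * h) := by
    calc 2 * (#O * τ) ≤ 2 * (m * #U) :=
          Nat.mul_le_mul_left _ ((hR.mono hU).card_overloaded_mul_le τ)
      _ ≤ 2 * (m * (#E * k.choose 2)) := by gcongr; exact hK.card_usedBlocks_le hR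
      _ = m * k.choose 2 * (2 * #E) := by ring
      _ ≤ m * k.choose 2 * (Fintype.card V * h) :=
          Nat.mul_le_mul_left _ (two_mul_card_le_of_forall_degree_le (G := G \ blockGraph R) hE hh)
  refine (hR.mono hfree).exists_isCoveringClique he (fun x hx ↦ ?_) hk (hcard _ hO)
  have hxO : x ∈ O → x ∈ e := fun hxO ↦ hx.elim id fun ⟨b, hb, hxb⟩ ↦
    (mem_filter.1 hb).2.2 x hxb hxO
  refine (hR.card_compl_neighborFinset_freeBlocks_le hU G hxO).trans ?_
  have hxE := (card_filter_mem_le_degree (G := G \ blockGraph R) hE x).trans (hh x)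
  gcongr
  · exact hd x
  · exact hh x
  · exact (hload x).trans (by gcongr)

/-- Vertices that are overloaded already appear only in covering cliques of edges through them. -/
lemma IsCoveringClique.card_filter_mem_edgeBlocks_union_le (hR : IsPacking m R)
    (he : e ∉ (blockGraph R).edgeSet)
    (hW : IsCoveringClique k (freeBlocks R U (overloaded U τ) e) e W) (heE : e ∉ E)
    (hload : ∀ w, #{b ∈ U | w ∈ b} ≤ τ + k.choose 2 * (#{e ∈ E | w ∈ e} + 1)) (w : V) :
    #{b ∈ edgeBlocks R W ∪ U | w ∈ b} ≤ τ + k.choose 2 * (#{e ∈ insert e E | w ∈ e} + 1) := by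
  have hfree := hW.edgeBlocks_subset hR (filter_subset _ _) he
  have hnew : #{b ∈ edgeBlocks R W | w ∈ b} ≤ k.choose 2 := by
    rw [← hW.card_eq]
    exact (card_filter_le _ _).trans (hR.card_edgeBlocks_le W)
  have hunion : #{b ∈ edgeBlocks R W ∪ U | w ∈ b} ≤
      #{b ∈ edgeBlocks R W | w ∈ b} + #{b ∈ U | w ∈ b} := by
    rw [filter_union]
    exact card_union_le _ _
  by_cases hwe : w ∈ e
  · rw [filter_insert, if_pos hwe, card_insert_of_notMem fun h ↦ heE (mem_filter.1 h).1]
    linarith [hload w]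
  rw [filter_insert, if_neg hwe]
  obtain hempty | ⟨b, hb⟩ := {b ∈ edgeBlocks R W | w ∈ b}.eq_empty_or_nonempty
  · rw [hempty, card_empty, zero_add] at hunion
    exact hunion.trans (hload w)
  · obtain ⟨hbW, hwb⟩ := mem_filter.1 hb
    have hwO : w ∉ overloaded U τ := fun h ↦ hwe ((mem_filter.1 (hfree hbW)).2.2 w hwb h)
    have hlt : #{b ∈ U | w ∈ b} < τ := by simpa [overloaded] using hwO
    linarith [Nat.zero_le (k.choose 2 * #{e ∈ E | w ∈ e})]

theorem IsPacking.exists_isCliqueSystem (hk : 2 ≤ k) (hR : IsPacking m R)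
    (hd : ∀ v, #(G.neighborFinset v)ᶜ ≤ d) (hh : ∀ v, (G \ blockGraph R).degree v ≤ h)
    (hcard : ∀ o, 2 * (o * τ) ≤ m * k.choose 2 * (Fintype.card V * h) →
      (k - 1) * (d + h + (τ + k.choose 2 * (h + 1)) * m + o * m) + k.choose 2 * m <
        Fintype.card V) :
    ∃ K, IsCliqueSystem k R K (G \ blockGraph R).edgeFinset := by
  suffices ∀ E : Finset (Sym2 V), (E : Set (Sym2 V)) ⊆ (G \ blockGraph R).edgeSet →
      ∃ K, IsCliqueSystem k R K E ∧
        ∀ w, #{b ∈ usedBlocks R K E | w ∈ b} ≤ τ + k.choose 2 * (#{e ∈ E | w ∈ e} + 1) from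
    (this _ (SimpleGraph.coe_edgeFinset _).subset).imp fun _ ↦ And.left
  intro E
  induction E using Finset.induction_on with
  | empty => exact fun _ ↦ ⟨fun _ ↦ ∅, ⟨by simp, by simp⟩, by simp [usedBlocks]⟩
  | insert e E heE ih =>
    intro hE
    rw [coe_insert, Set.insert_subset_iff] at hE
    obtain ⟨heG, hE⟩ := hE
    obtain ⟨K, hK, hload⟩ := ih hE
    have heR : e ∉ (blockGraph R).edgeSet := by
      rw [SimpleGraph.edgeSet_sdiff] at heG
      exact heG.2
    obtain ⟨W, hW⟩ := hK.exists_isCoveringClique_freeBlocks hk hR hd hh hcard hE hload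
      (SimpleGraph.not_isDiag_of_mem_edgeSet _ heG)
    have hfree := hW.edgeBlocks_subset hR (filter_subset _ _) heR
    refine ⟨Function.update K e W, hK.insert_update heE (hW.mono hR (filter_subset _ _) heR) ?_, ?_⟩
    · exact disjoint_left.2 fun b hb ↦ (mem_filter.1 (hfree hb)).2.1
    · rw [usedBlocks_insert_update heE]
      exact hW.card_filter_mem_edgeBlocks_union_le hR heR heE hload

end GreedyCover

section Numerics

lemma mul_add_pow_lt_pow {k : ℕ} (hk : 2 ≤ k) :
    (k - 1) * (4 + 36 * k ^ 2 + (2 * k - 1) * (9 * k ^ 8 + 18 * k ^ 3 * (k - 1)) +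
      (2 * k - 1) ^ 2 * (36 * k ^ 5 * (k - 1))) < 36 * k ^ 10 := by
  obtain ⟨j, rfl⟩ := Nat.exists_eq_add_of_le' hk
  rw [show j + 2 - 1 = j + 1 by omega, show 2 * (j + 2) - 1 = 2 * j + 3 by omega]
  zify
  rw [← sub_pos]
  ring_nf
  positivity

lemma exists_threshold {k : ℕ} (hk : 2 ≤ k) : ∃ n₀, ∀ n ≥ n₀, ∀ d h,
    9 * k ^ 10 * d ≤ n → k ^ 8 * h ≤ n → ∃ τ, ∀ o,
      2 * (o * τ) ≤ (2 * k - 1) * k.choose 2 * (n * h) →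
      (k - 1) * (d + h + (τ + k.choose 2 * (h + 1)) * (2 * k - 1) + o * (2 * k - 1)) +
        k.choose 2 * (2 * k - 1) < n := by
  have hP := mul_add_pow_lt_pow hk
  have hc : 2 * k.choose 2 = k * (k - 1) := by
    rw [Nat.choose_two_right, Nat.mul_div_cancel' (Nat.even_mul_pred_self k).two_dvd]
  set c := k.choose 2
  set m := 2 * k - 1
  set q := k - 1
  set P := q * (4 + 36 * k ^ 2 + m * (9 * k ^ 8 + 18 * k ^ 3 * q) + m ^ 2 * (36 * k ^ 5 * q))
  set C := q * (m * (36 * k ^ 10 + 36 * k ^ 10 * c)) + 36 * k ^ 10 * (c * m)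
  refine ⟨C + 1, fun n hn d h hd hh ↦ ⟨n / (4 * k ^ 2) + 1, fun o ho ↦ ?_⟩⟩
  set τ := n / (4 * k ^ 2) + 1
  have hτ : n ≤ 4 * k ^ 2 * τ := (Nat.lt_mul_div_succ n (by positivity)).le
  have hτ' : 4 * k ^ 2 * τ ≤ n + 4 * k ^ 2 := by
    rw [mul_add_one]
    exact Nat.add_le_add_right (Nat.mul_div_le _ _) _
  have hoh : o ≤ m * k ^ 3 * q * h := by
    refine Nat.le_of_mul_le_mul_left ?_ (show 0 < n by omega)
    calc n * o ≤ 4 * k ^ 2 * τ * o := Nat.mul_le_mul_right _ hτ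
      _ = 2 * k ^ 2 * (2 * (o * τ)) := by ring
      _ ≤ 2 * k ^ 2 * (m * c * (n * h)) := Nat.mul_le_mul_left _ ho
      _ = k ^ 2 * m * (2 * c) * (n * h) := by ring
      _ = n * (m * k ^ 3 * q * h) := by rw [hc]; ring
  have hon : k ^ 5 * o ≤ m * q * n := by
    calc k ^ 5 * o ≤ k ^ 5 * (m * k ^ 3 * q * h) := Nat.mul_le_mul_left _ hoh
      _ = m * q * (k ^ 8 * h) := by ring
      _ ≤ m * q * n := Nat.mul_le_mul_left _ hh
  have hscaled : 36 * k ^ 10 * (q * (d + h + (τ + c * (h + 1)) * m + o * m) + c * m) ≤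
      P * n + C := by
    calc 36 * k ^ 10 * (q * (d + h + (τ + c * (h + 1)) * m + o * m) + c * m)
        = q * (4 * (9 * k ^ 10 * d) + 36 * k ^ 2 * (k ^ 8 * h) +
            m * (9 * k ^ 8 * (4 * k ^ 2 * τ) + 36 * k ^ 10 * c +
              18 * k ^ 2 * (2 * c) * (k ^ 8 * h)) + m * (36 * k ^ 5 * (k ^ 5 * o))) +
            36 * k ^ 10 * (c * m) := by ring
      _ ≤ q * (4 * n + 36 * k ^ 2 * n +
            m * (9 * k ^ 8 * (n + 4 * k ^ 2) + 36 * k ^ 10 * c +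
              18 * k ^ 2 * (k * q) * n) + m * (36 * k ^ 5 * (m * q * n))) +
            36 * k ^ 10 * (c * m) := by rw [hc]; gcongr
      _ = P * n + C := by simp only [P, C]; ring
  have hPn : P * n + n ≤ 36 * k ^ 10 * n := by
    rw [← Nat.succ_mul]
    exact Nat.mul_le_mul_right n hP
  exact Nat.lt_of_mul_lt_mul_left (hscaled.trans_lt (by omega : _ < 36 * k ^ 10 * n))

end Numerics

section ExistsCliqueSystem

theorem exists_isPacking_isCliqueSystem {k : ℕ} (hk : 2 ≤ k) :
    ∃ n₀, ∀ (V : Type u) [Fintype V] [DecidableEq V], n₀ ≤ Fintype.card V →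
      ∀ (G : SimpleGraph V) [DecidableRel G.Adj],
      (∀ v, 9 * k ^ 10 * #(G.neighborFinset v)ᶜ ≤ Fintype.card V) →
      ∃ R K, IsPacking (2 * k - 1) R ∧ blockGraph R ≤ G ∧
        IsCliqueSystem k R K (G \ blockGraph R).edgeFinset := by
  obtain ⟨n₁, h₁⟩ := exists_isPacking_blockGraph_le.{u} hk
  obtain ⟨n₂, h₂⟩ := exists_threshold hk
  refine ⟨max n₁ n₂, fun V _ _ hV G _ hG ↦ ?_⟩
  obtain ⟨R, hR, hRG, hdeg⟩ := h₁ V (le_of_max_le_left hV) G hG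
  obtain ⟨τ, hτ⟩ := h₂ (Fintype.card V) (le_of_max_le_right hV) (Fintype.card V / (9 * k ^ 10))
    (Fintype.card V / k ^ 8) (Nat.mul_div_le _ _) (Nat.mul_div_le _ _)
  have hd (v : V) : #(G.neighborFinset v)ᶜ ≤ Fintype.card V / (9 * k ^ 10) := by
    rw [Nat.le_div_iff_mul_le (by positivity), mul_comm]
    exact hG v
  have hh (v : V) : (G \ blockGraph R).degree v ≤ Fintype.card V / k ^ 8 := by
    rw [Nat.le_div_iff_mul_le (by positivity), mul_comm]
    exact hdeg v
  obtain ⟨K, hK⟩ := hR.exists_isCliqueSystem hk hd hh hτ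
  exact ⟨R, K, hR, hRG, hK⟩

end ExistsCliqueSystem

/-! ### The decomposition -/

section Copies

variable {V : Type*} {G : SimpleGraph V} {s : Finset V} {m : ℕ}

lemma isCopy_induce_of_isClique (hs : G.IsClique s) (hm : #s = m) :
    ((⊤ : G.Subgraph).induce s).IsCopy (⊤ : SimpleGraph (Fin m)) := by
  let f : s ≃ Fin m := s.equivFinOfCardEq hm
  refine ⟨⟨f, ?_⟩⟩
  rintro ⟨x, hx : x ∈ s⟩ ⟨y, hy : y ∈ s⟩
  change f ⟨x, hx⟩ ≠ f ⟨y, hy⟩ ↔ x ∈ s ∧ y ∈ s ∧ G.Adj x y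
  rw [f.injective.ne_iff, ne_eq, Subtype.mk.injEq]
  exact ⟨fun hxy ↦ ⟨hx, hy, hs hx hy hxy⟩, fun h ↦ h.2.2.ne⟩

lemma exists_equiv_apply_eq_apply_eq {α β : Type*} (f : α ≃ β) {x y : α} {i j : β}
    (hxy : x ≠ y) (hij : i ≠ j) : ∃ g : α ≃ β, g x = i ∧ g y = j := by
  classical
  let g := f.trans (Equiv.swap (f x) i)
  have hgx : g x = i := by simp [g]
  have hgy : i ≠ g y := hgx ▸ g.injective.ne hxy
  refine ⟨g.trans (Equiv.swap (g y) j), ?_, by simp⟩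
  rw [Equiv.trans_apply, hgx, Equiv.swap_apply_of_ne_of_ne hgy hij]

lemma isCopy_deleteEdges_of_isClique (hs : G.IsClique s) (hm : #s = m) {u v : V} (hu : u ∈ s)
    (hv : v ∈ s) (huv : u ≠ v) {i j : Fin m} (hij : i ≠ j) :
    (((⊤ : G.Subgraph).induce s).deleteEdges {s(u, v)}).IsCopy
      ((⊤ : SimpleGraph (Fin m)).deleteEdges {s(i, j)}) := by
  obtain ⟨f, rfl, rfl⟩ := exists_equiv_apply_eq_apply_eq (s.equivFinOfCardEq hm)
    (x := ⟨u, hu⟩) (y := ⟨v, hv⟩) (by simpa using huv) hij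
  refine ⟨⟨f, ?_⟩⟩
  rintro ⟨x, hx : x ∈ s⟩ ⟨y, hy : y ∈ s⟩
  rw [SimpleGraph.deleteEdges_adj]
  change (f ⟨x, hx⟩ ≠ f ⟨y, hy⟩ ∧ s(f ⟨x, hx⟩, f ⟨y, hy⟩) ≠ s(f ⟨u, hu⟩, f ⟨v, hv⟩)) ↔
    (x ∈ s ∧ y ∈ s ∧ G.Adj x y) ∧ s(x, y) ≠ s(u, v)
  simp only [ne_eq, Sym2.eq_iff, f.injective.eq_iff, Subtype.mk.injEq]
  exact and_congr_left fun _ ↦ ⟨fun hxy ↦ ⟨hx, hy, hs hx hy hxy⟩, fun h ↦ h.2.2.ne⟩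

end Copies

section Decomposition

variable {V : Type*} [DecidableEq V] {G : SimpleGraph V} {R : Finset (Finset V)}
  {K : Sym2 V → Finset V} {E : Finset (Sym2 V)} {k m : ℕ}

lemma IsCliqueSystem.isClique (hK : IsCliqueSystem k R K E) (hRG : blockGraph R ≤ G)
    (hE : (E : Set (Sym2 V)) ⊆ G.edgeSet) {e : Sym2 V} (he : e ∈ E) : G.IsClique (K e) := by
  intro x hx y hy hxy
  rcases (hK.isCoveringClique e he).eq_or_adj x hx y hy hxy with rfl | hadj
  · exact hE he
  · exact hRG hadj

lemma IsCliqueSystem.eq_of_mem_block (hK : IsCliqueSystem k R K E) {e e' : Sym2 V} (he : e ∈ E)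
    (he' : e' ∈ E) {b : Finset V} (hb : b ∈ R) {x y x' y' : V} (hxy : x ≠ y) (hxy' : x' ≠ y')
    (hx : x ∈ b ∧ x ∈ K e) (hy : y ∈ b ∧ y ∈ K e) (hx' : x' ∈ b ∧ x' ∈ K e')
    (hy' : y' ∈ b ∧ y' ∈ K e') : e = e' :=
  hK.pairwiseDisjoint.elim_finset he he' b (mem_edgeBlocks.2 ⟨hb, x, y, hxy, hx, hy⟩)
    (mem_edgeBlocks.2 ⟨hb, x', y', hxy', hx', hy'⟩)

lemma IsCliqueSystem.eq_of_mem (hK : IsCliqueSystem k R K E)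
    {e e' : Sym2 V} (he : e ∈ E) (he' : e' ∈ E) {x y : V} (hxy : x ≠ y) (hx : x ∈ K e)
    (hy : y ∈ K e) (hx' : x ∈ K e') (hy' : y ∈ K e') : e = e' := by
  by_cases hadj : (blockGraph R).Adj x y
  · obtain ⟨-, b, hb, hxb, hyb⟩ := hadj
    exact hK.eq_of_mem_block he he' hb hxy hxy ⟨hxb, hx⟩ ⟨hyb, hy⟩ ⟨hxb, hx'⟩ ⟨hyb, hy'⟩
  · exact (((hK.isCoveringClique e he).eq_or_adj x hx y hy hxy).resolve_right hadj).symm.trans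
      (((hK.isCoveringClique e' he').eq_or_adj x hx' y hy' hxy).resolve_right hadj)

/-- The pairs of points that lie together in one of the cliques `K e`, `e ∈ E`. -/
def cliqueEdges (K : Sym2 V → Finset V) (E : Finset (Sym2 V)) : Set (Sym2 V) :=
  {a | ∃ e ∈ E, a ∈ (K e).sym2}

omit [DecidableEq V] in
lemma mk_mem_cliqueEdges {x y : V} : s(x, y) ∈ cliqueEdges K E ↔ ∃ e ∈ E, x ∈ K e ∧ y ∈ K e := by
  simp [cliqueEdges]

/-- The cliques `K e`, `e ∈ E`, together with what these cliques leave of the blocks of `R`. -/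
def pieces (G : SimpleGraph V) (R : Finset (Finset V)) (K : Sym2 V → Finset V)
    (E : Finset (Sym2 V)) : Set G.Subgraph :=
  (fun e ↦ (⊤ : G.Subgraph).induce (K e)) '' E ∪
    (fun b : Finset V ↦ ((⊤ : G.Subgraph).induce b).deleteEdges (cliqueEdges K E)) '' R

lemma IsCliqueSystem.cliqueEdges_inter_edgeSet_induce (hK : IsCliqueSystem k R K E)
    (hRG : blockGraph R ≤ G) {b : Finset V} (hb : b ∈ R) {u v : V} (hu : u ∈ b) (hv : v ∈ b)
    (huv : u ≠ v) (hmem : s(u, v) ∈ cliqueEdges K E) :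
    ((⊤ : G.Subgraph).induce b).edgeSet ∩ cliqueEdges K E = {s(u, v)} := by
  obtain ⟨e, he, hue, hve⟩ := mk_mem_cliqueEdges.1 hmem
  refine (Set.subset_singleton_iff.2 fun a ↦ a.ind fun x y ⟨hxy, hxyK⟩ ↦ ?_).antisymm
    (Set.singleton_subset_iff.2 ⟨⟨hu, hv, hRG ⟨huv, b, hb, hu, hv⟩⟩, hmem⟩)
  obtain ⟨hx, hy, hadj⟩ := hxy
  obtain ⟨e', he', hxe, hye⟩ := mk_mem_cliqueEdges.1 hxyK
  obtain rfl := hK.eq_of_mem_block he he' hb huv hadj.ne ⟨hu, hue⟩ ⟨hv, hve⟩ ⟨hx, hxe⟩ ⟨hy, hye⟩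
  have hpair : {u, v} = b ∩ K e := by
    refine eq_of_subset_of_card_le (by simp [insert_subset_iff, *]) ?_
    rw [card_pair huv]
    exact (hK.isCoveringClique e he).card_inter_le b hb
  have hx' : x ∈ ({u, v} : Finset V) := hpair ▸ mem_inter.2 ⟨hx, hxe⟩
  have hy' : y ∈ ({u, v} : Finset V) := hpair ▸ mem_inter.2 ⟨hy, hye⟩
  have hne : x ≠ y := hadj.ne
  simp only [mem_insert, mem_singleton] at hx' hy'
  grind

lemma IsCliqueSystem.isCopy_deleteEdges_cliqueEdges (hK : IsCliqueSystem k R K E)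
    (hR : IsPacking m R) (hRG : blockGraph R ≤ G) {b : Finset V} (hb : b ∈ R) {i j : Fin m}
    (hij : i ≠ j) :
    (((⊤ : G.Subgraph).induce b).deleteEdges (cliqueEdges K E)).IsCopy (⊤ : SimpleGraph (Fin m)) ∨
      (((⊤ : G.Subgraph).induce b).deleteEdges (cliqueEdges K E)).IsCopy
        ((⊤ : SimpleGraph (Fin m)).deleteEdges {s(i, j)}) := by
  have hclique : G.IsClique b := fun x hx y hy hxy ↦ hRG ⟨hxy, b, hb, hx, hy⟩
  rw [← SimpleGraph.Subgraph.deleteEdges_inter_edgeSet_left_eq]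
  rcases Set.eq_empty_or_nonempty (((⊤ : G.Subgraph).induce b).edgeSet ∩ cliqueEdges K E) with
    hempty | ⟨⟨u, v⟩, huv, hmem⟩
  · rw [hempty, SimpleGraph.Subgraph.deleteEdges_empty_eq]
    exact .inl (isCopy_induce_of_isClique hclique (hR.card_eq b hb))
  · obtain ⟨hu, hv, hadj⟩ := huv
    rw [hK.cliqueEdges_inter_edgeSet_induce hRG hb hu hv hadj.ne hmem]
    exact .inr (isCopy_deleteEdges_of_isClique hclique (hR.card_eq b hb) hu hv hadj.ne hij)

lemma IsCliqueSystem.existsUnique_mem_pieces (hK : IsCliqueSystem k R K E) (hR : IsPacking m R)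
    (hE : (E : Set (Sym2 V)) = (G \ blockGraph R).edgeSet) {e : Sym2 V} (he : e ∈ G.edgeSet) :
    ∃! c, c ∈ pieces G R K E ∧ e ∈ c.edgeSet := by
  induction e with | _ x y
  have hxy : x ≠ y := G.ne_of_adj he
  by_cases hmem : s(x, y) ∈ cliqueEdges K E
  · obtain ⟨e, he', hxe, hye⟩ := mk_mem_cliqueEdges.1 hmem
    refine ⟨_, ⟨.inl ⟨e, he', rfl⟩, hxe, hye, he⟩, ?_⟩
    rintro _ ⟨⟨e', he'', rfl⟩ | ⟨b, -, rfl⟩, hc⟩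
    · obtain ⟨hxe', hye', -⟩ := hc
      rw [hK.eq_of_mem he' he'' hxy hxe hye hxe' hye']
    · exact absurd hmem hc.2
  · have hadj : (blockGraph R).Adj x y := by
      by_contra hadj
      have hxyE : s(x, y) ∈ E := by
        rw [← mem_coe, hE]
        exact ⟨he, hadj⟩
      have hcover := (hK.isCoveringClique _ hxyE).mem
      exact hmem (mk_mem_cliqueEdges.2
        ⟨_, hxyE, hcover x (Sym2.mem_mk_left x y), hcover y (Sym2.mem_mk_right x y)⟩)
    obtain ⟨-, b, hb, hxb, hyb⟩ := hadj
    refine ⟨_, ⟨.inr ⟨b, hb, rfl⟩, ⟨hxb, hyb, he⟩, hmem⟩, ?_⟩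
    rintro _ ⟨⟨e', he', rfl⟩ | ⟨b', hb', rfl⟩, hc⟩
    · exact absurd (mk_mem_cliqueEdges.2 ⟨e', he', hc.1, hc.2.1⟩) hmem
    · rw [hR.eq_of_mem b hb b' hb' x y hxy hxb hyb hc.1.1 hc.1.2.1]

/-- An `F_k`-decomposition of `G`, where `F_k = {K_k, K_{2k-1}, K_{2k-1}⁻}`. The removed edge of
`K_{2k-1}⁻` joins the first two vertices, which exist because `2 ≤ k`. -/
def IsFkDecomposition (hk : 2 ≤ k) (L : Set G.Subgraph) : Prop :=
  (∀ c ∈ L, c.IsCopy (⊤ : SimpleGraph (Fin k)) ∨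
    c.IsCopy (⊤ : SimpleGraph (Fin (2 * k - 1))) ∨
    c.IsCopy ((⊤ : SimpleGraph (Fin (2 * k - 1))).deleteEdges
      {s((⟨0, by omega⟩ : Fin (2 * k - 1)), (⟨1, by omega⟩ : Fin (2 * k - 1)))})) ∧
  ∀ e ∈ G.edgeSet, ∃! c, c ∈ L ∧ e ∈ c.edgeSet

theorem IsCliqueSystem.isFkDecomposition_pieces (hk : 2 ≤ k) (hK : IsCliqueSystem k R K E)
    (hR : IsPacking (2 * k - 1) R) (hRG : blockGraph R ≤ G)
    (hE : (E : Set (Sym2 V)) = (G \ blockGraph R).edgeSet) :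
    IsFkDecomposition hk (pieces G R K E) := by
  refine ⟨?_, fun e he ↦ hK.existsUnique_mem_pieces hR hE he⟩
  have hEG : (E : Set (Sym2 V)) ⊆ G.edgeSet := hE ▸ SimpleGraph.edgeSet_mono sdiff_le
  rintro _ (⟨e, he, rfl⟩ | ⟨b, hb, rfl⟩)
  · exact .inl (isCopy_induce_of_isClique (hK.isClique hRG hEG he)
      (hK.isCoveringClique e he).card_eq)
  · exact .inr (hK.isCopy_deleteEdges_cliqueEdges hR hRG hb (by simp))

end Decomposition

section MinDegree

variable {V : Type*} [Fintype V] [DecidableEq V] {G : SimpleGraph V} [DecidableRel G.Adj]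

lemma mul_card_compl_neighborFinset_le {N : ℕ} (hN : 0 < N) {v : V}
    (h : (Fintype.card V : ℝ) * (1 - 1 / N) ≤ (G.neighborSet v).ncard) :
    N * #(G.neighborFinset v)ᶜ ≤ Fintype.card V := by
  rw [Set.ncard_eq_toFinset_card', ← SimpleGraph.neighborFinset] at h
  have hcard : (#(G.neighborFinset v) : ℝ) + #(G.neighborFinset v)ᶜ = Fintype.card V :=
    mod_cast card_add_card_compl (G.neighborFinset v)
  have hle : (#(G.neighborFinset v)ᶜ : ℝ) ≤ Fintype.card V / N := by
    rw [mul_sub, mul_one, mul_one_div] at h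
    linarith
  rw [le_div_iff₀' (mod_cast hN)] at hle
  exact_mod_cast hle

end MinDegree

theorem Fk_decomposition_of_min_degree_general {k : ℕ} (hk : 2 ≤ k) :
    ∃ n₀ : ℕ, ∀ (V : Type u) [Fintype V], n₀ ≤ Fintype.card V → ∀ G : SimpleGraph V,
      (∀ v, (Fintype.card V : ℝ) * (1 - 1 / (9 * (k : ℝ) ^ 10)) ≤ (G.neighborSet v).ncard) →
      ∃ L : Set G.Subgraph, IsFkDecomposition hk L := by
  classical
  obtain ⟨n₀, h⟩ := exists_isPacking_isCliqueSystem.{u} hk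
  refine ⟨n₀, fun V _ hV G hG ↦ ?_⟩
  have hdeg : ∀ v, 9 * k ^ 10 * #(G.neighborFinset v)ᶜ ≤ Fintype.card V := fun v ↦
    mul_card_compl_neighborFinset_le (by positivity) (by exact_mod_cast hG v)
  obtain ⟨R, K, hR, hRG, hK⟩ := h V hV G hdeg
  exact ⟨_, hK.isFkDecomposition_pieces hk hR hRG (SimpleGraph.coe_edgeFinset _)⟩

/-- For every integer `k ≥ 3` and every `ε > 0` there exists `n₀` such that every graph `G` on
`n ≥ n₀` vertices with minimum degree at least `n·(1 - 1/(9k^10) + ε)` has an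
`F_k`-decomposition, where `F_k = {K_k, K_{2k-1}, K_{2k-1}⁻}`: a set `L` of subgraphs of `G`,
each isomorphic to `K_k`, `K_{2k-1}` or `K_{2k-1}` minus an edge, such that each edge of `G`
appears in precisely one element of `L`. -/
theorem Fk_decomposition_of_min_degree (k : ℕ) (hk : 3 ≤ k) (ε : ℝ) (hε : 0 < ε) :
    ∃ n₀ : ℕ, ∀ n : ℕ, n₀ ≤ n → ∀ G : SimpleGraph (Fin n),
      (∀ v, (n : ℝ) * (1 - 1 / (9 * (k : ℝ) ^ 10) + ε) ≤ ((G.neighborSet v).ncard : ℝ)) →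
      ∃ L : Set G.Subgraph,
        (∀ c ∈ L, c.IsCopy (⊤ : SimpleGraph (Fin k)) ∨
          c.IsCopy (⊤ : SimpleGraph (Fin (2 * k - 1))) ∨
          c.IsCopy ((⊤ : SimpleGraph (Fin (2 * k - 1))).deleteEdges
            {s((⟨0, by omega⟩ : Fin (2 * k - 1)), (⟨1, by omega⟩ : Fin (2 * k - 1)))})) ∧
        ∀ e ∈ G.edgeSet, ∃! c, c ∈ L ∧ e ∈ c.edgeSet := by
  obtain ⟨n₀, h⟩ := Fk_decomposition_of_min_degree_general (k := k) (by omega)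
  refine ⟨n₀, fun n hn G hG ↦ h (Fin n) (by simpa using hn) G fun v ↦ le_trans ?_ (hG v)⟩
  rw [Fintype.card_fin]
  gcongr
  linarith
end

section
/- For every integer t > 2 there exists N = N(t) such that for all n > N with n ≡ 1 (mod t(t-1)) or n ≡ t (mod t(t-1)), the complete graph K_n has a K_t-decomposition, i.e. its edge set can be partitioned into copies of K_t. (Wilson's theorem for complete graphs.) -/
/-!
Let `R` be the set of all `r` for which the complete multipartite graph with `r` groups of size
`k - 1` decomposes into `k`-cliques. Adding a point at infinity to every group turns such a
decomposition into one of the complete graph on `r * (k - 1) + 1` vertices, and deleting a vertex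
of the latter goes back, so `R` must be shown to contain all large `r ≡ 0, 1` modulo `k`.

Transversal designs with any given number of groups exist for all large group sizes. They show that
`r ∈ R` implies `k * r, k * r + 1 ∈ R` if `r` is large, and by truncation of one group that
`b * m + x ∈ R` if `b, b + 1, m, x ∈ R`, `x ≤ m` and `m` is large. With the first rule `R` contains
numbers with arbitrary digits `0, 1` to base `k` after a fixed beginning, hence numbers in the
residue classes that are needed, and with the second rule these spread over complete intervals.

To start, `R` needs arbitrarily large elements. For a prime `p = k * (k - 1) * s + 1` with `s` odd,
colour the pair `(x, y)` of elements of `ZMod p` by `(y - x) ^ s`, a root of unity of order dividing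
`k * (k - 1)`. This colouring is so uniform that for large `p` one finds `k` points greedily for
which the colours of all pairs `i < j` are prescribed. If all `k * (k - 1)` ordered pairs
have different colours, the multiples of this `k`-set by the `s`-th roots of unity form a difference
family.
-/

open Filter

/-! ### Transversal designs -/

section TransversalDesign

variable {ι κ S T M A : Type*}

/-- A set of blocks forming a transversal design: the groups are copies of `S` indexed by `ι`, and a
block is the function `ι → S` listing its point in each group. -/
def IsTransversalDesign (B : Set (ι → S)) : Prop :=
  ∀ ⦃i j⦄, i ≠ j → ∀ x y, ∃! b, b ∈ B ∧ b i = x ∧ b j = y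

variable (ι S) in
/-- There is a transversal design with groups of type `S` indexed by `ι`. -/
def HasTransversalDesign : Prop :=
  ∃ B : Set (ι → S), IsTransversalDesign B

theorem IsTransversalDesign.map {B : Set (ι → S)} (hB : IsTransversalDesign B) (f : κ ↪ ι)
    (e : κ → S ≃ T) : IsTransversalDesign ((fun b i => e i (b (f i))) '' B) := by
  intro i j hij x y
  obtain ⟨b, ⟨hb, hx, hy⟩, hu⟩ := hB (f.injective.ne hij) ((e i).symm x) ((e j).symm y)
  refine ⟨_, ⟨⟨b, hb, rfl⟩, by simp [hx], by simp [hy]⟩, ?_⟩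
  rintro _ ⟨⟨c, hc, rfl⟩, rfl, rfl⟩
  rw [hu c ⟨hc, by simp, by simp⟩]

theorem HasTransversalDesign.map (h : HasTransversalDesign ι S) (f : κ ↪ ι) (e : S ≃ T) :
    HasTransversalDesign κ T :=
  let ⟨_, hB⟩ := h
  ⟨_, hB.map f fun _ => e⟩

theorem HasTransversalDesign.comp (h : HasTransversalDesign ι S) (f : κ ↪ ι) :
    HasTransversalDesign κ S :=
  h.map f (Equiv.refl S)

theorem HasTransversalDesign.exists_const_mem (h : HasTransversalDesign ι S) (s : S) :
    ∃ B : Set (ι → S), IsTransversalDesign B ∧ (fun _ => s) ∈ B := by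
  classical
  cases subsingleton_or_nontrivial ι
  · exact ⟨Set.univ, fun i j hij => (hij (Subsingleton.elim i j)).elim, trivial⟩
  obtain ⟨B, hB⟩ := h
  obtain ⟨i, j, hij⟩ := exists_pair_ne ι
  obtain ⟨b, ⟨hb, -⟩, -⟩ := hB hij s s
  exact ⟨_, hB.map (Function.Embedding.refl ι) fun i => Equiv.swap (b i) s,
    b, hb, funext fun i => by simp⟩

theorem HasTransversalDesign.of_isUnit_sub [CommRing A] (α : ι → A)
    (hα : ∀ i j, i ≠ j → IsUnit (α i - α j)) : HasTransversalDesign ι A := by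
  refine ⟨Set.range fun (p : A × A) i => p.1 + α i * p.2, fun i j hij x y => ?_⟩
  obtain ⟨v, hv⟩ := (hα i j hij).exists_right_inv
  refine ⟨_, ⟨⟨(x - α i * (v * (x - y)), v * (x - y)), rfl⟩, by ring, ?_⟩, ?_⟩
  · linear_combination -(x - y) * hv
  · rintro _ ⟨⟨⟨a, m⟩, rfl⟩, rfl, rfl⟩
    have hm : v * (a + α i * m - (a + α j * m)) = m := by linear_combination m * hv
    funext l
    simp only [hm]
    ring

theorem HasTransversalDesign.of_field (F : Type*) [Field F] : HasTransversalDesign F F :=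
  .of_isUnit_sub id fun _ _ h => (sub_ne_zero.2 h).isUnit

theorem HasTransversalDesign.of_prime_pow {p e K : ℕ} (hp : p.Prime) (he : e ≠ 0)
    (hK : K ≤ p ^ e) : HasTransversalDesign (Fin K) (Fin (p ^ e)) := by
  have : Fact p.Prime := ⟨hp⟩
  let φ : GaloisField p e ≃ Fin (p ^ e) := Finite.equivFinOfCardEq (GaloisField.card p e he)
  exact (of_field (GaloisField p e)).map ((Fin.castLEEmb hK).trans φ.symm.toEmbedding) φ

theorem HasTransversalDesign.of_coprime_factorial {K n : ℕ} (hn : n.Coprime K.factorial) :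
    HasTransversalDesign (Fin (K + 1)) (Fin n) := by
  rcases n.eq_zero_or_pos with rfl | hpos
  · exact ⟨∅, fun i j _ x => x.elim0⟩
  have : NeZero n := ⟨hpos.ne'⟩
  refine (of_isUnit_sub (fun i : Fin (K + 1) => ((i : ℕ) : ZMod n)) ?_).map
    (Function.Embedding.refl _) (Fintype.equivFinOfCardEq (ZMod.card n))
  suffices H : ∀ i j : Fin (K + 1), i < j → IsUnit (((j : ℕ) : ZMod n) - (i : ℕ)) from
    fun i j hij => hij.lt_or_gt.elim (fun h => by simpa using (H i j h).neg) (H j i)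
  intro i j hij
  rw [← Nat.cast_sub hij.le, ZMod.isUnit_iff_coprime]
  exact (hn.coprime_dvd_right (Nat.dvd_factorial (by omega) (by omega))).symm

theorem HasTransversalDesign.subtype {p : S → Prop} (B : Set (ι → S)) (hp : ∀ b ∈ B, ∀ i, p (b i))
    (hB : ∀ ⦃i j⦄, i ≠ j → ∀ x y, p x → p y → ∃! b, b ∈ B ∧ b i = x ∧ b j = y) :
    HasTransversalDesign ι {x // p x} := by
  refine ⟨{f | (fun i => (f i : S)) ∈ B}, fun i j hij x y => ?_⟩
  obtain ⟨b, ⟨hb, hx, hy⟩, hu⟩ := hB hij x y x.2 y.2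
  refine ⟨fun i => ⟨b i, hp b hb i⟩, ⟨hb, Subtype.ext hx, Subtype.ext hy⟩, ?_⟩
  rintro f ⟨hf, rfl, rfl⟩
  exact funext fun i => Subtype.ext (congrFun (hu _ ⟨hf, rfl, rfl⟩) i)

/-- The points of a transversal design with groups `β` indexed by `Option α` when the last group is
truncated to `U`. -/
abbrev Truncated (α : Type*) {β : Type*} (U : Set β) : Type _ :=
  {p : Option α × β // p.1 = none → p.2 ∈ U}

/-- The points of a truncated design are those of the full groups and those of the last group. -/
def Truncated.equivSum (α : Type*) {β : Type*} (U : Set β) : Truncated α U ≃ α × β ⊕ U where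
  toFun
    | ⟨(some a, b), _⟩ => .inl (a, b)
    | ⟨(none, b), h⟩ => .inr ⟨b, h rfl⟩
  invFun
    | .inl (a, b) => ⟨(some a, b), nofun⟩
    | .inr b => ⟨(none, b), fun _ => b.2⟩
  left_inv := by rintro ⟨⟨_ | a, b⟩, h⟩ <;> rfl
  right_inv := by rintro (⟨a, b⟩ | b) <;> rfl

/-- A truncated design with `a` full groups of size `m` and a last group of size `u` has `a * m + u`
points. -/
noncomputable def Truncated.equivFin (a : ℕ) {m u : ℕ} (h : u ≤ m) :
    Truncated (Fin a) (Set.range (Fin.castLE h)) ≃ Fin (a * m + u) :=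
  (equivSum _ _).trans <|
    (finProdFinEquiv.sumCongr (Equiv.ofInjective _ (Fin.castLE_injective h)).symm).trans
      finSumFinEquiv

/-- `Z` decides whether the points `none` are present: the blocks form a transversal design with
groups `M` if they are absent, and one with groups `Option M` from which the block of all `none`
is removed if they are present. -/
theorem exists_incomplete_transversalDesign (h₁ : HasTransversalDesign ι M)
    (h₂ : HasTransversalDesign ι (Option M)) (Z : Prop) :
    ∃ C : Set (ι → Option M), (∀ c ∈ C, ∀ i, c i = none → Z ∧ ∀ j, c j = none → i = j) ∧
      ∀ ⦃i j⦄, i ≠ j → ∀ x y, (x = none → Z) → (y = none → Z) → ¬(x = none ∧ y = none) →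
        ∃! c, c ∈ C ∧ c i = x ∧ c j = y := by
  by_cases hZ : Z
  · obtain ⟨B, hB, hnone⟩ := h₂.exists_const_mem none
    refine ⟨B \ {fun _ => none}, fun c hc i hi => ⟨hZ, fun j hj => ?_⟩, ?_⟩
    · by_contra hij
      exact hc.2 ((hB hij none none).unique ⟨hc.1, hi, hj⟩ ⟨hnone, rfl, rfl⟩)
    · rintro i j hij x y - - hxy
      obtain ⟨c, ⟨hc, rfl, rfl⟩, hu⟩ := hB hij x y
      exact ⟨c, ⟨⟨hc, by rintro rfl; exact hxy ⟨rfl, rfl⟩⟩, rfl, rfl⟩,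
        fun d hd => hu d ⟨hd.1.1, hd.2⟩⟩
  · obtain ⟨B, hB⟩ := h₁
    refine ⟨(fun b i => some (b i)) '' B, ?_, ?_⟩
    · rintro _ ⟨b, -, rfl⟩ i hi
      cases hi
    · rintro i j hij (_ | x) (_ | y) hx hy -
      · exact (hZ (hx rfl)).elim
      · exact (hZ (hx rfl)).elim
      · exact (hZ (hy rfl)).elim
      obtain ⟨b, ⟨hb, rfl, rfl⟩, hu⟩ := hB hij x y
      refine ⟨_, ⟨⟨b, hb, rfl⟩, rfl, rfl⟩, ?_⟩
      rintro _ ⟨⟨b', hb', rfl⟩, h, h'⟩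
      rw [hu b' ⟨hb', Option.some.inj h, Option.some.inj h'⟩]

/-- Wilson's composition. Every block `b` of the design on `Option ι` carries an incomplete design
whose point `none`, present if `b none` survives the truncation, stands for `b none`; the pairs
inside the truncated group are covered by the design on `U`. -/
theorem HasTransversalDesign.truncated {U : Set T} (h₁ : HasTransversalDesign ι M)
    (h₂ : HasTransversalDesign ι (Option M)) (h₃ : HasTransversalDesign (Option ι) T)
    (h₄ : HasTransversalDesign ι U) : HasTransversalDesign ι (Truncated M U) := by
  obtain ⟨B, hB⟩ := h₃
  obtain ⟨D, hD⟩ := h₄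
  choose C hC hCu using fun b : Option ι → T =>
    exists_incomplete_transversalDesign h₁ h₂ (b none ∈ U)
  let γ (o : Option M) (i : ι) : Option ι := o.map fun _ => i
  have γ_ne {o o' : Option M} {i j : ι} (hij : i ≠ j) (h : ¬(o = none ∧ o' = none)) :
      γ o i ≠ γ o' j := by
    rcases o with _ | o <;> rcases o' with _ | o' <;> simp_all [γ]
  refine subtype ({f | ∃ b ∈ B, ∃ c ∈ C b, (fun i => (c i, b (γ (c i) i))) = f} ∪
    (fun d i => (none, (d i : T))) '' D) ?_ ?_
  · rintro _ (⟨b, -, c, hc, rfl⟩ | ⟨d, -, rfl⟩) i hi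
    · dsimp only at hi ⊢
      rw [hi]
      exact (hC b c hc i hi).1
    · exact (d i).2
  rintro i j hij ⟨o, x⟩ ⟨o', y⟩ hx hy
  by_cases hnone : o = none ∧ o' = none
  · obtain ⟨rfl, rfl⟩ := hnone
    obtain ⟨d, ⟨hd, hdi, hdj⟩, hu⟩ := hD hij ⟨x, hx rfl⟩ ⟨y, hy rfl⟩
    refine ⟨_, ⟨.inr ⟨d, hd, rfl⟩, by simp [hdi], by simp [hdj]⟩, ?_⟩
    rintro _ ⟨⟨b, -, c, hc, rfl⟩ | ⟨d', hd', rfl⟩, hi, hj⟩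
    · exact (hij ((hC b c hc i (congrArg Prod.fst hi)).2 j (congrArg Prod.fst hj))).elim
    · rw [hu d' ⟨hd', Subtype.ext (congrArg Prod.snd hi), Subtype.ext (congrArg Prod.snd hj)⟩]
  · obtain ⟨b, ⟨hb, rfl, rfl⟩, hbu⟩ := hB (γ_ne hij hnone) x y
    obtain ⟨c, ⟨hc, rfl, rfl⟩, hcu⟩ :=
      hCu b hij o o' (by rintro rfl; exact hx rfl) (by rintro rfl; exact hy rfl) hnone
    refine ⟨_, ⟨.inl ⟨b, hb, c, hc, rfl⟩, rfl, rfl⟩, ?_⟩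
    rintro _ ⟨⟨b', hb', c', hc', rfl⟩ | ⟨d, -, rfl⟩, hi, hj⟩
    · obtain ⟨hci, hbi⟩ := Prod.mk.inj hi
      obtain ⟨hcj, hbj⟩ := Prod.mk.inj hj
      obtain rfl : b' = b := hbu b' ⟨hb', hci ▸ hbi, hcj ▸ hbj⟩
      rw [hcu c' ⟨hc', hci, hcj⟩]
    · exact (hnone ⟨(congrArg Prod.fst hi).symm, (congrArg Prod.fst hj).symm⟩).elim

theorem HasTransversalDesign.mul_add {K m t u : ℕ} (hut : u ≤ t)
    (h₁ : HasTransversalDesign (Fin K) (Fin m)) (h₂ : HasTransversalDesign (Fin K) (Fin (m + 1)))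
    (h₃ : HasTransversalDesign (Fin (K + 1)) (Fin t)) (h₄ : HasTransversalDesign (Fin K) (Fin u)) :
    HasTransversalDesign (Fin K) (Fin (m * t + u)) :=
  have id_emb := Function.Embedding.refl (Fin K)
  (truncated h₁ (h₂.map id_emb (finSuccEquiv m)) (h₃.comp (finSuccEquiv K).symm.toEmbedding)
    (h₄.map id_emb (Equiv.ofInjective _ (Fin.castLE_injective hut)))).map id_emb
      (Truncated.equivFin m hut)

end TransversalDesign

theorem pow_factorial_modEq_one {p K a : ℕ} (hp : p.Prime) (hpK : p ≤ K) (ha : ¬p ∣ a) :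
    a ^ K.factorial ≡ 1 [MOD p] := by
  obtain ⟨c, hc⟩ := Nat.dvd_factorial (Nat.sub_pos_of_lt hp.one_lt) ((Nat.sub_le p 1).trans hpK)
  have h := (Nat.ModEq.pow_totient ((Nat.Prime.coprime_iff_not_dvd hp).2 ha).symm).pow c
  rwa [Nat.totient_prime hp, ← pow_mul, ← hc, one_pow] at h

theorem not_dvd_two_pow_factorial_add_one {p K : ℕ} (hp : p.Prime) (hpK : p ≤ K) :
    ¬p ∣ 2 ^ K.factorial + 1 := by
  intro h
  by_cases hp2 : p ∣ 2
  · exact hp.one_lt.ne' (Nat.dvd_one.1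
      ((Nat.dvd_add_right (dvd_pow hp2 K.factorial_ne_zero)).1 h))
  · exact hp2 ((((pow_factorial_modEq_one hp hpK hp2).add_right 1).dvd_iff dvd_rfl).1 h)

theorem not_dvd_two_pow_factorial_succ_sub_one {p K : ℕ} (hp : p.Prime) (hpK : p ≤ K) :
    ¬p ∣ 2 ^ (K.factorial + 1) - 1 := by
  intro h
  have hmod : 1 ≡ 2 ^ (K.factorial + 1) [MOD p] :=
    (Nat.modEq_iff_dvd' Nat.one_le_two_pow).2 h
  by_cases hp2 : p ∣ 2
  · exact hp.one_lt.ne' (Nat.dvd_one.1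
      ((hmod.dvd_iff dvd_rfl).2 (dvd_pow hp2 (Nat.succ_ne_zero _))))
  · have h₂ : 1 ≡ 1 + 1 [MOD p] :=
      hmod.trans (by simpa [pow_succ] using (pow_factorial_modEq_one hp hpK hp2).mul_right 2)
    exact hp.one_lt.ne' (Nat.dvd_one.1
      (Nat.modEq_zero_iff_dvd.1 (Nat.ModEq.add_left_cancel' 1 h₂.symm)))

theorem coprime_factorial_of_forall_prime {K n : ℕ} (h : ∀ p, p.Prime → p ≤ K → ¬p ∣ n) :
    n.Coprime K.factorial :=
  .symm <| Nat.coprime_of_dvd fun p hp hpK => h p hp (hp.dvd_factorial.1 hpK)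

/-- The solutions `t` are congruent to `1` or `2` modulo each prime `p ≤ K`, according to whether
`p` divides `m - n`. -/
theorem exists_forall_modEq_factorial_coprime {K m n : ℕ} (hmn : Odd (m + n))
    (hm : ∀ p, p.Prime → p ≤ K → p ≠ 2 → ¬p ∣ m) :
    ∃ t₀ : ℕ, ∀ t, t ≡ t₀ [MOD K.factorial] → t.Coprime K.factorial ∧
      ∀ u, n = m * t + u → u.Coprime K.factorial := by
  classical
  let Q := ∏ p ∈ Finset.range (K + 1) with p.Prime ∧ ¬m ≡ n [MOD p], p
  have dvd_Q {p : ℕ} (hp : p.Prime) (hpK : p ≤ K) : p ∣ Q ↔ ¬m ≡ n [MOD p] := by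
    refine ⟨fun h => ?_, fun h => Finset.dvd_prod_of_mem _ (by simp [hp, h, hpK])⟩
    obtain ⟨q, hq, hpq⟩ := (hp.prime.dvd_finsetProd_iff _).1 h
    obtain ⟨-, hq, hqmn⟩ := Finset.mem_filter.1 hq
    rwa [(Nat.prime_dvd_prime_iff_eq hp hq).1 hpq]
  have two_dvd_Q (hK : 2 ≤ K) : 2 ∣ Q := by
    rw [dvd_Q Nat.prime_two hK, Nat.ModEq]
    have := Nat.odd_iff.1 hmn
    omega
  refine ⟨1 + Q ^ K.factorial, fun t ht => ?_⟩
  have key {p : ℕ} (hp : p.Prime) (hpK : p ≤ K) :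
      (t ≡ 1 [MOD p] ∧ ¬m ≡ n [MOD p]) ∨ (p ≠ 2 ∧ t ≡ 2 [MOD p] ∧ m ≡ n [MOD p]) := by
    replace ht := ht.of_dvd (Nat.dvd_factorial hp.pos hpK)
    by_cases hpQ : p ∣ Q
    · refine .inl ⟨ht.trans ?_, (dvd_Q hp hpK).1 hpQ⟩
      simpa using ((Nat.modEq_zero_iff_dvd.2 (dvd_pow hpQ K.factorial_ne_zero)).add_left 1)
    · refine .inr ⟨?_, ht.trans ((pow_factorial_modEq_one hp hpK hpQ).add_left 1), ?_⟩
      · rintro rfl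
        exact hpQ (two_dvd_Q hpK)
      · exact not_not.1 (mt (dvd_Q hp hpK).2 hpQ)
  refine ⟨coprime_factorial_of_forall_prime fun p hp hpK hpt => ?_, ?_⟩
  · rcases key hp hpK with ⟨h, -⟩ | ⟨h2, h, -⟩
    · exact hp.one_lt.ne' (Nat.dvd_one.1 ((h.dvd_iff dvd_rfl).1 hpt))
    · exact h2 ((Nat.prime_dvd_prime_iff_eq hp Nat.prime_two).1 ((h.dvd_iff dvd_rfl).1 hpt))
  · rintro u rfl
    refine coprime_factorial_of_forall_prime fun p hp hpK hpu => ?_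
    have hu : m * t + u ≡ m * t [MOD p] :=
      (Nat.modEq_zero_iff_dvd.2 hpu).add_left _
    rcases key hp hpK with ⟨h, h'⟩ | ⟨h2, h, h'⟩
    · exact h' (by simpa using (hu.trans (h.mul_left m)).symm)
    · have : m + 0 ≡ m + m [MOD p] := by
        simpa [mul_two] using h'.trans (hu.trans (h.mul_left m))
      exact hm p hp hpK h2 (Nat.modEq_zero_iff_dvd.1 (Nat.ModEq.add_left_cancel' m this).symm)

/-- `n = m * t + u` for some `u ≤ t` in the residue class of `t₀` as soon as `n` is large, since
the admissible `t` range from `n / (m + 1)` to `n / m`. -/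
theorem eventually_exists_modEq_mul_add {m L : ℕ} (hm : 0 < m) (hL : 0 < L) :
    ∀ᶠ n in atTop, ∀ t₀, ∃ t u, t ≡ t₀ [MOD L] ∧ u ≤ t ∧ n = m * t + u := by
  refine eventually_atTop.2 ⟨(m + 1) * L * m, fun n hn t₀ => ?_⟩
  have hq : (m + 1) * L ≤ n / m := (Nat.le_div_iff_mul_le hm).2 hn
  have hr : t₀ % L < L := Nat.mod_lt _ hL
  set q := n / m
  set t := t₀ % L + L * ((q - t₀ % L) / L) with ht
  have htq : t ≤ q ∧ q < t + L := by
    have := Nat.div_add_mod (q - t₀ % L) L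
    have := Nat.mod_lt (q - t₀ % L) hL
    have : L ≤ q := by nlinarith
    omega
  have hmt : m * t ≤ n := (Nat.mul_le_mul_left m htq.1).trans (Nat.mul_div_le n m)
  have hnt : n ≤ m * (t + L) :=
    (Nat.lt_mul_div_succ n hm).le.trans (Nat.mul_le_mul_left m htq.2)
  refine ⟨t, n - m * t, by simp [ht, Nat.ModEq], ?_, by omega⟩
  rw [tsub_le_iff_left]
  nlinarith

namespace HasTransversalDesign

theorem eventually_of_succ {K m : ℕ} (hm0 : 0 < m)
    (hm : ∀ p, p.Prime → p ≤ K → p ≠ 2 → ¬p ∣ m) (h₁ : HasTransversalDesign (Fin K) (Fin m))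
    (h₂ : HasTransversalDesign (Fin K) (Fin (m + 1))) :
    ∀ᶠ n in atTop, Odd (m + n) → HasTransversalDesign (Fin K) (Fin n) := by
  filter_upwards [eventually_exists_modEq_mul_add hm0 K.factorial_pos] with n hn hmn
  obtain ⟨t₀, ht₀⟩ := exists_forall_modEq_factorial_coprime hmn hm
  obtain ⟨t, u, ht, hut, rfl⟩ := hn t₀
  obtain ⟨htK, huK⟩ := ht₀ t ht
  exact mul_add hut h₁ h₂ (of_coprime_factorial htK)
    ((of_coprime_factorial (huK u rfl)).comp Fin.castSuccEmb)

theorem of_forall_prime_not_dvd {K n : ℕ} (h : ∀ p, p.Prime → p ≤ K → ¬p ∣ n) :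
    HasTransversalDesign (Fin K) (Fin n) :=
  (of_coprime_factorial (coprime_factorial_of_forall_prime h)).comp Fin.castSuccEmb

/-- The theorem of Chowla, Erdős and Straus. Wilson's composition is applied to the pairs
`2 ^ K!, 2 ^ K! + 1` and `2 ^ (K! + 1) - 1, 2 ^ (K! + 1)`, of which the first members have
different parities. -/
theorem eventually (K : ℕ) : ∀ᶠ n in atTop, HasTransversalDesign (Fin K) (Fin n) := by
  have hK : K ≤ 2 ^ K.factorial := K.self_le_factorial.trans Nat.lt_two_pow_self.le
  have heven : Even (2 ^ K.factorial) := even_two.pow_of_ne_zero K.factorial_ne_zero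
  have hpow : 0 < 2 ^ (K.factorial + 1) := by positivity
  have hodd : Odd (2 ^ (K.factorial + 1) - 1) :=
    Nat.Even.sub_odd hpow (even_two.pow_of_ne_zero (Nat.succ_ne_zero _)) odd_one
  have odd_case := eventually_of_succ (K := K) (m := 2 ^ K.factorial) (by positivity)
    (fun p hp _ hp2 h => hp2 ((Nat.prime_dvd_prime_iff_eq hp Nat.prime_two).1
      (hp.dvd_of_dvd_pow h)))
    (of_prime_pow Nat.prime_two K.factorial_ne_zero hK)
    (of_forall_prime_not_dvd fun _ => not_dvd_two_pow_factorial_add_one)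
  have even_case := eventually_of_succ (K := K) hodd.pos
    (fun p hp hpK _ => not_dvd_two_pow_factorial_succ_sub_one hp hpK)
    (of_forall_prime_not_dvd fun _ => not_dvd_two_pow_factorial_succ_sub_one)
    (Nat.sub_add_cancel hpow ▸ of_prime_pow Nat.prime_two (Nat.succ_ne_zero _)
      (hK.trans (Nat.pow_le_pow_right two_pos (Nat.le_succ _))))
  filter_upwards [odd_case, even_case] with n h h'
  exact n.even_or_odd.elim (fun hn => h' (hodd.add_even hn)) fun hn => h (heven.add_odd hn)

end HasTransversalDesign

/-! ### Clique decompositions -/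

section CliqueDecomposition

variable {V W W' S S' ι : Type*} {G : SimpleGraph V} {k : ℕ}

/-- A decomposition of a graph into copies of the complete graph on `k` vertices, given by the
vertex sets of the copies. -/
structure IsCliqueDecomposition (G : SimpleGraph V) (k : ℕ) (B : Set (Finset V)) : Prop where
  isNClique : ∀ b ∈ B, G.IsNClique k b
  existsUnique : ∀ ⦃x y⦄, G.Adj x y → ∃! b, b ∈ B ∧ x ∈ b ∧ y ∈ b

/-- The graph has a decomposition into copies of the complete graph on `k` vertices. -/
def HasCliqueDecomposition (G : SimpleGraph V) (k : ℕ) : Prop :=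
  ∃ B, IsCliqueDecomposition G k B

theorem IsCliqueDecomposition.adj {B : Set (Finset V)} (hB : IsCliqueDecomposition G k B)
    {b : Finset V} (hb : b ∈ B) {x y : V} (hx : x ∈ b) (hy : y ∈ b) (hxy : x ≠ y) : G.Adj x y :=
  (hB.isNClique b hb).isClique hx hy hxy

namespace HasCliqueDecomposition

theorem of_partition {H : ι → SimpleGraph V} (hle : ∀ i, H i ≤ G)
    (hH : ∀ x y, G.Adj x y → ∃! i, (H i).Adj x y) (h : ∀ i, HasCliqueDecomposition (H i) k) :
    HasCliqueDecomposition G k := by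
  choose B hB using h
  refine ⟨⋃ i, B i, fun b hb => ?_, fun x y hxy => ?_⟩
  · obtain ⟨i, hb⟩ := Set.mem_iUnion.1 hb
    exact ((hB i).isNClique b hb).mono (hle i)
  · obtain ⟨i, hi, hiu⟩ := hH x y hxy
    obtain ⟨b, ⟨hb, hx, hy⟩, hu⟩ := (hB i).existsUnique hi
    refine ⟨b, ⟨Set.mem_iUnion.2 ⟨i, hb⟩, hx, hy⟩, ?_⟩
    rintro c ⟨hc, hxc, hyc⟩
    obtain ⟨j, hc⟩ := Set.mem_iUnion.1 hc
    obtain rfl : j = i := hiu j ((hB j).adj hc hxc hyc hxy.ne)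
    exact hu c ⟨hc, hxc, hyc⟩

theorem map (h : HasCliqueDecomposition G k) (f : V ↪ W) : HasCliqueDecomposition (G.map f) k := by
  obtain ⟨B, hB⟩ := h
  refine ⟨Finset.map f '' B, ?_, ?_⟩
  · rintro _ ⟨b, hb, rfl⟩
    exact (hB.isNClique b hb).map
  · rintro _ _ ⟨-, x, y, hxy, rfl, rfl⟩
    obtain ⟨b, ⟨hb, hx, hy⟩, hu⟩ := hB.existsUnique hxy
    refine ⟨_, ⟨⟨b, hb, rfl⟩, by simpa, by simpa⟩, ?_⟩
    rintro _ ⟨⟨c, hc, rfl⟩, hxc, hyc⟩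
    rw [hu c ⟨hc, by simpa using hxc, by simpa using hyc⟩]

theorem congr {H : SimpleGraph W} (h : HasCliqueDecomposition G k) (e : G ≃g H) :
    HasCliqueDecomposition H k := by
  convert h.map e.toEquiv.toEmbedding
  ext x y
  constructor
  · exact fun hxy => ⟨hxy.ne, e.symm x, e.symm y, e.symm.map_adj_iff.2 hxy, by simp, by simp⟩
  · rintro ⟨-, x, y, hxy, rfl, rfl⟩
    exact e.map_adj_iff.2 hxy

theorem top_of_card [Fintype V] (hV : Fintype.card V = k) :
    HasCliqueDecomposition (⊤ : SimpleGraph V) k :=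
  ⟨{Finset.univ}, by simp [SimpleGraph.isNClique_iff, hV, SimpleGraph.isClique_iff, Set.Pairwise],
    fun _ _ _ => ⟨Finset.univ, by simp, by simp⟩⟩

theorem of_embeddings [Fintype ι] {P : Type*} (φ : P → ι ↪ V)
    (hφ : ∀ p i j, i ≠ j → G.Adj (φ p i) (φ p j))
    (h : ∀ x y, G.Adj x y → ∃! p, x ∈ Set.range (φ p) ∧ y ∈ Set.range (φ p)) :
    HasCliqueDecomposition G (Fintype.card ι) := by
  refine ⟨Set.range fun p => Finset.univ.map (φ p), ?_, fun x y hxy => ?_⟩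
  · rintro _ ⟨p, rfl⟩
    refine ⟨?_, by simp⟩
    rintro _ hx _ hy hxy
    obtain ⟨i, rfl⟩ : _ ∈ Set.range (φ p) := by simpa using hx
    obtain ⟨j, rfl⟩ : _ ∈ Set.range (φ p) := by simpa using hy
    exact hφ p i j (ne_of_apply_ne _ hxy)
  · obtain ⟨p, ⟨hx, hy⟩, hu⟩ := h x y hxy
    refine ⟨_, ⟨⟨p, rfl⟩, by simpa using hx, by simpa using hy⟩, ?_⟩
    rintro _ ⟨⟨q, rfl⟩, hxq, hyq⟩
    rw [hu q ⟨by simpa using hxq, by simpa using hyq⟩]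

theorem exists_subgraphs (h : HasCliqueDecomposition G k) :
    ∃ L : Set G.Subgraph, (∀ c ∈ L, c.IsCopy (⊤ : SimpleGraph (Fin k))) ∧
      ∀ e ∈ G.edgeSet, ∃! c, c ∈ L ∧ e ∈ c.edgeSet := by
  obtain ⟨B, hB⟩ := h
  refine ⟨(fun b : Finset V => (⊤ : G.Subgraph).induce b) '' B, ?_, Sym2.ind fun x y hxy => ?_⟩
  · rintro _ ⟨b, hb, rfl⟩
    obtain ⟨hclique, hcard⟩ := hB.isNClique b hb
    rw [← SimpleGraph.induce_eq_top, SimpleGraph.induce_eq_coe_induce_top] at hclique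
    refine ⟨?_⟩
    rw [hclique]
    exact SimpleGraph.Iso.completeGraph (b.equivFinOfCardEq hcard)
  · obtain ⟨b, ⟨hb, hx, hy⟩, hu⟩ := hB.existsUnique hxy
    refine ⟨_, ⟨⟨b, hb, rfl⟩, by simp_all⟩, ?_⟩
    rintro _ ⟨⟨c, hc, rfl⟩, hxyc⟩
    rw [hu c ⟨hc, by simp_all⟩]

end HasCliqueDecomposition

/-! ### Group divisible designs -/

/-- There is a `k`-group divisible design with groups of type `S` indexed by `W`: a decomposition
into `k`-cliques of the complete multipartite graph on the points `W × S`. -/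
def HasGroupDivisibleDesign (k : ℕ) (W S : Type*) : Prop :=
  HasCliqueDecomposition ((⊤ : SimpleGraph W).comap (Prod.fst : W × S → W)) k

theorem HasTransversalDesign.hasGroupDivisibleDesign [Fintype ι] (h : HasTransversalDesign ι S) :
    HasGroupDivisibleDesign (Fintype.card ι) ι S := by
  obtain ⟨B, hB⟩ := h
  refine .of_embeddings (fun b : B => ⟨fun i => (i, b.1 i), fun i j h => congrArg Prod.fst h⟩)
    (fun _ _ _ hij => hij) ?_
  rintro ⟨i, x⟩ ⟨j, y⟩ hij
  obtain ⟨b, ⟨hb, hx, hy⟩, hu⟩ := hB hij x y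
  refine ⟨⟨b, hb⟩, ⟨⟨i, congrArg (Prod.mk i) hx⟩, j, congrArg (Prod.mk j) hy⟩, ?_⟩
  rintro ⟨c, hc⟩ ⟨⟨_, hi⟩, _, hj⟩
  obtain ⟨rfl, hx'⟩ := Prod.mk.inj hi
  obtain ⟨rfl, hy'⟩ := Prod.mk.inj hj
  exact Subtype.ext (hu c ⟨hc, hx', hy'⟩)

namespace HasGroupDivisibleDesign

theorem congr (h : HasGroupDivisibleDesign k W S) (e : W ≃ W') (f : S ≃ S') :
    HasGroupDivisibleDesign k W' S' :=
  HasCliqueDecomposition.congr h ⟨e.prodCongr f, by simp⟩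

theorem of_subsingleton [Subsingleton W] : HasGroupDivisibleDesign k W S :=
  ⟨∅, by simp, fun x y hxy => (hxy (Subsingleton.elim x.1 y.1)).elim⟩

theorem fill_groups {G : SimpleGraph (W × S)} (hG : ∀ p q, p.1 ≠ q.1 → G.Adj p q)
    (h : HasGroupDivisibleDesign k W S)
    (hfill : ∀ w, HasCliqueDecomposition (G.comap (Prod.mk w)) k) :
    HasCliqueDecomposition G k := by
  refine .of_partition (H := fun o : Option W => o.elim ((⊤ : SimpleGraph W).comap Prod.fst)
    fun w => (G.comap (Prod.mk w)).map (Function.Embedding.sectR w S)) ?_ ?_ ?_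
  · rintro (_ | w)
    · exact hG
    · rintro _ _ ⟨-, x, y, hxy, rfl, rfl⟩
      exact hxy
  · rintro ⟨w, x⟩ ⟨w', y⟩ hxy
    by_cases hw : w = w'
    · subst hw
      refine ⟨some w, ⟨hxy.ne, x, y, hxy, rfl, rfl⟩, ?_⟩
      rintro (_ | v) hv
      · exact (hv rfl).elim
      · obtain ⟨-, x', y', -, hx, -⟩ := hv
        exact congrArg (some ·.1) hx
    · refine ⟨none, hw, ?_⟩
      rintro (_ | v) hv
      · rfl
      · obtain ⟨-, x', y', -, hx, hy⟩ := hv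
        exact (hw ((congrArg Prod.fst hx).symm.trans (congrArg Prod.fst hy))).elim
  · rintro (_ | w)
    exacts [h, (hfill w).map _]

theorem prod (h : HasGroupDivisibleDesign k ι (W × S)) (h' : HasGroupDivisibleDesign k W S) :
    HasGroupDivisibleDesign k (ι × W) S := by
  let G : SimpleGraph (ι × W × S) := (⊤ : SimpleGraph (ι × W)).comap fun p => (p.1, p.2.1)
  have hG (i : ι) : G.comap (Prod.mk i) = (⊤ : SimpleGraph W).comap Prod.fst := by
    ext
    simp [G]
  have : HasCliqueDecomposition G k :=
    h.fill_groups (fun p q hpq h => hpq (congrArg (·.1) (h : (p.1, p.2.1) = _)))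
      fun i => (hG i).symm ▸ h'
  exact this.congr ⟨(Equiv.prodAssoc ι W S).symm, .rfl⟩

theorem hasCliqueDecomposition_option (h : HasGroupDivisibleDesign k W S)
    (hS : HasCliqueDecomposition (⊤ : SimpleGraph (Option S)) k) :
    HasCliqueDecomposition (⊤ : SimpleGraph (Option (W × S))) k := by
  refine .of_partition (H := fun o : Option W => o.elim
    (((⊤ : SimpleGraph W).comap Prod.fst).map (.some : W × S ↪ Option (W × S)))
    fun w => (⊤ : SimpleGraph (Option S)).map (Function.Embedding.sectR w S).optionMap) ?_ ?_ ?_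
  · exact fun _ => le_top
  · rintro (_ | ⟨w, x⟩) (_ | ⟨w', y⟩) hxy
    · exact (hxy rfl).elim
    · refine ⟨some w', ⟨hxy, none, some y, by simp, rfl, rfl⟩, ?_⟩
      rintro (_ | v) ⟨-, u, u', -, hu, hu'⟩ <;> simp_all
    · refine ⟨some w, ⟨hxy, some x, none, by simp, rfl, rfl⟩, ?_⟩
      rintro (_ | v) ⟨-, u, u', -, hu, hu'⟩ <;> simp_all
    · by_cases hw : w = w'
      · subst hw
        refine ⟨some w, ⟨hxy, some x, some y, by simp_all, rfl, rfl⟩, ?_⟩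
        rintro (_ | v) ⟨-, u, u', huu, hu, hu'⟩ <;> simp_all
      · refine ⟨none, ⟨hxy, (w, x), (w', y), hw, rfl, rfl⟩, ?_⟩
        rintro (_ | v) ⟨-, u, u', -, hu, hu'⟩ <;> simp_all
  · rintro (_ | w)
    exacts [h.map _, hS.map _]

end HasGroupDivisibleDesign

theorem exists_equiv_prod_of_card_fiber (p : V → W) {s : ℕ} (hs : s ≠ 0)
    (hp : ∀ w, Nat.card {v // p v = w} = s) : ∃ e : V ≃ W × Fin s, ∀ v, (e v).1 = p v := by
  have (w : W) : Nonempty ({v // p v = w} ≃ Fin s) :=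
    have : Finite {v // p v = w} := Nat.finite_of_card_ne_zero (hp w ▸ hs)
    ⟨Finite.equivFinOfCardEq (hp w)⟩
  exact ⟨(Equiv.sigmaFiberEquiv p).symm.trans <|
    (Equiv.sigmaCongrRight fun w => (this w).some).trans (Equiv.sigmaEquivProd W (Fin s)),
    fun _ => rfl⟩

/-- The lines through the deleted point `o`, which are the fibres of `ℓ`, become the groups. -/
theorem IsCliqueDecomposition.exists_groups {B : Set (Finset V)}
    (hB : IsCliqueDecomposition (⊤ : SimpleGraph V) k B) (o : V) :
    ∃ ℓ : {x // x ≠ o} → Finset V,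
      HasCliqueDecomposition ((⊤ : SimpleGraph (Finset V)).comap ℓ) k ∧
      ∀ x, Nat.card {y // ℓ y = ℓ x} = k - 1 := by
  classical
  choose ℓ hℓ hu using fun x : {x // x ≠ o} => hB.existsUnique x.2
  have hℓB (x) : ℓ x ∈ B := (hℓ x).1
  have hxℓ (x) : x.1 ∈ ℓ x := (hℓ x).2.1
  have hoℓ (x) : o ∈ ℓ x := (hℓ x).2.2
  have eq_of_mem {x : {x // x ≠ o}} {b : Finset V} (hb : b ∈ B) (hx : x.1 ∈ b) (ho : o ∈ b) :
      ℓ x = b := (hu x b ⟨hb, hx, ho⟩).symm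
  refine ⟨ℓ, ⟨{b | b.map (.subtype _) ∈ B}, fun b hb => ?_, fun x y hxy => ?_⟩, fun x => ?_⟩
  · refine ⟨fun x hx y hy hxy h => ?_, ?_⟩
    · have hxb : x.1 ∈ b.map (.subtype (· ≠ o)) := Finset.mem_map_of_mem _ hx
      have hyb : y.1 ∈ b.map (.subtype (· ≠ o)) := Finset.mem_map_of_mem _ hy
      have hoℓx := hoℓ x
      have hyℓx : y.1 ∈ ℓ x := h ▸ hxℓ y
      rw [(hB.existsUnique (Subtype.coe_ne_coe.2 hxy)).unique ⟨hℓB x, hxℓ x, hyℓx⟩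
        ⟨hb, hxb, hyb⟩] at hoℓx
      simp at hoℓx
    · rw [← (hB.isNClique _ hb).card_eq, Finset.card_map]
  · obtain ⟨b, ⟨hb, hx, hy⟩, hbu⟩ := hB.existsUnique (Subtype.coe_ne_coe.2 (ne_of_apply_ne ℓ hxy))
    have ho : o ∉ b := fun ho => hxy ((eq_of_mem hb hx ho).trans (eq_of_mem hb hy ho).symm)
    refine ⟨b.subtype (· ≠ o), ⟨?_, by simpa, by simpa⟩, ?_⟩
    · rw [Set.mem_ofPred_eq, Finset.subtype_map_of_mem fun z hz => ne_of_mem_of_not_mem hz ho]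
      exact hb
    · rintro c ⟨hc, hxc, hyc⟩
      rw [← hbu _ ⟨hc, Finset.mem_map_of_mem _ hxc, Finset.mem_map_of_mem _ hyc⟩]
      ext z
      simpa using fun _ => z.2
  · have mem_fiber (y : V) : (∃ h : y ≠ o, ℓ ⟨y, h⟩ = ℓ x) ↔ y ∈ (ℓ x).erase o := by
      rw [Finset.mem_erase]
      exact ⟨fun ⟨h, hy⟩ => ⟨h, hy ▸ hxℓ ⟨y, h⟩⟩,
        fun ⟨h, hy⟩ => ⟨h, eq_of_mem (x := ⟨y, h⟩) (hℓB x) hy (hoℓ x)⟩⟩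
    rw [Nat.card_congr ((Equiv.subtypeSubtypeEquivSubtypeExists _ _).trans
      (Equiv.subtypeEquivRight mem_fiber)), Nat.card_eq_fintype_card, Fintype.card_coe,
      Finset.card_erase_of_mem (hoℓ x), (hB.isNClique _ (hℓB x)).card_eq]

theorem HasCliqueDecomposition.hasGroupDivisibleDesign [Finite V]
    (h : HasCliqueDecomposition (⊤ : SimpleGraph V) k) {r : ℕ} (hk : 2 ≤ k)
    (hV : Nat.card V = r * (k - 1) + 1) : HasGroupDivisibleDesign k (Fin r) (Fin (k - 1)) := by
  obtain ⟨o⟩ : Nonempty V := (Nat.card_pos_iff.1 (by omega)).1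
  obtain ⟨B, hB⟩ := h
  obtain ⟨ℓ, hℓ, hcard⟩ := hB.exists_groups o
  obtain ⟨e, he⟩ := exists_equiv_prod_of_card_fiber (Set.rangeFactorization ℓ)
    (s := k - 1) (by omega) (by
      rintro ⟨_, x, rfl⟩
      simpa [Subtype.ext_iff] using hcard x)
  have hr : Nat.card (Set.range ℓ) = r := by
    classical
    have hV' : Nat.card {x // x ≠ o} + 1 = Nat.card V := by
      rw [← Finite.card_option, Nat.card_congr (Equiv.optionSubtypeNe o)]
    rw [Nat.card_congr e, Nat.card_prod, Nat.card_fin, hV] at hV'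
    exact Nat.eq_of_mul_eq_mul_right (by omega) (Nat.succ_injective hV')
  have hdesign : HasGroupDivisibleDesign k (Set.range ℓ) (Fin (k - 1)) :=
    hℓ.congr ⟨e, by simp [he, Subtype.ext_iff]⟩
  exact HasGroupDivisibleDesign.congr hdesign (Finite.equivFinOfCardEq hr) (Equiv.refl _)

/-! ### Pairwise balanced designs -/

/-- A pairwise balanced design without restriction on the block sizes. -/
def IsPairwiseBalanced (B : Set (Set V)) : Prop :=
  ∀ ⦃x y⦄, x ≠ y → ∃! b, b ∈ B ∧ x ∈ b ∧ y ∈ b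

theorem IsPairwiseBalanced.preimage {B : Set (Set W)} (hB : IsPairwiseBalanced B) (f : V ↪ W) :
    IsPairwiseBalanced ((f ⁻¹' ·) '' B) := by
  intro x y hxy
  obtain ⟨b, ⟨hb, hx, hy⟩, hu⟩ := hB (f.injective.ne hxy)
  refine ⟨_, ⟨⟨b, hb, rfl⟩, hx, hy⟩, ?_⟩
  rintro _ ⟨⟨c, hc, rfl⟩, hxc, hyc⟩
  rw [hu c ⟨hc, hxc, hyc⟩]

theorem IsTransversalDesign.isPairwiseBalanced {B : Set (ι → S)} (hB : IsTransversalDesign B) :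
    IsPairwiseBalanced
      (Set.range (fun i => {p : ι × S | p.1 = i}) ∪ (fun b => {p | b p.1 = p.2}) '' B) := by
  rintro ⟨i, x⟩ ⟨j, y⟩ hxy
  by_cases hij : i = j
  · subst hij
    refine ⟨_, ⟨.inl ⟨i, rfl⟩, rfl, rfl⟩, ?_⟩
    rintro _ ⟨⟨i', rfl⟩ | ⟨b, -, rfl⟩, hx, hy⟩
    · cases hx
      rfl
    · exact (hxy (Prod.ext rfl (hx.symm.trans hy))).elim
  · obtain ⟨b, ⟨hb, hx, hy⟩, hu⟩ := hB hij x y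
    refine ⟨_, ⟨.inr ⟨b, hb, rfl⟩, hx, hy⟩, ?_⟩
    rintro _ ⟨⟨i', rfl⟩ | ⟨c, hc, rfl⟩, hxc, hyc⟩
    · exact (hij (hxc.trans hyc.symm)).elim
    · rw [hu c ⟨hc, hxc, hyc⟩]

namespace HasGroupDivisibleDesign

theorem of_isPairwiseBalanced {B : Set (Set V)} (hB : IsPairwiseBalanced B)
    (h : ∀ b ∈ B, HasGroupDivisibleDesign k b S) : HasGroupDivisibleDesign k V S := by
  refine .of_partition (H := fun b : B => ((⊤ : SimpleGraph b).comap Prod.fst).map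
    ((Function.Embedding.subtype _).prodMap (.refl S))) ?_ ?_ fun b => (h b b.2).map _
  · rintro b _ _ ⟨-, x, y, hxy, rfl, rfl⟩
    exact Subtype.coe_ne_coe.2 hxy
  · rintro ⟨v, x⟩ ⟨w, y⟩ hvw
    obtain ⟨b, ⟨hb, hv, hw⟩, hu⟩ := hB hvw
    refine ⟨⟨b, hb⟩, ⟨ne_of_apply_ne _ hvw, (⟨v, hv⟩, x), (⟨w, hw⟩, y),
      ne_of_apply_ne Subtype.val hvw, rfl, rfl⟩, ?_⟩
    rintro c ⟨-, ⟨v', x'⟩, ⟨w', y'⟩, -, hv', hw'⟩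
    cases hv'
    cases hw'
    exact Subtype.ext (hu c ⟨c.2, v'.2, w'.2⟩)

theorem range {f : W → V} (h : HasGroupDivisibleDesign k W S) (hf : f.Injective) :
    HasGroupDivisibleDesign k (Set.range f) S :=
  h.congr (.ofInjective f hf) (.refl S)

theorem truncated {α β : Type*} {U : Set β} (hT : HasTransversalDesign (Option α) β)
    (h₁ : HasGroupDivisibleDesign k α S) (h₂ : HasGroupDivisibleDesign k (Option α) S)
    (h₃ : HasGroupDivisibleDesign k β S) (h₄ : HasGroupDivisibleDesign k U S) :
    HasGroupDivisibleDesign k (Truncated α U) S := by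
  obtain ⟨B, hB⟩ := hT
  refine of_isPairwiseBalanced (hB.isPairwiseBalanced.preimage (.subtype _)) ?_
  rintro _ ⟨_, ⟨_ | a, rfl⟩ | ⟨b, -, rfl⟩, rfl⟩
  · convert h₄.range (f := fun x : U => (⟨(none, x), fun _ => x.2⟩ : Truncated α U))
      fun x y h => by simpa [Subtype.ext_iff] using h
    ext ⟨⟨o, x⟩, h⟩
    aesop
  · convert h₃.range (f := fun x => (⟨(some a, x), nofun⟩ : Truncated α U))
      fun x y h => by simpa using h
    ext ⟨⟨o, x⟩, h⟩
    aesop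
  by_cases hb : b none ∈ U
  · convert h₂.range (f := fun o => (⟨(o, b o), by rintro rfl; exact hb⟩ : Truncated α U))
      fun o o' h => by simp_all
    ext ⟨⟨o, x⟩, h⟩
    aesop
  · convert h₁.range (f := fun a => (⟨(some a, b (some a)), nofun⟩ : Truncated α U))
      fun a a' h => by simp_all
    ext ⟨⟨_ | o, x⟩, h⟩ <;> aesop

theorem mul_add {a m x : ℕ} (hx : x ≤ m) (hT : HasTransversalDesign (Fin (a + 1)) (Fin m))
    (h₁ : HasGroupDivisibleDesign k (Fin a) S) (h₂ : HasGroupDivisibleDesign k (Fin (a + 1)) S)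
    (h₃ : HasGroupDivisibleDesign k (Fin m) S) (h₄ : HasGroupDivisibleDesign k (Fin x) S) :
    HasGroupDivisibleDesign k (Fin (a * m + x)) S :=
  (truncated (hT.comp (finSuccEquiv a).symm.toEmbedding) h₁ (h₂.congr (finSuccEquiv a) (.refl S)) h₃
    (h₄.congr (Equiv.ofInjective _ (Fin.castLE_injective hx)) (.refl S))).congr
      (Truncated.equivFin a hx) (.refl S)

end HasGroupDivisibleDesign

end CliqueDecomposition

/-! ### Closed sets of natural numbers -/

theorem sum_digits_succ (k : ℕ) {e : ℕ} (d : Fin (e + 1) → ℕ) :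
    ∑ i, d i * k ^ (i : ℕ) = d 0 + k * ∑ i : Fin e, d i.succ * k ^ (i : ℕ) := by
  simp only [Fin.sum_univ_succ, Fin.val_zero, Fin.val_succ, pow_zero, mul_one, Finset.mul_sum]
  exact congrArg (d 0 + ·) (Finset.sum_congr rfl fun i _ => by ring)

theorem exists_mul_pow_le_succ_pow (k : ℕ) {s : ℕ} (hs : 0 < s) :
    ∃ n, k * s ^ n ≤ (s + 1) ^ n := by
  have hs' : (0 : ℚ) < s := Nat.cast_pos.2 hs
  obtain ⟨n, hn⟩ := pow_unbounded_of_one_lt (k : ℚ) ((one_lt_div hs').2 (lt_add_one (s : ℚ)))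
  rw [div_pow, lt_div_iff₀ (by positivity)] at hn
  exact ⟨n, by exact_mod_cast hn.le⟩

theorem exists_le_and_lt_succ {f : ℕ → ℕ} {n z : ℕ} (h₀ : f 0 ≤ z) (hn : z < f n) :
    ∃ i < n, f i ≤ z ∧ z < f (i + 1) := by
  by_contra! h
  have hle (i : ℕ) (hi : i ≤ n) : f i ≤ z := by
    induction i with
    | zero => exact h₀
    | succ i ih => exact h i hi (ih (by omega))
  exact hn.not_ge (hle n le_rfl)

theorem eventually_exists_mem_interval {k A n : ℕ} {β : ℕ → ℕ} (hk : 2 ≤ k) (hA : 0 < A)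
    (hβ : 0 < β 0) (hstep : ∀ i < n, β (i + 1) * A ≤ β i * (A + 1)) (hgrowth : k * β 0 ≤ β n)
    (E : ℕ) :
    ∀ᶠ z in atTop, ∃ e ≥ E, ∃ i < n, β i * A * k ^ e ≤ z ∧ z < β i * (A + 1) * k ^ e := by
  filter_upwards [eventually_ge_atTop (β 0 * A * k ^ E)] with z hz
  have hbound : z < β 0 * A * k ^ (E + z) :=
    calc z < k ^ z := Nat.lt_pow_self hk
      _ ≤ k ^ (E + z) := Nat.pow_le_pow_right (by omega) (by omega)
      _ ≤ β 0 * A * k ^ (E + z) := Nat.le_mul_of_pos_left _ (by positivity)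
  obtain ⟨j, -, hj, hj'⟩ :=
    exists_le_and_lt_succ (f := fun j => β 0 * A * k ^ (E + j)) (by simpa) hbound
  have htop : z < β n * A * k ^ (E + j) :=
    calc z < β 0 * A * k ^ (E + (j + 1)) := hj'
      _ = k * β 0 * A * k ^ (E + j) := by ring
      _ ≤ β n * A * k ^ (E + j) := by gcongr
  obtain ⟨i, hi, hle, hlt⟩ := exists_le_and_lt_succ (f := fun i => β i * A * k ^ (E + j)) hj htop
  exact ⟨E + j, by omega, i, hi, hle, hlt.trans_le (Nat.mul_le_mul_right _ (hstep i hi))⟩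

/-- The closure properties of the set of all `r` for which there is a `k`-group divisible design
with `r` groups of size `k - 1`. They alone force the set to contain almost all natural numbers
that are `0` or `1` modulo `k`. -/
structure IsWilsonClosed (k : ℕ) (R : Set ℕ) : Prop where
  zero_mem : 0 ∈ R
  one_mem : 1 ∈ R
  eventually_mul_add_mem : ∀ᶠ r in atTop, r ∈ R → ∀ d ≤ 1, k * r + d ∈ R
  eventually_mul_add_mem_of_succ_mem : ∀ b ∈ R, b + 1 ∈ R →
    ∀ᶠ m in atTop, m ∈ R → ∀ x ∈ R, x ≤ m → b * m + x ∈ R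
  frequently_mem : ∃ᶠ r in atTop, r ∈ R

namespace IsWilsonClosed

variable {k : ℕ} {R : Set ℕ}

theorem eventually_digits_mem (hR : IsWilsonClosed k R) (hk : 0 < k) :
    ∀ᶠ r in atTop, r ∈ R → ∀ (e : ℕ) (d : Fin e → ℕ), (∀ i, d i ≤ 1) →
      k ^ e * r + ∑ i, d i * k ^ (i : ℕ) ∈ R := by
  obtain ⟨N, hN⟩ := eventually_atTop.1 hR.eventually_mul_add_mem
  filter_upwards [eventually_ge_atTop N] with r hrN hr e d hd
  induction e with
  | zero => simpa
  | succ e ih =>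
    have hlarge : N ≤ k ^ e * r + ∑ i : Fin e, d i.succ * k ^ (i : ℕ) :=
      hrN.trans ((Nat.le_mul_of_pos_left r (pow_pos hk e)).trans (Nat.le_add_right _ _))
    convert hN _ hlarge (ih (fun i => d i.succ) fun i => hd i.succ) (d 0) (hd 0) using 1
    rw [sum_digits_succ]
    ring

theorem exists_digits_mem (hR : IsWilsonClosed k R) (hk : 2 ≤ k) {a x : ℕ} (ha : a ∈ R)
    (ha' : a + 1 ∈ R) (hx : x ∈ R) (j : ℕ) :
    ∃ A, j ≤ A ∧ ∀ (e : ℕ) (d : Fin e → ℕ), (∀ i, d i ≤ j) →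
      a * (A * k ^ e + ∑ i, d i * k ^ (i : ℕ)) + x ∈ R := by
  induction j with
  | zero => exact ⟨0, le_rfl, fun e d hd => by simpa [fun i => Nat.le_zero.1 (hd i)]⟩
  | succ j ih =>
    obtain ⟨A, hA, ih⟩ := ih
    obtain ⟨N, hN⟩ := eventually_atTop.1 (hR.eventually_mul_add_mem_of_succ_mem a ha ha')
    obtain ⟨r, hr, hrdigits, hrN, hrA⟩ := (hR.frequently_mem.and_eventually
      ((hR.eventually_digits_mem (by omega)).and ((eventually_ge_atTop N).and
        (eventually_ge_atTop (a * (A + j) + x + 1))))).exists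
    refine ⟨r + A, by omega, fun e d hd => ?_⟩
    have hm := hrdigits hr e (fun i => min (d i) 1) fun i => min_le_right _ _
    set m := k ^ e * r + ∑ i, min (d i) 1 * k ^ (i : ℕ)
    have hrm : k ^ e * r ≤ m := Nat.le_add_right _ _
    have hrest (i : Fin e) : d i - 1 ≤ j := by have := hd i; omega
    have hx' := ih e (fun i => d i - 1) hrest
    have hsum : ∑ i, (d i - 1) * k ^ (i : ℕ) ≤ j * k ^ e := by
      calc ∑ i, (d i - 1) * k ^ (i : ℕ)
        _ ≤ ∑ i : Fin e, j * k ^ (i : ℕ) :=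
          Finset.sum_le_sum fun i _ => Nat.mul_le_mul_right _ (hrest i)
        _ = j * ∑ i ∈ Finset.range e, k ^ i := by
          rw [← Finset.mul_sum, Fin.sum_univ_eq_sum_range (k ^ ·)]
        _ ≤ j * k ^ e :=
          Nat.mul_le_mul_left j (Nat.geomSum_lt hk fun i hi => Finset.mem_range.1 hi).le
    have he : 0 < k ^ e := by positivity
    convert hN m (by nlinarith) hm _ hx' (by nlinarith) using 1
    have hsplit : ∑ i, d i * k ^ (i : ℕ) =
        ∑ i, min (d i) 1 * k ^ (i : ℕ) + ∑ i, (d i - 1) * k ^ (i : ℕ) := by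
      rw [← Finset.sum_add_distrib]
      exact Finset.sum_congr rfl fun i _ => by rw [← add_mul]; congr 1; omega
    rw [hsplit]
    ring

theorem exists_forall_lt_pow_mem (hR : IsWilsonClosed k R) (hk : 2 ≤ k) {a x : ℕ} (ha : a ∈ R)
    (ha' : a + 1 ∈ R) (hx : x ∈ R) :
    ∃ A > 0, ∀ e, ∀ c < k ^ e, a * (A * k ^ e + c) + x ∈ R := by
  have : NeZero k := ⟨by omega⟩
  obtain ⟨A, hA, h⟩ := hR.exists_digits_mem hk ha ha' hx (k - 1)
  refine ⟨A, by omega, fun e c hc => ?_⟩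
  convert h e (fun i => finFunctionFinEquiv.symm ⟨c, hc⟩ i) fun i => by omega
  rw [← finFunctionFinEquiv_apply, Equiv.apply_symm_apply]

theorem eventually_pow_mul_pow_mul_mem (hR : IsWilsonClosed k R) {a b : ℕ} (ha₀ : 0 < a)
    (ha : a ∈ R) (ha' : a + 1 ∈ R) (hb₀ : 0 < b) (hb : b ∈ R) (hb' : b + 1 ∈ R) :
    ∀ᶠ m in atTop, m ∈ R → ∀ i j, a ^ i * b ^ j * m ∈ R := by
  obtain ⟨M, hM⟩ := eventually_atTop.1 (hR.eventually_mul_add_mem_of_succ_mem a ha ha')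
  obtain ⟨N, hN⟩ := eventually_atTop.1 (hR.eventually_mul_add_mem_of_succ_mem b hb hb')
  filter_upwards [eventually_ge_atTop M, eventually_ge_atTop N] with m hMm hNm hm i j
  have hle (i j : ℕ) : m ≤ a ^ i * b ^ j * m := Nat.le_mul_of_pos_left m (by positivity)
  induction i with
  | zero =>
    induction j with
    | zero => simpa
    | succ j ih =>
      convert hN _ (hNm.trans (hle 0 j)) ih 0 hR.zero_mem (Nat.zero_le _) using 1
      ring
  | succ i ih =>
    convert hM _ (hMm.trans (hle i j)) ih 0 hR.zero_mem (Nat.zero_le _) using 1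
    ring

/- The multipliers `k * ((k * s) ^ (n - i) * (k * (s + 1)) ^ i * m)` form a geometric progression of
ratio `(s + 1) / s`, which is close to `1` when `s` is large. -/
theorem exists_multipliers (hR : IsWilsonClosed k R) (hk : 2 ≤ k) (A : ℕ) :
    ∃ (n : ℕ) (β : ℕ → ℕ), (∀ i ≤ n, 0 < β i ∧ β i ∈ R ∧ β i + 1 ∈ R) ∧
      (∀ i < n, β (i + 1) * A ≤ β i * (A + 1)) ∧ k * β 0 ≤ β n := by
  obtain ⟨N, hN⟩ := eventually_atTop.1 hR.eventually_mul_add_mem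
  obtain ⟨r, hr, hrN⟩ := (hR.frequently_mem.and_eventually
    (eventually_ge_atTop (N + A + 1))).exists
  obtain ⟨s, hs⟩ : ∃ s, s = k * r := ⟨_, rfl⟩
  have hrs : r ≤ s := by nlinarith
  have hs₀ : 0 < s := by omega
  have hk₀ : 0 < k := by omega
  have hsR : s ∈ R := hs ▸ hN r (by omega) hr 0 zero_le_one
  have hsR' : s + 1 ∈ R := hs ▸ hN r (by omega) hr 1 le_rfl
  have hmul {m : ℕ} (hm : m ∈ R) (hNm : N ≤ m) : k * m ∈ R ∧ k * m + 1 ∈ R :=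
    ⟨hN m hNm hm 0 zero_le_one, hN m hNm hm 1 le_rfl⟩
  obtain ⟨ha, ha'⟩ := hmul hsR (by omega)
  obtain ⟨hb, hb'⟩ := hmul hsR' (by omega)
  obtain ⟨m, hm, hpow, hmN⟩ := (hR.frequently_mem.and_eventually
    ((hR.eventually_pow_mul_pow_mul_mem (by positivity) ha ha' (by positivity) hb hb').and
      (eventually_ge_atTop (N + 1)))).exists
  obtain ⟨n, hn⟩ := exists_mul_pow_le_succ_pow k hs₀
  refine ⟨n, fun i => k * ((k * s) ^ (n - i) * (k * (s + 1)) ^ i * m), fun i _ => ?_,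
    fun i hi => ?_, ?_⟩
  · have hle : m ≤ (k * s) ^ (n - i) * (k * (s + 1)) ^ i * m :=
      Nat.le_mul_of_pos_left m (by positivity)
    exact ⟨Nat.mul_pos hk₀ (by omega), hmul (hpow hm _ _) (by omega)⟩
  · obtain ⟨j, rfl⟩ := Nat.exists_eq_add_of_lt hi
    simp only [show i + j + 1 - (i + 1) = j by omega, show i + j + 1 - i = j + 1 by omega]
    calc k * ((k * s) ^ j * (k * (s + 1)) ^ (i + 1) * m) * A
      _ = k * ((k * s) ^ j * (k * (s + 1)) ^ i * m) * k * ((s + 1) * A) := by ring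
      _ ≤ k * ((k * s) ^ j * (k * (s + 1)) ^ i * m) * k * (s * (A + 1)) :=
        Nat.mul_le_mul_left _ (by linarith)
      _ = k * ((k * s) ^ (j + 1) * (k * (s + 1)) ^ i * m) * (A + 1) := by ring
  · calc k * (k * ((k * s) ^ (n - 0) * (k * (s + 1)) ^ 0 * m))
      _ = k * k ^ n * m * (k * s ^ n) := by rw [mul_pow, Nat.sub_zero]; ring
      _ ≤ k * k ^ n * m * (s + 1) ^ n := by gcongr
      _ = k * ((k * s) ^ (n - n) * (k * (s + 1)) ^ n * m) := by
        rw [mul_pow k (s + 1), Nat.sub_self]; ring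

theorem eventually_mem_of_modEq (hR : IsWilsonClosed k R) (hk : 2 ≤ k) {a x : ℕ} (ha₀ : 0 < a)
    (ha : a ∈ R) (ha' : a + 1 ∈ R) (hx : x ∈ R) : ∀ᶠ y in atTop, y ≡ x [MOD a] → y ∈ R := by
  obtain ⟨A, hA, hAR⟩ := hR.exists_forall_lt_pow_mem hk ha ha' hR.zero_mem
  obtain ⟨A', -, hAR'⟩ := hR.exists_forall_lt_pow_mem hk ha ha' hx
  obtain ⟨n, β, hβ, hstep, hgrowth⟩ := hR.exists_multipliers hk A
  obtain ⟨e₀, he₀⟩ : ∃ e₀, ∀ i < n, β i ≤ k ^ e₀ :=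
    ⟨∑ i ∈ Finset.range n, β i, fun i hi =>
      (Finset.single_le_sum (fun _ _ => Nat.zero_le _) (Finset.mem_range.2 hi)).trans
        (Nat.lt_pow_self hk).le⟩
  obtain ⟨M, hM⟩ := eventually_atTop.1 ((Set.finite_Iio n).eventually_all.2 fun i hi =>
    have ⟨_, hi, hi'⟩ := hβ i (le_of_lt hi)
    hR.eventually_mul_add_mem_of_succ_mem (β i) hi hi')
  obtain ⟨Z, hZ⟩ := eventually_atTop.1 (eventually_exists_mem_interval hk hA
    (hβ 0 (Nat.zero_le n)).1 hstep hgrowth (M + (a * (A' * k ^ e₀ + k ^ e₀) + x)))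
  filter_upwards [eventually_ge_atTop (a * (A' * k ^ e₀ + Z) + x)] with y hy hyx
  obtain ⟨z, hz⟩ := (Nat.modEq_iff_dvd' (by omega)).1 hyx.symm
  have hZz : A' * k ^ e₀ + Z ≤ z := Nat.le_of_mul_le_mul_left (by omega) ha₀
  obtain ⟨z, rfl⟩ : ∃ z', z = A' * k ^ e₀ + z' := Nat.exists_eq_add_of_le (by omega)
  obtain ⟨e, he, i, hi, hle, hlt⟩ := hZ z (by omega)
  obtain ⟨u, rfl⟩ := Nat.exists_eq_add_of_le hle
  have hc : u / β i < k ^ e := Nat.div_lt_of_lt_mul (by linarith)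
  have hc₀ : u % β i < k ^ e₀ := (Nat.mod_lt u (hβ i hi.le).1).trans_le (he₀ i hi)
  have hlarge : e ≤ a * (A * k ^ e + u / β i) :=
    calc e ≤ k ^ e := (Nat.lt_pow_self hk).le
      _ ≤ A * k ^ e + u / β i := (Nat.le_mul_of_pos_left _ hA).trans (Nat.le_add_right _ _)
      _ ≤ a * (A * k ^ e + u / β i) := Nat.le_mul_of_pos_left _ ha₀
  have hx' : a * (A' * k ^ e₀ + u % β i) ≤ a * (A' * k ^ e₀ + k ^ e₀) := by gcongr
  have hy' : y = β i * (a * (A * k ^ e + u / β i)) + (a * (A' * k ^ e₀ + u % β i) + x) := by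
    rw [show y = a * (A' * k ^ e₀ + (β i * A * k ^ e + (β i * (u / β i) + u % β i))) + x by
      rw [Nat.div_add_mod]; omega]
    ring
  rw [hy']
  exact hM _ (by omega) i hi (hAR e _ hc) _ (hAR' e₀ _ hc₀) (by omega)

theorem exists_mem_modEq (hR : IsWilsonClosed k R) (hk : 2 ≤ k) {r s : ℕ} (hr₀ : 0 < r)
    (hr : k * r ∈ R) (hr' : k * r + 1 ∈ R) (hs : s % k ≤ 1) :
    ∃ x ∈ R, x ≡ s [MOD k * (k * r + 1)] := by
  have hd : s % k ∈ R := by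
    interval_cases s % k
    exacts [hR.zero_mem, hR.one_mem]
  have hcop : Nat.Coprime r (k * r + 1) := by simp
  obtain ⟨w, hw, hw'⟩ := Nat.chineseRemainder hcop 0 (s / k)
  obtain ⟨N, hN⟩ := eventually_atTop.1 (hR.eventually_mem_of_modEq hk (by positivity) hr hr' hd)
  have hmod (m : ℕ) (h : m ∣ r * (k * r + 1)) : w + r * (k * r + 1) * N ≡ w [MOD m] := by
    simpa using ((Nat.modEq_zero_iff_dvd.2 (h.mul_right N)).add_left w)
  refine ⟨k * (w + r * (k * r + 1) * N) + s % k, hN _ ?_ ?_, ?_⟩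
  · calc N ≤ k * (r * (k * r + 1)) * N := Nat.le_mul_of_pos_left N (by positivity)
      _ = k * (r * (k * r + 1) * N) := mul_assoc _ _ _
      _ ≤ k * (w + r * (k * r + 1) * N) := Nat.mul_le_mul_left k (Nat.le_add_left _ _)
      _ ≤ k * (w + r * (k * r + 1) * N) + s % k := Nat.le_add_right _ _
  · simpa using (((hmod r (Nat.dvd_mul_right _ _)).trans hw).mul_left' k).add_right (s % k)
  · simpa [Nat.div_add_mod] using
      (((hmod _ (Nat.dvd_mul_left _ _)).trans hw').mul_left' k).add_right (s % k)

theorem eventually_mem (hR : IsWilsonClosed k R) (hk : 2 ≤ k) :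
    ∀ᶠ r in atTop, r % k ≤ 1 → r ∈ R := by
  obtain ⟨N, hN⟩ := eventually_atTop.1 hR.eventually_mul_add_mem
  obtain ⟨r, hr, hrN⟩ := (hR.frequently_mem.and_eventually (eventually_ge_atTop (N + 1))).exists
  have hq : k * r ∈ R := hN r (by omega) hr 0 zero_le_one
  have hq' : k * r + 1 ∈ R := hN r (by omega) hr 1 le_rfl
  have hlarge : N ≤ k * r + 1 := by nlinarith
  have hclass (s : ℕ) (hs : s % k ≤ 1) :
      ∀ᶠ y in atTop, y ≡ s [MOD k * (k * r + 1)] → y ∈ R := by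
    obtain ⟨x, hx, hxs⟩ := hR.exists_mem_modEq hk (by omega) hq hq' hs
    filter_upwards [hR.eventually_mem_of_modEq hk (by positivity)
      (hN _ hlarge hq' 0 zero_le_one) (hN _ hlarge hq' 1 le_rfl) hx] with y hy hys
    exact hy (hys.trans hxs.symm)
  filter_upwards [(Set.finite_Iio (k * (k * r + 1))).eventually_all.2 fun s _ =>
    eventually_imp_distrib_left.2 (hclass s)] with y hy hyk
  exact hy (y % (k * (k * r + 1))) (Nat.mod_lt _ (by positivity))
    (by rwa [Nat.mod_mul_right_mod]) (Nat.mod_modEq y _).symm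

end IsWilsonClosed

/-! ### Spread colourings -/

section SpreadColoring

variable {V κ : Type*} [DecidableEq κ]

/-- The `y ∈ A` such that the edge from `x` to `y` has colour `c`. -/
def colorNeighbors (f : V → V → κ) (A : Finset V) (c : κ) (x : V) : Finset V :=
  {y ∈ A | f x y = c}

variable [Fintype V]

/-- The `x` with fewer than half of the expected number `A.card / C.card` of neighbours in `A`
joined to it by an edge of colour `c`. -/
def sparseVertices (C : Finset κ) (f : V → V → κ) (A : Finset V) (c : κ) : Finset V :=
  {x | (colorNeighbors f A c x).card * (2 * C.card) < A.card}

/-- A colouring `f` of the ordered pairs of vertices which gives colours in `C` to distinct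
vertices and in which the edges to two given vertices have the same colour no more often than in a
random colouring. -/
structure IsSpreadColoring (C : Finset κ) (f : V → V → κ) : Prop where
  mem : ∀ {x y}, x ≠ y → f x y ∈ C
  card_mul_card_le : ∀ {y y'}, y ≠ y' →
    C.card * (Finset.univ.filter fun x => f x y = f x y').card ≤ Fintype.card V

namespace IsSpreadColoring

variable {C : Finset κ} {f : V → V → κ}

theorem card_mul_sum_sum_sq_le (hf : IsSpreadColoring C f) (A : Finset V) :
    C.card * ∑ x, ∑ c ∈ C, (colorNeighbors f A c x).card ^ 2 ≤
      C.card * (A.card * Fintype.card V) + A.card ^ 2 * Fintype.card V := by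
  classical
  have hfiber (x : V) : ∑ c ∈ C, (colorNeighbors f A c x).card ^ 2 ≤
      ((A ×ˢ A).filter fun q => f x q.1 = f x q.2).card := by
    calc ∑ c ∈ C, (colorNeighbors f A c x).card ^ 2
      _ = ∑ c ∈ C, (((A ×ˢ A).filter fun q => f x q.1 = f x q.2).filter
            fun q => f x q.1 = c).card := by
        refine Finset.sum_congr rfl fun c _ => ?_
        rw [sq, ← Finset.card_product]
        congr 1
        ext q
        simp only [colorNeighbors, Finset.mem_product, Finset.mem_filter]
        grind
      _ ≤ _ := by
        rw [Finset.sum_card_fiberwise_eq_card_filter]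
        exact Finset.card_filter_le _ _
  calc C.card * ∑ x, ∑ c ∈ C, (colorNeighbors f A c x).card ^ 2
    _ ≤ C.card * ∑ x, ((A ×ˢ A).filter fun q => f x q.1 = f x q.2).card :=
      Nat.mul_le_mul_left _ (Finset.sum_le_sum fun x _ => hfiber x)
    _ = ∑ q ∈ A ×ˢ A, C.card * (Finset.univ.filter fun x => f x q.1 = f x q.2).card := by
      rw [← Finset.mul_sum]
      exact congrArg _ (Finset.sum_card_bipartiteAbove_eq_sum_card_bipartiteBelow _)
    _ ≤ ∑ q ∈ A ×ˢ A, ((if q.1 = q.2 then C.card * Fintype.card V else 0) + Fintype.card V) := by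
      refine Finset.sum_le_sum fun q _ => ?_
      split_ifs with h
      · exact (Nat.mul_le_mul_left _ (Finset.card_le_univ _)).trans (Nat.le_add_right _ _)
      · simpa using hf.card_mul_card_le h
    _ = C.card * (A.card * Fintype.card V) + A.card ^ 2 * Fintype.card V := by
      rw [Finset.sum_add_distrib, Finset.sum_product]
      simp [sq, mul_left_comm]

theorem card_mul_card_le_sum_sum_add (hf : IsSpreadColoring C f) (A : Finset V) :
    A.card * Fintype.card V ≤ ∑ x, ∑ c ∈ C, (colorNeighbors f A c x).card + A.card := by
  classical
  have hfiber (x : V) : (A.filter (x ≠ ·)).card ≤ ∑ c ∈ C, (colorNeighbors f A c x).card := by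
    simp only [colorNeighbors, Finset.sum_card_fiberwise_eq_card_filter]
    exact Finset.card_le_card (Finset.monotone_filter_right A fun _ _ => hf.mem)
  calc A.card * Fintype.card V
    _ = ∑ y ∈ A, (Finset.univ.filter (· ≠ y)).card + A.card := by
      rw [Finset.card_eq_sum_ones A, ← Finset.sum_add_distrib, Finset.sum_mul]
      exact Finset.sum_congr rfl fun y _ => by
        rw [Finset.filter_ne', Finset.card_erase_add_one (Finset.mem_univ y), one_mul,
          Finset.card_univ]
    _ = ∑ x, (A.filter (x ≠ ·)).card + A.card :=
      congrArg (· + A.card) (Finset.sum_card_bipartiteAbove_eq_sum_card_bipartiteBelow _).symm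
    _ ≤ _ := Nat.add_le_add_right (Finset.sum_le_sum fun x _ => hfiber x) _

theorem sum_sum_sub_sq_le (hf : IsSpreadColoring C f) (hC : C.Nonempty) (A : Finset V) :
    ∑ x, ∑ c ∈ C, ((colorNeighbors f A c x).card - A.card / C.card : ℝ) ^ 2 ≤
      3 * A.card * Fintype.card V := by
  have hsq : C.card * ∑ x, ∑ c ∈ C, ((colorNeighbors f A c x).card : ℝ) ^ 2 ≤
      C.card * (A.card * Fintype.card V) + A.card ^ 2 * Fintype.card V := by
    exact_mod_cast hf.card_mul_sum_sum_sq_le A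
  have hsum : (A.card * Fintype.card V : ℝ) ≤
      ∑ x, ∑ c ∈ C, ((colorNeighbors f A c x).card : ℝ) + A.card := by
    exact_mod_cast hf.card_mul_card_le_sum_sum_add A
  have hd : (1 : ℝ) ≤ C.card := by exact_mod_cast hC.card_pos
  have hmean : (A.card / C.card : ℝ) ≤ Fintype.card V :=
    (div_le_self (Nat.cast_nonneg _) hd).trans (by exact_mod_cast A.card_le_univ)
  have hmul : (A.card / C.card * C.card : ℝ) = A.card := div_mul_cancel₀ _ (by positivity)
  have hmean₀ : (0 : ℝ) ≤ A.card / C.card := by positivity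
  have hexpand (a : ℝ) : ∑ x, ∑ c ∈ C, ((colorNeighbors f A c x).card - a) ^ 2 =
      ∑ x, ∑ c ∈ C, ((colorNeighbors f A c x).card : ℝ) ^ 2 -
        2 * a * ∑ x, ∑ c ∈ C, ((colorNeighbors f A c x).card : ℝ) +
        Fintype.card V * (C.card * a ^ 2) := by
    simp [sub_sq, Finset.sum_add_distrib, Finset.mul_sum, mul_right_comm]
  rw [hexpand]
  generalize (A.card / C.card : ℝ) = a at *
  have hsq' : ∑ x, ∑ c ∈ C, ((colorNeighbors f A c x).card : ℝ) ^ 2 ≤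
      A.card * Fintype.card V + a * A.card * Fintype.card V := by
    refine le_of_mul_le_mul_left (hsq.trans_eq ?_) (by positivity : (0 : ℝ) < C.card)
    rw [← hmul]
    ring
  have hsum' := mul_le_mul_of_nonneg_left hsum hmean₀
  have hmean' := mul_le_mul_of_nonneg_left hmean (Nat.cast_nonneg (α := ℝ) A.card)
  linear_combination hsq' + 2 * hsum' + 2 * hmean' + Fintype.card V * a * hmul

/- Chebyshev's inequality. -/
theorem card_sparseVertices_mul_card_le (hf : IsSpreadColoring C f) {c : κ} (hc : c ∈ C)
    (A : Finset V) :
    (sparseVertices C f A c).card * A.card ≤ 12 * C.card ^ 2 * Fintype.card V := by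
  obtain hA | hA := A.card.eq_zero_or_pos
  · simp [hA]
  have hd : (0 : ℝ) < C.card := by exact_mod_cast Finset.card_pos.2 ⟨c, hc⟩
  have hdev (x : V) (hx : x ∈ sparseVertices C f A c) : (A.card / (2 * C.card) : ℝ) ^ 2 ≤
      ∑ c ∈ C, ((colorNeighbors f A c x).card - A.card / C.card : ℝ) ^ 2 := by
    refine le_trans ?_ (Finset.single_le_sum (fun _ _ => sq_nonneg _) hc)
    have hx : ((colorNeighbors f A c x).card : ℝ) ≤ A.card / (2 * C.card) := by
      rw [le_div_iff₀ (by positivity)]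
      exact_mod_cast (Finset.mem_filter.1 hx).2.le
    have hhalf : (A.card / C.card : ℝ) = 2 * (A.card / (2 * C.card)) := by field_simp
    rw [← neg_sq (_ - _), hhalf]
    gcongr
    linarith
  have hvar : (sparseVertices C f A c).card * (A.card / (2 * C.card) : ℝ) ^ 2 ≤
      3 * A.card * Fintype.card V :=
    calc _ = ∑ _x ∈ sparseVertices C f A c, (A.card / (2 * C.card) : ℝ) ^ 2 := by simp
      _ ≤ ∑ x ∈ sparseVertices C f A c,
            ∑ c ∈ C, ((colorNeighbors f A c x).card - A.card / C.card : ℝ) ^ 2 :=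
        Finset.sum_le_sum hdev
      _ ≤ ∑ x, ∑ c ∈ C, ((colorNeighbors f A c x).card - A.card / C.card : ℝ) ^ 2 :=
        Finset.sum_le_univ_sum_of_nonneg fun _ => Finset.sum_nonneg fun _ _ => sq_nonneg _
      _ ≤ _ := hf.sum_sum_sub_sq_le ⟨c, hc⟩ A
  have hα : (0 : ℝ) < A.card := by exact_mod_cast hA
  rw [div_pow, ← mul_div_assoc, div_le_iff₀ (by positivity)] at hvar
  have : ((sparseVertices C f A c).card * A.card : ℝ) ≤ 12 * C.card ^ 2 * Fintype.card V :=
    le_of_mul_le_mul_right (by linear_combination hvar) hα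
  exact_mod_cast this

theorem exists_mem_notMem_sparseVertices (hf : IsSpreadColoring C f) {n : ℕ} {δ : ℝ} (hδ : 0 < δ)
    (hn : 12 * n * C.card ^ 2 < δ ^ 2 * Fintype.card V) {A₀ : Finset V}
    (hA₀ : δ * Fintype.card V ≤ A₀.card) {A : Fin n → Finset V}
    (hA : ∀ i, δ * Fintype.card V ≤ (A i).card) {c : Fin n → κ} (hc : ∀ i, c i ∈ C) :
    ∃ x ∈ A₀, ∀ i, x ∉ sparseVertices C f (A i) (c i) := by
  classical
  have hp : (0 : ℝ) < Fintype.card V :=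
    pos_of_mul_pos_right ((by positivity : (0 : ℝ) ≤ _).trans_lt hn) (sq_nonneg δ)
  have hsparse (i : Fin n) :
      (sparseVertices C f (A i) (c i)).card * δ ≤ 12 * (C.card : ℝ) ^ 2 := by
    have hcheb : ((sparseVertices C f (A i) (c i)).card * (A i).card : ℝ) ≤
        12 * C.card ^ 2 * Fintype.card V := by
      exact_mod_cast hf.card_sparseVertices_mul_card_le (hc i) (A i)
    refine le_of_mul_le_mul_right ?_ hp
    rw [mul_assoc]
    exact (mul_le_mul_of_nonneg_left (hA i) (Nat.cast_nonneg _)).trans hcheb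
  by_contra! hcover
  have hcard : (A₀.card : ℝ) ≤ ∑ i, ((sparseVertices C f (A i) (c i)).card : ℝ) := by
    refine mod_cast (Finset.card_le_card fun _ hx => ?_).trans Finset.card_biUnion_le
    simpa using hcover _ hx
  have hsum := Finset.sum_le_sum fun i (_ : i ∈ Finset.univ) => hsparse i
  rw [← Finset.sum_mul] at hsum
  simp only [Finset.sum_const, Finset.card_univ, Fintype.card_fin, nsmul_eq_mul] at hsum
  nlinarith

theorem exists_forall_lt_color_eq (hf : IsSpreadColoring C f) (hC : C.Nonempty) (n : ℕ) {δ : ℝ}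
    (hδ : 0 < δ) (hn : 12 * n * C.card ^ 2 * (2 * C.card) ^ (2 * n) < δ ^ 2 * Fintype.card V)
    (A : Fin n → Finset V) (hA : ∀ i, δ * Fintype.card V ≤ (A i).card) (c : Fin n → Fin n → κ)
    (hc : ∀ i j, i < j → c i j ∈ C) :
    ∃ b : Fin n → V, (∀ i, b i ∈ A i) ∧ ∀ i j, i < j → f (b i) (b j) = c i j := by
  induction n generalizing δ with
  | zero => exact ⟨Fin.elim0, fun i => i.elim0, fun i => i.elim0⟩
  | succ n ih =>
    have hd : (1 : ℝ) ≤ C.card := by exact_mod_cast hC.card_pos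
    have hstep : 12 * n * C.card ^ 2 * (2 * C.card) ^ (2 * (n + 1)) <
        δ ^ 2 * Fintype.card V := by
      refine lt_of_le_of_lt ?_ hn
      gcongr
      simp
    obtain ⟨x, hx, hxA⟩ := hf.exists_mem_notMem_sparseVertices hδ
      (lt_of_le_of_lt (le_mul_of_one_le_right (by positivity) (one_le_pow₀ (by linarith))) hstep)
      (hA 0) (fun i : Fin n => hA i.succ) fun i => hc 0 i.succ i.succ_pos
    obtain ⟨b, hb, hbc⟩ := ih (δ := δ / (2 * C.card)) (by positivity)
      (by
        rw [div_pow, div_mul_eq_mul_div, lt_div_iff₀ (by positivity)]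
        exact lt_of_eq_of_lt (by ring) hstep)
      (fun j => colorNeighbors f (A j.succ) (c 0 j.succ) x)
      (fun j => by
        rw [div_mul_eq_mul_div, div_le_iff₀ (by positivity)]
        refine (hA j.succ).trans ?_
        have := hxA j
        simp only [sparseVertices, Finset.mem_filter_univ, not_lt] at this
        exact_mod_cast this)
      (fun i j => c i.succ j.succ) fun i j hij => hc _ _ (Fin.succ_lt_succ_iff.2 hij)
    have hb' (j : Fin n) : b j ∈ A j.succ ∧ f x (b j) = c 0 j.succ := Finset.mem_filter.1 (hb j)
    refine ⟨Fin.cons x b, Fin.cases hx fun j => (hb' j).1, ?_⟩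
    refine Fin.cases (Fin.cases (fun h => h.false.elim) fun j _ => (hb' j).2) fun i => ?_
    exact Fin.cases (fun h => (Fin.not_lt_zero _ h).elim) fun j h =>
      hbc i j (Fin.succ_lt_succ_iff.1 h)

end IsSpreadColoring

end SpreadColoring

/-! ### Cyclotomic designs -/

section Cyclotomic

theorem HasCliqueDecomposition.of_differenceFamily {G H ι : Type*} [AddGroup G] [Fintype ι]
    (β : H → ι ↪ G)
    (hβ : ∀ z ≠ 0, ∃! q : H × ι × ι, q.2.1 ≠ q.2.2 ∧ β q.1 q.2.2 - β q.1 q.2.1 = z) :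
    HasCliqueDecomposition (⊤ : SimpleGraph G) (Fintype.card ι) := by
  refine .of_embeddings (P := H × G) (fun p => (β p.1).trans (Equiv.addRight p.2).toEmbedding)
    (fun p i j hij => by simpa using hij) fun x y hxy => ?_
  obtain ⟨⟨h, i, j⟩, ⟨-, hz⟩, hu⟩ := hβ (y - x) (sub_ne_zero.2 (Ne.symm hxy))
  refine ⟨(h, -β h i + x), ⟨⟨i, by simp⟩, j, ?_⟩, ?_⟩
  · simp [← sub_eq_add_neg, hz]
  · rintro ⟨h', t⟩ ⟨⟨i', rfl⟩, j', rfl⟩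
    have hij' : i' ≠ j' := fun h => hxy (by rw [h])
    obtain ⟨rfl, rfl, rfl⟩ : h' = h ∧ i' = i ∧ j' = j := by
      simpa using hu (h', i', j') ⟨hij', by simp⟩
    simp

theorem card_nthRootsFinset_le {R : Type*} [CommRing R] [IsDomain R] (n : ℕ) (a : R) :
    (Polynomial.nthRootsFinset n a).card ≤ n := by
  classical
  exact (Multiset.toFinset_card_le _).trans (Polynomial.card_nthRoots n a)

variable {F : Type*} [Field F] [Fintype F]

theorem pow_mem_nthRootsFinset {d s : ℕ} (hd : 0 < d) (hF : Fintype.card F = d * s + 1) {z : F}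
    (hz : z ≠ 0) : z ^ s ∈ Polynomial.nthRootsFinset d (1 : F) := by
  rw [Polynomial.mem_nthRootsFinset hd, ← pow_mul, mul_comm]
  simpa [hF] using FiniteField.pow_card_sub_one_eq_one z hz

theorem isSpreadColoring_pow [DecidableEq F] {d s : ℕ} (hd : 0 < d) (hs : 0 < s)
    (hF : Fintype.card F = d * s + 1) :
    IsSpreadColoring (Polynomial.nthRootsFinset d (1 : F)) fun x y => (y - x) ^ s where
  mem hxy := pow_mem_nthRootsFinset hd hF (sub_ne_zero.2 hxy.symm)
  card_mul_card_le {y y'} hy := by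
    have hne {x : F} (hx : (y - x) ^ s = (y' - x) ^ s) : y' - x ≠ 0 := fun h => by
      rw [h, zero_pow hs.ne', pow_eq_zero_iff hs.ne', sub_eq_zero] at hx
      exact hy (hx.trans (sub_eq_zero.1 h).symm)
    have hfiber : (Finset.univ.filter fun x => (y - x) ^ s = (y' - x) ^ s).card ≤ s := by
      refine (Finset.card_le_card_of_injOn (t := Polynomial.nthRootsFinset s (1 : F))
        (fun x => (y - x) / (y' - x)) (fun x hx => ?_) fun x hx x' hx' h => ?_).trans
          (card_nthRootsFinset_le s 1)
      · have hx := (Finset.mem_filter.1 hx).2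
        rw [SetLike.mem_coe, Polynomial.mem_nthRootsFinset hs, div_pow, hx,
          div_self (pow_ne_zero s (hne hx))]
      · rw [div_eq_div_iff (hne (Finset.mem_filter.1 hx).2) (hne (Finset.mem_filter.1 hx').2)] at h
        refine mul_left_cancel₀ (sub_ne_zero.2 hy) ?_
        linear_combination h
    rw [hF]
    exact (Nat.mul_le_mul (card_nthRootsFinset_le d 1) hfiber).trans (Nat.le_succ _)

theorem hasCliqueDecomposition_of_injOn_pow_sub {ι : Type*} [Fintype ι] {s : ℕ} (hs : 0 < s)
    (hF : Fintype.card F = Fintype.card ι * (Fintype.card ι - 1) * s + 1) (b : ι → F)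
    (hb : Set.InjOn (fun p : ι × ι => (b p.2 - b p.1) ^ s) {p | p.1 ≠ p.2}) :
    HasCliqueDecomposition (⊤ : SimpleGraph F) (Fintype.card ι) := by
  classical
  have hsub {i j : ι} (hij : i ≠ j) : b j - b i ≠ 0 := fun h => by
    have h' : b i - b j = 0 := by rw [← neg_sub, h, neg_zero]
    exact hij (congrArg Prod.fst
      (@hb (i, j) hij (j, i) hij.symm (by simp only [h, h'])))
  have hinj : b.Injective := fun i j h => by
    by_contra hij
    exact hsub hij (by simp [h])
  have hH (h : {h : F // h ^ s = 1}) : h.1 ≠ 0 := fun h₀ => by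
    simpa [h₀, hs.ne'] using h.2
  have hd : 0 < Fintype.card ι * (Fintype.card ι - 1) := by
    have := Fintype.one_lt_card (α := F)
    refine Nat.pos_of_ne_zero fun h => ?_
    rw [hF, h] at this
    omega
  have himage : Finset.univ.offDiag.image (fun p : ι × ι => (b p.2 - b p.1) ^ s) =
      Polynomial.nthRootsFinset (Fintype.card ι * (Fintype.card ι - 1)) 1 := by
    refine Finset.eq_of_subset_of_card_le (Finset.image_subset_iff.2 fun p hp => ?_) ?_
    · exact pow_mem_nthRootsFinset hd hF (hsub (Finset.mem_offDiag.1 hp).2.2)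
    · rw [Finset.card_image_of_injOn (hb.mono fun p hp => by simpa using hp),
        Finset.offDiag_card, Finset.card_univ, ← Nat.mul_sub_one]
      exact card_nthRootsFinset_le _ 1
  refine .of_differenceFamily (H := {h : F // h ^ s = 1})
    (fun h => ⟨fun i => h * b i, (mul_right_injective₀ (hH h)).comp hinj⟩) fun z hz => ?_
  obtain ⟨⟨i, j⟩, hij, hzij⟩ := Finset.mem_image.1 (himage ▸ pow_mem_nthRootsFinset hd hF hz)
  have hij : i ≠ j := (Finset.mem_offDiag.1 hij).2.2
  simp only [Function.Embedding.coeFn_mk, ← mul_sub]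
  refine ⟨(⟨z / (b j - b i), ?_⟩, i, j), ⟨hij, div_mul_cancel₀ z (hsub hij)⟩, ?_⟩
  · rw [div_pow, ← hzij, div_self (pow_ne_zero s (hsub hij))]
  · rintro ⟨⟨h, hh⟩, i', j'⟩ ⟨hij', rfl⟩
    obtain ⟨rfl, rfl⟩ : i' = i ∧ j' = j := by
      simpa using @hb (i', j') hij' (i, j) hij (by simp [hzij, mul_pow, hh])
    simp [hsub hij]

theorem exists_isPrimitiveRoot_of_card_eq {d s : ℕ} (hF : Fintype.card F = d * s + 1) :
    ∃ ζ : F, IsPrimitiveRoot ζ d := by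
  obtain ⟨g, hg⟩ := IsCyclic.exists_ofOrder_eq_natCard (α := Fˣ)
  rw [Nat.card_units, Nat.card_eq_fintype_card, hF, Nat.add_sub_cancel] at hg
  exact ⟨_, IsPrimitiveRoot.coe_units_iff.2
    ((hg ▸ IsPrimitiveRoot.orderOf g).pow (hg ▸ orderOf_pos g) (mul_comm d s))⟩

theorem exists_injOn_not_isDiag (ι : Type*) [Fintype ι] :
    ∃ ψ : Sym2 ι → ℕ, Set.MapsTo ψ {e | ¬ e.IsDiag} (Set.Iio ((Fintype.card ι).choose 2)) ∧
      Set.InjOn ψ {e | ¬ e.IsDiag} := by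
  classical
  refine (Set.toFinite {e : Sym2 ι | ¬ e.IsDiag}).exists_injOn_of_encard_le
    (t := Set.Iio ((Fintype.card ι).choose 2)) (le_of_eq ?_)
  simp [Set.encard_eq_coe_toFinset_card, ← Sym2.card_subtype_not_diag, Fintype.card_subtype]

theorem injOn_of_map_swap_eq_neg {ι R : Type*} [Ring R] [IsDomain R] (hR : ringChar R ≠ 2)
    {D : ι × ι → R} (hne : ∀ p, p.1 ≠ p.2 → D p ≠ 0) (hswap : ∀ p, D p.swap = -D p)
    (hsq : ∀ p q, p.1 ≠ p.2 → q.1 ≠ q.2 → D p ^ 2 = D q ^ 2 → s(p.1, p.2) = s(q.1, q.2)) :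
    Set.InjOn D {p | p.1 ≠ p.2} := by
  intro p hp q hq hpq
  rcases Sym2.mk_eq_mk_iff.1 (hsq p q hp hq (by rw [hpq])) with h | rfl
  · exact h
  · rw [hswap] at hpq
    exact absurd ((Ring.eq_self_iff_eq_zero_of_char_ne_two hR).1 hpq) (hne q hq)

/- Prescribing `D (i, j) = (b j - b i) ^ s` for `i < j` also determines `D (j, i) = -D (i, j)`, so
the prescribed values must be distinct up to sign: the first half of the powers of a primitive
root will do. -/
theorem exists_injOn_pow_sub {k s : ℕ} (hk : 2 ≤ k) (hs : Odd s)
    (hF : Fintype.card F = k * (k - 1) * s + 1)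
    (hlarge : 12 * k * (k * (k - 1)) ^ 2 * (2 * (k * (k - 1))) ^ (2 * k) < Fintype.card F) :
    ∃ b : Fin k → F, Set.InjOn (fun p : Fin k × Fin k => (b p.2 - b p.1) ^ s)
      {p | p.1 ≠ p.2} := by
  classical
  obtain ⟨ζ, hζ⟩ := exists_isPrimitiveRoot_of_card_eq hF
  obtain ⟨ψ, hψ_lt, hψ⟩ := exists_injOn_not_isDiag (Fin k)
  have hd : 0 < k * (k - 1) := Nat.mul_pos (by omega) (by omega)
  have hchar : ringChar F ≠ 2 := fun h => by
    have := FiniteField.even_card_of_char_two h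
    have := (Nat.even_mul_pred_self k).mul_right s
    grind
  have hcard := hζ.card_nthRootsFinset
  obtain ⟨b, -, hb⟩ := (isSpreadColoring_pow hd hs.pos hF).exists_forall_lt_color_eq
    (Finset.card_pos.1 (hd.trans_eq hcard.symm)) k one_pos
    (by rw [hcard]; exact_mod_cast by simpa using hlarge)
    (fun _ => Finset.univ) (by simp) (fun i j => ζ ^ ψ s(i, j)) fun i j _ => by
      rw [Polynomial.mem_nthRootsFinset hd, ← pow_mul, mul_comm, pow_mul, hζ.pow_eq_one, one_pow]
  have hswap (i j : Fin k) : (b i - b j) ^ s = -(b j - b i) ^ s := by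
    rw [← neg_sub, hs.neg_pow]
  have hsq {i j : Fin k} (hij : i ≠ j) : ((b j - b i) ^ s) ^ 2 = ζ ^ (2 * ψ s(i, j)) := by
    rw [mul_comm, pow_mul]
    rcases hij.lt_or_gt with h | h
    · rw [hb i j h]
    · rw [hswap, neg_sq, hb j i h, Sym2.eq_swap]
  have hlt {i j : Fin k} (hij : i ≠ j) : 2 * ψ s(i, j) < k * (k - 1) := by
    have := hψ_lt (x := s(i, j)) hij
    rw [Set.mem_Iio, Fintype.card_fin, Nat.choose_two_right] at this
    omega
  refine ⟨b, injOn_of_map_swap_eq_neg hchar (fun p hp h => ?_) (fun p => hswap _ _)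
    fun p q hp hq hpq => hψ hp hq ?_⟩
  · have := hsq hp
    rw [h] at this
    exact pow_ne_zero _ (hζ.ne_zero hd.ne') (this.symm.trans (zero_pow two_ne_zero))
  · rw [hsq hp, hsq hq] at hpq
    exact Nat.eq_of_mul_eq_mul_left two_pos (hζ.pow_inj (hlt hp) (hlt hq) hpq)

theorem hasCliqueDecomposition_of_card_large {k s : ℕ} (hk : 2 ≤ k) (hs : Odd s)
    (hF : Fintype.card F = k * (k - 1) * s + 1)
    (hlarge : 12 * k * (k * (k - 1)) ^ 2 * (2 * (k * (k - 1))) ^ (2 * k) < Fintype.card F) :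
    HasCliqueDecomposition (⊤ : SimpleGraph F) k := by
  obtain ⟨b, hb⟩ := exists_injOn_pow_sub hk hs hF hlarge
  simpa using hasCliqueDecomposition_of_injOn_pow_sub hs.pos (by simpa using hF) b hb

end Cyclotomic

theorem exists_prime_gt_eq_mul_odd_add_one {d : ℕ} (hd : Even d) (hd₀ : d ≠ 0) (n : ℕ) :
    ∃ p s : ℕ, p.Prime ∧ Odd s ∧ n < p ∧ p = d * s + 1 := by
  have hcoprime : (d + 1).Coprime (2 * d) :=
    .mul_right (Nat.coprime_two_right.2 hd.add_one) (by simp)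
  obtain ⟨p, hnp, hp, hmod⟩ :=
    Nat.forall_exists_prime_gt_and_modEq (n + (d + 1)) (by omega : 2 * d ≠ 0) hcoprime
  obtain ⟨q, hq⟩ := (Nat.modEq_iff_dvd' (by omega : d + 1 ≤ p)).1 hmod.symm
  exact ⟨p, 2 * q + 1, hp, odd_two_mul_add_one q, by omega, by grind⟩

theorem frequently_hasGroupDivisibleDesign {k : ℕ} (hk : 2 ≤ k) :
    ∃ᶠ r in atTop, HasGroupDivisibleDesign k (Fin r) (Fin (k - 1)) := by
  refine frequently_atTop.2 fun N => ?_
  obtain ⟨p, s, hp, hs, hlarge, hps⟩ := exists_prime_gt_eq_mul_odd_add_one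
    (Nat.even_mul_pred_self k) (Nat.mul_pos (by omega) (by omega)).ne'
    (12 * k * (k * (k - 1)) ^ 2 * (2 * (k * (k - 1))) ^ (2 * k) + k * (k - 1) * N)
  have : Fact p.Prime := ⟨hp⟩
  refine ⟨k * s, ?_, (hasCliqueDecomposition_of_card_large (F := ZMod p) hk hs
    (by rw [ZMod.card, hps]) (by rw [ZMod.card]; omega)).hasGroupDivisibleDesign hk ?_⟩
  · have : N ≤ s := Nat.le_of_mul_le_mul_left (by omega : k * (k - 1) * N ≤ k * (k - 1) * s)
      (Nat.mul_pos (by omega) (by omega))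
    exact this.trans (Nat.le_mul_of_pos_left s (by omega))
  · rw [Nat.card_zmod, hps, mul_right_comm]

/-! ### Wilson's theorem -/

theorem eventually_hasGroupDivisibleDesign_mul_add {k : ℕ} (hk : 2 ≤ k) :
    ∀ᶠ r in atTop, HasGroupDivisibleDesign k (Fin r) (Fin (k - 1)) → ∀ d ≤ 1,
      HasGroupDivisibleDesign k (Fin (k * r + d)) (Fin (k - 1)) := by
  have htop : Tendsto (fun r => r * (k - 1)) atTop atTop :=
    tendsto_id.atTop_mul_const' (by omega)
  filter_upwards [htop.eventually (HasTransversalDesign.eventually k),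
    ((tendsto_add_atTop_nat 1).comp htop).eventually (HasTransversalDesign.eventually k)]
    with r hT₀ hT₁ h d hd
  have hcard : k - 1 + 1 = k := by omega
  rcases Nat.le_one_iff_eq_zero_or_eq_one.1 hd with rfl | rfl
  · have hT : HasGroupDivisibleDesign k (Fin k) (Fin r × Fin (k - 1)) := by
      simpa using (hT₀.map (.refl _) finProdFinEquiv.symm).hasGroupDivisibleDesign
    exact (hT.prod h).congr finProdFinEquiv (.refl _)
  · have hS : HasCliqueDecomposition (⊤ : SimpleGraph (Option (Fin r × Fin (k - 1)))) k :=
      h.hasCliqueDecomposition_option (.top_of_card (by simp [hcard]))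
    have hT : HasGroupDivisibleDesign k (Fin k) (Option (Fin r × Fin (k - 1))) := by
      simpa using (hT₁.map (.refl _) (Fintype.equivOfCardEq (by simp))).hasGroupDivisibleDesign
    refine (hT.fill_groups (G := ⊤) (fun p q hpq h => hpq (congrArg Prod.fst h)) fun w =>
      ?_).hasGroupDivisibleDesign hk ?_
    · convert hS
      ext; simp
    · simp only [Nat.card_eq_fintype_card, Fintype.card_prod, Fintype.card_fin, Fintype.card_option]
      conv_rhs => rw [add_mul, mul_assoc, one_mul, add_assoc, hcard]
      ring

theorem isWilsonClosed_setOf_hasGroupDivisibleDesign {k : ℕ} (hk : 2 ≤ k) :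
    IsWilsonClosed k {r | HasGroupDivisibleDesign k (Fin r) (Fin (k - 1))} where
  zero_mem := .of_subsingleton
  one_mem := .of_subsingleton
  eventually_mul_add_mem := eventually_hasGroupDivisibleDesign_mul_add hk
  eventually_mul_add_mem_of_succ_mem b hb hb' := by
    filter_upwards [HasTransversalDesign.eventually (b + 1)] with m hT hm x hx hxm
    exact .mul_add hxm hT hb hb' hm hx
  frequently_mem := frequently_hasGroupDivisibleDesign hk

theorem exists_eq_mul_pred_add_one {k n : ℕ} (hk : 2 ≤ k) (hn : k < n)
    (h : n ≡ 1 [MOD k * (k - 1)] ∨ n ≡ k [MOD k * (k - 1)]) :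
    ∃ r, r % k ≤ 1 ∧ n = r * (k - 1) + 1 := by
  rcases h with h | h
  · obtain ⟨q, hq⟩ := (Nat.modEq_iff_dvd' (by omega)).1 h.symm
    refine ⟨k * q, by simp, ?_⟩
    rw [mul_right_comm]
    omega
  · obtain ⟨q, hq⟩ := (Nat.modEq_iff_dvd' hn.le).1 h.symm
    refine ⟨k * q + 1, by simp [Nat.mod_eq_of_lt hk], ?_⟩
    rw [add_mul, mul_right_comm]
    omega

theorem eventually_hasCliqueDecomposition {k : ℕ} (hk : 2 ≤ k) :
    ∀ᶠ n in atTop, (n ≡ 1 [MOD k * (k - 1)] ∨ n ≡ k [MOD k * (k - 1)]) →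
      HasCliqueDecomposition (⊤ : SimpleGraph (Fin n)) k := by
  obtain ⟨N, hN⟩ := eventually_atTop.1
    ((isWilsonClosed_setOf_hasGroupDivisibleDesign hk).eventually_mem hk)
  filter_upwards [eventually_gt_atTop k, eventually_gt_atTop (N * (k - 1))] with n hkn hNn h
  obtain ⟨r, hr, rfl⟩ := exists_eq_mul_pred_add_one hk hkn h
  have hNr : N ≤ r := Nat.le_of_mul_le_mul_right (Nat.le_of_lt_succ hNn) (by omega)
  refine (HasGroupDivisibleDesign.hasCliqueDecomposition_option (hN r hNr hr)
    (.top_of_card (by simp; omega))).congr (.completeGraph (Fintype.equivOfCardEq (by simp)))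

/-- Wilson's theorem for complete graphs: for every integer `t > 2` there exists `N` such that
for all `n > N` with `n ≡ 1 (mod t(t-1))` or `n ≡ t (mod t(t-1))`, the complete graph `K_n`
has a `K_t`-decomposition: a set of subgraphs, each isomorphic to `K_t`, such that each edge
appears in precisely one of them. -/
theorem wilson (t : ℕ) (ht : 2 < t) :
    ∃ N : ℕ, ∀ n : ℕ, N < n →
      (n % (t * (t - 1)) = 1 % (t * (t - 1)) ∨ n % (t * (t - 1)) = t % (t * (t - 1))) →
      ∃ L : Set (⊤ : SimpleGraph (Fin n)).Subgraph,
        (∀ c ∈ L, c.IsCopy (⊤ : SimpleGraph (Fin t))) ∧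
        ∀ e ∈ (⊤ : SimpleGraph (Fin n)).edgeSet, ∃! c, c ∈ L ∧ e ∈ c.edgeSet := by
  obtain ⟨N, hN⟩ := eventually_atTop.1 (eventually_hasCliqueDecomposition ht.le)
  exact ⟨N, fun n hn h => (hN n hn.le h).exists_subgraphs⟩
end
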